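/- Let F₀ be a field of characteristic 0 that is finitely generated over ℚ (i.e., there is a finite subset S₀ of F₀ with F₀ = ℚ(S₀)). Then there is a finite subset 𝒮 of ℕ × ℕ, depending only on F₀, with the following property: for every integer n of the form n = 3^{k₁} + 3^{k₂} + 3^{k₃} with integers k₁ > k₂ > k₃ ≥ 0 and (k₁ − k₃, k₂ − k₃) ∉ 𝒮, there exist fields F ⊆ E with F₀ ⊆ F and [E : F] = n such that no nonzero element δ ∈ E satisfies Tr_{E/F}(δ) = 0 and Tr_{E/F}(δ³) = 0. -/

import Mathlib

/-!
Let `k = F₀`, `a = k₁ - k₃` and `b = k₂ - k₃`.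

**Construction.** Reduction modulo `3` maps an ordered lattice `ℤ ^ (k₁ + k₂ + k₃)` onto
`∏ (ℤ/3) ^ kᵢ`. Let `Δ` be its kernel and `Γᵢ` the preimage of the `i`-th factor. The field `Eᵢ` of
Hahn series over `k` with exponents in `Γᵢ` has degree `3 ^ kᵢ` over the field `L` of those with
exponents in `Δ`, and its trace multiplies the coefficients with exponent in `Δ` by `3 ^ kᵢ` and
kills the others. If `x ∈ ∏ Eᵢ` is nonzero and both `x` and `x³` have trace zero, then the
coefficients `cᵢ` of lowest order satisfy `∑ 3 ^ kᵢ cᵢ = ∑ 3 ^ kᵢ cᵢ³ = 0`, which amounts to some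
`t ∈ k` with `3 ^ a + 3 ^ b t³ = (3 ^ a + 3 ^ b t)³`. When there is no such `t`, write
`∏ Eᵢ = L[X] / (h)` and deform `h` to a polynomial over `L(T)` that is `h` at `T = 0` and Eisenstein
at `T = 1`. It defines a field extension of `L(T)`, and a bad element of that field would specialize
to one of `∏ Eᵢ`.

**Finiteness.** The algebraic closure of `ℚ` in `k` is a number field and contains every `t`.
If `t` is rational, then clearing denominators gives a primitive solution of
`y³ = X³ + 9 ^ b W³`, and descent in `ℤ[ω]` shows that `y` is huge compared with `3 ^ b`. If `t` is
irrational, then the discriminant of the cubic is a square in a fixed normal number field, and so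
the pairwise coprime numbers `N`, `N + 2`, `N + 2 * 3 ^ b` and `N + 2 * 3 ^ b + 2`, where
`N = 3 ^ a - 3 ^ b - 1`, lie in finitely many square classes. The first two yield a solution of a
Pell equation that is divisible by `3 ^ b`, so `N` is huge compared with `3 ^ b`. In both cases a
second, much larger solution of the same type provides integers proportional, up to a tiny error, to
the numbers `(N + bⱼ) ^ (1 / p)` for the first solution. Simultaneous Padé approximation of
`(1 + z) ^ (1 / p)` limits how good such an approximation can be, which bounds the second solution.
-/

universe u

namespace RelativeHermite

/-! ### Binomial coefficients with real upper index -/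

section Choose

theorem succ_mul_choose_succ (α : ℝ) (n : ℕ) :
    (n + 1 : ℝ) * Ring.choose α (n + 1) = (α - n) * Ring.choose α n := by
  have h := Ring.choose_smul_choose α (n.le_add_right 1)
  simpa [Nat.choose_succ_self_right, mul_comm] using h

theorem succ_mul_choose_succ' (α : ℝ) (n : ℕ) :
    (n + 1 : ℝ) * Ring.choose α (n + 1) = α * Ring.choose (α - 1) n := by
  have h := Ring.choose_smul_choose α (Nat.le_add_left 1 n)
  simpa [mul_comm] using h

theorem factorial_mul_choose (α : ℝ) (n : ℕ) :
    (n.factorial : ℝ) * Ring.choose α n = ∏ i ∈ Finset.range n, (α - i) := by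
  induction n with
  | zero => simp
  | succ n ih =>
    rw [Finset.prod_range_succ, ← ih, Nat.factorial_succ]
    push_cast
    linear_combination (n.factorial : ℝ) * succ_mul_choose_succ α n

theorem abs_choose_le (α : ℝ) (A n : ℕ) (hA : |α| ≤ A) : |Ring.choose α n| ≤ 2 ^ (A + n) := by
  have hfac : (0 : ℝ) < n.factorial := by positivity
  refine le_of_mul_le_mul_left ?_ hfac
  calc n.factorial * |Ring.choose α n| = ∏ i ∈ Finset.range n, |α - i| := by
        rw [← Finset.abs_prod, ← factorial_mul_choose, abs_mul, Nat.abs_cast]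
    _ ≤ ∏ i ∈ Finset.range n, ((A : ℝ) + i) := by
        refine Finset.prod_le_prod (fun _ _ => abs_nonneg _) fun i _ => ?_
        exact (abs_sub _ _).trans (by simpa using hA)
    _ = n.factorial * ((A + n - 1).choose n : ℝ) := by
        rw [← Nat.cast_mul, ← Nat.ascFactorial_eq_factorial_mul_choose',
          Nat.ascFactorial_eq_prod_range]
        push_cast
        rfl
    _ ≤ n.factorial * 2 ^ (A + n) := by
        gcongr
        exact_mod_cast (Nat.choose_le_two_pow _ _).trans
          (Nat.pow_le_pow_right two_pos (Nat.sub_le _ _))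

end Choose

section BinomialSeries

open Polynomial

variable {N : ℝ}

/-- The binomial series of `(N + X) ^ α`, cut off before `X ^ R`. -/
noncomputable def binomialPolynomial (N α : ℝ) (R : ℕ) : ℝ[X] :=
  ∑ n ∈ Finset.range R, monomial n (Ring.choose α n * N ^ (α - n))

theorem degree_binomialPolynomial_lt (N α : ℝ) (R : ℕ) : (binomialPolynomial N α R).degree < R := by
  refine (degree_sum_le _ _).trans_lt ((Finset.sup_lt_iff (WithBot.bot_lt_coe R)).2 fun n hn => ?_)
  exact (degree_monomial_le _ _).trans_lt (Nat.cast_lt.2 (Finset.mem_range.1 hn))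

theorem hasseDeriv_binomialPolynomial (N α : ℝ) (h R : ℕ) :
    hasseDeriv h (binomialPolynomial N α (h + R)) =
      Ring.choose α h • binomialPolynomial N (α - h) R := by
  rw [binomialPolynomial, map_sum, Finset.sum_range_add, Finset.sum_eq_zero, zero_add,
    binomialPolynomial, Finset.smul_sum]
  · refine Finset.sum_congr rfl fun n _ => ?_
    have hchoose := Ring.choose_smul_choose α (Nat.le_add_right h n)
    have hexp : α - (h + n : ℕ) = α - h - n := by push_cast; ring
    rw [Nat.add_sub_cancel_left, nsmul_eq_mul] at hchoose
    rw [hasseDeriv_monomial, Nat.add_sub_cancel_left, hexp, smul_monomial, smul_eq_mul,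
      ← mul_assoc, hchoose, mul_assoc]
  · intro n hn
    rw [hasseDeriv_monomial, Nat.choose_eq_zero_of_lt (Finset.mem_range.1 hn)]
    simp

/-- The error of the binomial series of `(N + x) ^ α`, cut off before `x ^ R`. -/
noncomputable def binomialRemainder (N α : ℝ) (R : ℕ) (x : ℝ) : ℝ :=
  (N + x) ^ α - (binomialPolynomial N α R).eval x

theorem binomialRemainder_zero (N α : ℝ) (R : ℕ) : binomialRemainder N α (R + 1) 0 = 0 := by
  simp [binomialRemainder, binomialPolynomial, eval_finsetSum, Finset.sum_range_succ']

theorem hasDerivAt_binomialRemainder (hN : 0 < N) (α : ℝ) (R : ℕ) {x : ℝ} (hx : 0 ≤ x) :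
    HasDerivAt (binomialRemainder N α (R + 1)) (α * binomialRemainder N (α - 1) R x) x := by
  have hpow : HasDerivAt (fun y => (N + y) ^ α) (1 * α * (N + x) ^ (α - 1)) x :=
    ((hasDerivAt_id x).const_add N).rpow_const (Or.inl (by simp; linarith))
  refine (hpow.sub ((binomialPolynomial N α (R + 1)).hasDerivAt x)).congr_deriv ?_
  have hderiv := hasseDeriv_binomialPolynomial N α 1 R
  rw [hasseDeriv_one, Ring.choose_one_right, Nat.cast_one, add_comm 1 R] at hderiv
  rw [hderiv, eval_smul, binomialRemainder, smul_eq_mul]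
  ring

theorem abs_binomialRemainder_le (hN : 0 < N) (R : ℕ) {α : ℝ} (hα : α ≤ R) {x : ℝ}
    (hx : 0 ≤ x) :
    |binomialRemainder N α R x| ≤ |Ring.choose α R| * N ^ (α - R) * x ^ R := by
  induction R generalizing α x with
  | zero =>
    simp only [binomialRemainder, binomialPolynomial, eval_zero, Finset.range_zero,
      Finset.sum_empty, sub_zero, Ring.choose_zero_right, abs_one, one_mul, Nat.cast_zero, pow_zero,
      mul_one]
    rw [abs_of_nonneg (by positivity)]
    exact Real.rpow_le_rpow_of_nonpos hN (by linarith) (by simpa using hα)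
  | succ R ih =>
    have hα' : α - 1 ≤ R := by push_cast at hα; linarith
    have hexp : α - (R + 1 : ℕ) = α - 1 - R := by push_cast; ring
    have hchoose : ((R : ℝ) + 1) * |Ring.choose α (R + 1)| = |α| * |Ring.choose (α - 1) R| := by
      rw [← abs_mul, ← succ_mul_choose_succ', abs_mul,
        abs_of_nonneg (by positivity : (0 : ℝ) ≤ R + 1)]
    refine image_norm_le_of_norm_deriv_right_le_deriv_boundary
      (B := fun y => |Ring.choose α (R + 1)| * N ^ (α - (R + 1 : ℕ)) * y ^ (R + 1))
      (B' := fun y => |Ring.choose α (R + 1)| * N ^ (α - (R + 1 : ℕ)) * ((R + 1 : ℕ) * y ^ R))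
      (fun y hy => (hasDerivAt_binomialRemainder hN α R hy.1).continuousAt.continuousWithinAt)
      (fun y hy => (hasDerivAt_binomialRemainder hN α R hy.1).hasDerivWithinAt)
      (by simp [binomialRemainder_zero])
      (fun y => by simpa using (hasDerivAt_pow (R + 1) y).const_mul _)
      (fun y hy => ?_) ⟨hx, le_rfl⟩
    rw [Real.norm_eq_abs, abs_mul, hexp]
    push_cast
    calc |α| * |binomialRemainder N (α - 1) R y|
        ≤ |α| * (|Ring.choose (α - 1) R| * N ^ (α - 1 - R) * y ^ R) := by gcongr; exact ih hα' hy.1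
      _ = _ := by linear_combination (-N ^ (α - 1 - R) * y ^ R) * hchoose

end BinomialSeries

section Integrality

variable {p : ℕ}

theorem exists_factorial_eq_pow_mul (hp : p.Prime) (h : ℕ) :
    ∃ v w : ℕ, v ≤ h ∧ p.Coprime w ∧ h.factorial = p ^ v * w := by
  have := Fact.mk hp
  obtain ⟨v, w, hw, hvw⟩ := Nat.exists_eq_pow_mul_and_not_dvd h.factorial_ne_zero p hp.ne_one
  refine ⟨v, w, ?_, (Nat.Prime.coprime_iff_not_dvd hp).2 hw, hvw⟩
  have hval : padicValNat p h.factorial = v := by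
    rw [hvw, padicValNat.mul (by simp [hp.ne_zero]) (by rintro rfl; simp at hw),
      padicValNat.prime_pow, padicValNat.eq_zero_of_not_dvd hw, add_zero]
  have hlegendre := sub_one_mul_padicValNat_factorial (p := p) h
  rw [hval] at hlegendre
  have : 1 ≤ p - 1 := by have := hp.two_le; omega
  nlinarith [Nat.sub_le h (p.digits h).sum]

-- Modulo `w` the factor `p` is invertible, so the product is a unit times a falling factorial.
theorem dvd_prod_arithmetic_progression {w h k : ℕ} (hk : h ≤ k) (hpw : p.Coprime w)
    (hw : w ∣ h.factorial) : (w : ℤ) ∣ ∏ i ∈ Finset.range h, ((p : ℤ) * k + 1 - p * i) := by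
  have : NeZero w := ⟨by rintro rfl; exact h.factorial_ne_zero (zero_dvd_iff.1 hw)⟩
  obtain ⟨u, hu⟩ : ∃ u : ℕ, (p : ZMod w) * u = 1 :=
    ⟨((p : ZMod w)⁻¹).val, by
      rw [ZMod.natCast_val, ZMod.cast_id, ZMod.coe_mul_inv_eq_one p hpw]⟩
  have hfactor : ∀ i ∈ Finset.range h,
      (p : ZMod w) * k + 1 - p * i = p * ((k + u - i : ℕ) : ZMod w) := by
    intro i hi
    have : i ≤ k + u := by have := Finset.mem_range.1 hi; omega
    rw [Nat.cast_sub this, ← hu]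
    push_cast
    ring
  have hzero : (((k + u).descFactorial h : ℕ) : ZMod w) = 0 :=
    (ZMod.natCast_eq_zero_iff _ _).2 (hw.trans (Nat.factorial_dvd_descFactorial _ _))
  rw [← ZMod.intCast_zmod_eq_zero_iff_dvd]
  push_cast
  rw [Finset.prod_congr rfl hfactor, Finset.prod_mul_distrib,
    ← Nat.cast_prod (fun i => k + u - i), ← Nat.descFactorial_eq_prod_range, hzero, mul_zero]

theorem exists_intCast_eq_pow_mul_choose (hp : p.Prime) {k h : ℕ} (hk : h ≤ k) :
    ∃ z : ℤ, (z : ℝ) = (p : ℝ) ^ (2 * k) * Ring.choose ((k : ℝ) + 1 / p) h := by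
  obtain ⟨v, w, hv, hpw, hvw⟩ := exists_factorial_eq_pow_mul hp h
  obtain ⟨z, hz⟩ := dvd_prod_arithmetic_progression hk hpw (Dvd.intro_left _ hvw.symm)
  have hp0 : (p : ℝ) ≠ 0 := by exact_mod_cast hp.ne_zero
  have hw0 : (w : ℝ) ≠ 0 := by
    rintro hw
    exact h.factorial_ne_zero (by rw [hvw, Nat.cast_eq_zero.1 hw, mul_zero])
  have hprod : (p : ℝ) ^ h * ∏ i ∈ Finset.range h, ((k : ℝ) + 1 / p - i) = w * z := by
    have hz' : ∏ i ∈ Finset.range h, ((p : ℝ) * k + 1 - p * i) = w * z := by exact_mod_cast hz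
    nth_rw 1 [← hz', ← Finset.card_range h]
    rw [Finset.pow_card_mul_prod]
    exact Finset.prod_congr rfl fun i _ => by field_simp
  refine ⟨p ^ (2 * k - h - v) * z, ?_⟩
  have hpow : (p : ℝ) ^ (2 * k) = p ^ (2 * k - h - v) * p ^ h * p ^ v := by
    rw [← pow_add, ← pow_add]
    congr 1
    omega
  rw [← factorial_mul_choose, hvw] at hprod
  push_cast at hprod ⊢
  rw [hpow]
  refine mul_left_cancel₀ hw0 ?_
  linear_combination (-(p : ℝ) ^ (2 * k - h - v)) * hprod

end Integrality

/-! ### Weighted coefficient norms of real polynomials -/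

section CoeffNorm

open Polynomial

/-- The weighted `ℓ¹` norm `∑ |pᵢ| ρ ^ i` of the coefficients of `p`. -/
noncomputable def coeffNorm (ρ : ℝ) (p : ℝ[X]) : ℝ :=
  p.sum fun i c => |c| * ρ ^ i

variable {ρ : ℝ} {p q : ℝ[X]}

theorem coeffNorm_eq_sum_range {n : ℕ} (hn : p.natDegree < n) :
    coeffNorm ρ p = ∑ i ∈ Finset.range n, |p.coeff i| * ρ ^ i :=
  sum_over_range' p (fun i => by simp) n hn

theorem coeffNorm_nonneg (hρ : 0 ≤ ρ) : 0 ≤ coeffNorm ρ p :=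
  Finset.sum_nonneg fun _ _ => by positivity

@[simp]
theorem coeffNorm_C (c : ℝ) : coeffNorm ρ (C c) = |c| := by simp [coeffNorm]

@[simp]
theorem coeffNorm_zero : coeffNorm ρ 0 = 0 := by simp [coeffNorm]

@[simp]
theorem coeffNorm_one : coeffNorm ρ 1 = 1 := by simpa using coeffNorm_C (ρ := ρ) 1

@[simp]
theorem coeffNorm_X : coeffNorm ρ X = ρ := by simp [coeffNorm]

@[simp]
theorem coeffNorm_natCast (n : ℕ) : coeffNorm ρ (n : ℝ[X]) = n := by
  simpa using coeffNorm_C (ρ := ρ) n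

theorem coeffNorm_neg (p : ℝ[X]) : coeffNorm ρ (-p) = coeffNorm ρ p := by
  rw [coeffNorm_eq_sum_range (p := -p) (n := p.natDegree + 1) (by simp),
    coeffNorm_eq_sum_range (Nat.lt_succ_self _)]
  simp

theorem coeffNorm_add_le (hρ : 0 ≤ ρ) (p q : ℝ[X]) :
    coeffNorm ρ (p + q) ≤ coeffNorm ρ p + coeffNorm ρ q := by
  have hdeg := natDegree_add_le p q
  rw [coeffNorm_eq_sum_range (hdeg.trans_lt (Nat.lt_succ_self _)),
    coeffNorm_eq_sum_range ((le_max_left p.natDegree q.natDegree).trans_lt (Nat.lt_succ_self _)),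
    coeffNorm_eq_sum_range ((le_max_right p.natDegree q.natDegree).trans_lt (Nat.lt_succ_self _)),
    ← Finset.sum_add_distrib]
  refine Finset.sum_le_sum fun i _ => ?_
  rw [coeff_add, ← add_mul]
  gcongr
  exact abs_add_le _ _

theorem coeffNorm_sub_le (hρ : 0 ≤ ρ) (p q : ℝ[X]) :
    coeffNorm ρ (p - q) ≤ coeffNorm ρ p + coeffNorm ρ q := by
  simpa [sub_eq_add_neg, coeffNorm_neg] using coeffNorm_add_le hρ p (-q)

theorem coeffNorm_sum_le {ι : Type*} (hρ : 0 ≤ ρ) (s : Finset ι) (f : ι → ℝ[X]) :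
    coeffNorm ρ (∑ i ∈ s, f i) ≤ ∑ i ∈ s, coeffNorm ρ (f i) :=
  Finset.le_sum_of_subadditive _ coeffNorm_zero.le (coeffNorm_add_le hρ) s f

theorem coeffNorm_X_mul (p : ℝ[X]) : coeffNorm ρ (X * p) = ρ * coeffNorm ρ p := by
  have hdeg : (X * p).natDegree < p.natDegree + 1 + 1 :=
    (natDegree_mul_le.trans (by rw [natDegree_X, add_comm])).trans_lt (Nat.lt_succ_self _)
  rw [coeffNorm_eq_sum_range hdeg, coeffNorm_eq_sum_range (Nat.lt_succ_self _),
    Finset.sum_range_succ', Finset.mul_sum]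
  simp only [coeff_X_mul, coeff_X_mul_zero, abs_zero, zero_mul, add_zero]
  exact Finset.sum_congr rfl fun i _ => by ring

theorem coeffNorm_C_mul (c : ℝ) (p : ℝ[X]) : coeffNorm ρ (C c * p) = |c| * coeffNorm ρ p := by
  rw [coeffNorm_eq_sum_range ((natDegree_C_mul_le c p).trans_lt (Nat.lt_succ_self _)),
    coeffNorm_eq_sum_range (Nat.lt_succ_self _), Finset.mul_sum]
  simp only [coeff_C_mul, abs_mul, mul_assoc]

theorem coeffNorm_X_pow_mul (n : ℕ) (p : ℝ[X]) :
    coeffNorm ρ (X ^ n * p) = ρ ^ n * coeffNorm ρ p := by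
  induction n with
  | zero => simp
  | succ n ih => rw [pow_succ', mul_assoc, coeffNorm_X_mul, ih]; ring

theorem coeffNorm_mul_le (hρ : 0 ≤ ρ) (p q : ℝ[X]) :
    coeffNorm ρ (p * q) ≤ coeffNorm ρ p * coeffNorm ρ q := by
  nth_rw 1 [p.as_sum_range_C_mul_X_pow, Finset.sum_mul]
  refine (coeffNorm_sum_le hρ _ _).trans_eq ?_
  rw [coeffNorm_eq_sum_range (Nat.lt_succ_self p.natDegree), Finset.sum_mul]
  simp only [mul_assoc, coeffNorm_C_mul, coeffNorm_X_pow_mul]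

theorem coeffNorm_prod_le {ι : Type*} (hρ : 0 ≤ ρ) (s : Finset ι) (f : ι → ℝ[X]) :
    coeffNorm ρ (∏ i ∈ s, f i) ≤ ∏ i ∈ s, coeffNorm ρ (f i) := by
  classical
  induction s using Finset.induction_on with
  | empty => simp
  | insert i s hi ih =>
    rw [Finset.prod_insert hi, Finset.prod_insert hi]
    exact (coeffNorm_mul_le hρ _ _).trans (by gcongr; exact coeffNorm_nonneg hρ)

theorem coeffNorm_pow_le (hρ : 0 ≤ ρ) (p : ℝ[X]) (n : ℕ) :
    coeffNorm ρ (p ^ n) ≤ coeffNorm ρ p ^ n := by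
  simpa using coeffNorm_prod_le hρ (Finset.range n) fun _ => p

theorem abs_eval_le_coeffNorm (p : ℝ[X]) {x : ℝ} (hx : |x| ≤ ρ) : |p.eval x| ≤ coeffNorm ρ p := by
  rw [eval_eq_sum_range, coeffNorm_eq_sum_range (Nat.lt_succ_self _)]
  refine (Finset.abs_sum_le_sum_abs _ _).trans (Finset.sum_le_sum fun i _ => ?_)
  rw [abs_mul, abs_pow]
  gcongr

theorem coeffNorm_X_sub_C_le {a : ℝ} (ha : |a| ≤ ρ) : coeffNorm ρ (X - C a) ≤ 2 * ρ := by
  have hρ : 0 ≤ ρ := (abs_nonneg a).trans ha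
  calc coeffNorm ρ (X - C a) ≤ ρ + |a| := by simpa using coeffNorm_sub_le hρ X (C a)
    _ ≤ 2 * ρ := by linarith

-- If `r` is the quotient then `X * r = p - p(a) + a * r`, and the constant `p(a)` only cancels.
theorem coeffNorm_divByMonic_X_sub_C_le (p : ℝ[X]) {a : ℝ} (ha : |a| + 1 ≤ ρ) :
    coeffNorm ρ (p /ₘ (X - C a)) ≤ coeffNorm ρ p := by
  have hρ : 0 ≤ ρ := by linarith [abs_nonneg a]
  set r := p /ₘ (X - C a)
  have hX : X * r = (p - C (p.coeff 0)) + (C a * r - C (a * r.coeff 0)) := by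
    ext n
    cases n with
    | zero => simp
    | succ n =>
      simp only [coeff_X_mul, coeff_add, coeff_sub, coeff_C_succ, sub_zero, coeff_C_mul]
      exact coeff_divByMonic_X_sub_C_rec p a n
  have hdrop : ∀ f : ℝ[X], coeffNorm ρ (f - C (f.coeff 0)) ≤ coeffNorm ρ f := by
    intro f
    rw [coeffNorm_eq_sum_range (p := f - C (f.coeff 0)) (n := f.natDegree + 1) (by simp),
      coeffNorm_eq_sum_range (Nat.lt_succ_self _)]
    refine Finset.sum_le_sum fun i _ => ?_
    rcases i with _ | i <;> simp
  have hbound : ρ * coeffNorm ρ r ≤ coeffNorm ρ p + |a| * coeffNorm ρ r := by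
    rw [← coeffNorm_X_mul, hX]
    refine (coeffNorm_add_le hρ _ _).trans (add_le_add (hdrop p) ?_)
    simpa [coeffNorm_C_mul] using hdrop (C a * r)
  nlinarith [coeffNorm_nonneg (p := r) hρ]

end CoeffNorm

section DivByMonic

open Polynomial

variable {R : Type*} [CommRing R] {f g : R[X]}

theorem divByMonic_mul (hf : f.Monic) (hg : g.Monic) (p : R[X]) :
    p /ₘ (f * g) = (p /ₘ f) /ₘ g := by
  nontriviality R
  refine (div_modByMonic_unique _ (p %ₘ f + f * ((p /ₘ f) %ₘ g)) (hf.mul hg) ⟨?_, ?_⟩).1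
  · linear_combination modByMonic_add_div p f + f * modByMonic_add_div (p /ₘ f) g
  · rw [hg.degree_mul]
    refine (degree_add_le _ _).trans_lt (max_lt ?_ ?_)
    · refine (degree_modByMonic_lt p hf).trans_le (le_add_of_nonneg_right ?_)
      exact zero_le_degree_iff.2 hg.ne_zero
    · rw [mul_comm, hf.degree_mul, add_comm, degree_eq_natDegree hf.ne_zero]
      exact (WithBot.add_lt_add_iff_left (by simp)).2 (degree_modByMonic_lt _ hg)

theorem add_divByMonic (hg : g.Monic) (p q : R[X]) : (p + q) /ₘ g = p /ₘ g + q /ₘ g := by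
  nontriviality R
  refine (div_modByMonic_unique _ (p %ₘ g + q %ₘ g) hg ⟨?_, ?_⟩).1
  · linear_combination modByMonic_add_div p g + modByMonic_add_div q g
  · exact (degree_add_le _ _).trans_lt
      (max_lt (degree_modByMonic_lt p hg) (degree_modByMonic_lt q hg))

theorem smul_divByMonic (hg : g.Monic) (c : R) (p : R[X]) : (c • p) /ₘ g = c • (p /ₘ g) := by
  nontriviality R
  refine (div_modByMonic_unique _ (c • (p %ₘ g)) hg ⟨?_, ?_⟩).1
  · rw [mul_smul_comm, ← smul_add, modByMonic_add_div p g]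
  · exact (degree_smul_le _ _).trans_lt (degree_modByMonic_lt p hg)

end DivByMonic

section Nodal

open Polynomial Lagrange

variable {ι : Type*} {a : ι → ℝ} {ρ : ℝ}

theorem coeffNorm_divByMonic_nodal_le (ha : ∀ i, |a i| + 1 ≤ ρ) (s : Finset ι) (p : ℝ[X]) :
    coeffNorm ρ (p /ₘ nodal s a) ≤ coeffNorm ρ p := by
  classical
  induction s using Finset.induction_on generalizing p with
  | empty => simp
  | insert i s hi ih =>
    rw [nodal_insert_eq_nodal hi, divByMonic_mul (monic_X_sub_C _) nodal_monic]
    exact (ih _).trans (coeffNorm_divByMonic_X_sub_C_le p (ha i))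

theorem coeffNorm_divByMonic_nodal_pow_le (ha : ∀ i, |a i| + 1 ≤ ρ) (s : Finset ι) (k : ℕ)
    (p : ℝ[X]) : coeffNorm ρ (p /ₘ nodal s a ^ k) ≤ coeffNorm ρ p := by
  induction k generalizing p with
  | zero => simp
  | succ k ih =>
    rw [pow_succ', divByMonic_mul nodal_monic (nodal_monic.pow k)]
    exact (ih _).trans (coeffNorm_divByMonic_nodal_le ha s p)

theorem coeffNorm_nodal_le (ha : ∀ i, |a i| ≤ ρ) (hρ : 0 ≤ ρ) (s : Finset ι) :
    coeffNorm ρ (nodal s a) ≤ (2 * ρ) ^ s.card := by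
  refine (coeffNorm_prod_le hρ s _).trans ?_
  rw [← Finset.prod_const]
  exact Finset.prod_le_prod (fun _ _ => coeffNorm_nonneg hρ) fun i _ => coeffNorm_X_sub_C_le (ha i)

theorem nodal_pow_dvd [Fintype ι] (ha : Function.Injective a) (m : ℕ) {p : ℝ[X]}
    (h : ∀ i, (X - C (a i)) ^ m ∣ p) : nodal Finset.univ a ^ m ∣ p := by
  rw [nodal, ← Finset.prod_pow]
  refine Finset.prod_dvd_of_coprime (fun i _ j _ hij => ?_) fun i _ => h i
  exact (pairwise_coprime_X_sub_C ha hij).pow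

end Nodal

/-! ### Confluent divided differences -/

section DividedDifference

open Polynomial Lagrange Finset

variable {ι : Type*} [Fintype ι] (a : ι → ℝ) (k : ℕ)

/-- The divided difference of a polynomial at the nodes `a j`, each taken `k` times, together with
one further copy of `a i`. -/
noncomputable def dividedDifference (i : ι) : ℝ[X] →ₗ[ℝ] ℝ where
  toFun p := (p /ₘ nodal univ a ^ k).eval (a i)
  map_add' p q := by rw [add_divByMonic (nodal_monic.pow k), eval_add]
  map_smul' c p := by rw [smul_divByMonic (nodal_monic.pow k), eval_smul, RingHom.id_apply]

theorem dividedDifference_apply (i : ι) (p : ℝ[X]) :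
    dividedDifference a k i p = (p /ₘ nodal univ a ^ k).eval (a i) := rfl

theorem degree_nodal_pow : (nodal univ a ^ k).degree = (Fintype.card ι * k : ℕ) := by
  rw [degree_pow, degree_nodal, card_univ, nsmul_eq_mul, mul_comm]
  norm_cast

variable {a k}

theorem dividedDifference_eq_zero_of_degree_lt (i : ι) {p : ℝ[X]}
    (h : p.degree < (Fintype.card ι * k : ℕ)) : dividedDifference a k i p = 0 := by
  rw [dividedDifference_apply,
    (divByMonic_eq_zero_iff (nodal_monic.pow k)).2 (by rwa [degree_nodal_pow]), eval_zero]

theorem dividedDifference_eq_zero_of_dvd (i : ι) {p : ℝ[X]} (h : nodal univ a ^ (k + 1) ∣ p) :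
    dividedDifference a k i p = 0 := by
  obtain ⟨r, rfl⟩ := h
  rw [dividedDifference_apply, pow_succ, mul_assoc,
    mul_divByMonic_cancel_left _ (nodal_monic.pow k), eval_mul, eval_nodal_at_node (mem_univ i),
    zero_mul]

theorem abs_dividedDifference_le {ρ : ℝ} (ha : ∀ i, |a i| + 1 ≤ ρ) (i : ι) (p : ℝ[X]) :
    |dividedDifference a k i p| ≤ coeffNorm ρ p :=
  (abs_eval_le_coeffNorm _ (by linarith [ha i])).trans
    (coeffNorm_divByMonic_nodal_pow_le ha univ k p)

/-- The real polynomials with integer coefficients. -/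
noncomputable abbrev integralPolynomials : Subring ℝ[X] := liftsRing (Int.castRingHom ℝ)

theorem C_intCast_mem_integralPolynomials (z : ℤ) : (C (z : ℝ) : ℝ[X]) ∈ integralPolynomials := by
  rw [map_intCast]
  exact intCast_mem _ z

theorem X_sub_C_natCast_mem_integralPolynomials (n : ℕ) :
    (X - C (n : ℝ) : ℝ[X]) ∈ integralPolynomials :=
  sub_mem ⟨X, by simp⟩ (by rw [map_natCast]; exact natCast_mem _ n)

theorem exists_intCast_eq_dividedDifference (b : ι → ℕ) (k : ℕ) (i : ι) {p : ℝ[X]}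
    (hp : p ∈ integralPolynomials) :
    ∃ z : ℤ, (z : ℝ) = dividedDifference (fun j => (b j : ℝ)) k i p := by
  obtain ⟨q, rfl⟩ := hp
  set Q : ℤ[X] := nodal univ fun j => (b j : ℤ)
  have hQ : nodal univ (fun j => (b j : ℝ)) = Q.map (Int.castRingHom ℝ) := by
    simp [Q, nodal_eq, Polynomial.map_prod]
  refine ⟨(q /ₘ Q ^ k).eval (b i : ℤ), ?_⟩
  have heval := eval_intCast_map (Int.castRingHom ℝ) (q /ₘ Q ^ k) (b i : ℤ)
  rw [dividedDifference_apply, hQ, ← Polynomial.map_pow, coe_mapRingHom,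
    ← map_divByMonic _ (nodal_monic.pow k)]
  exact_mod_cast heval.symm

end DividedDifference

/-! ### Integral partitions of unity -/

section UpperBinomialHalf

open Finset

variable {R : Type*} [CommRing R]

/-- The terms of the binomial expansion of `(u + v) ^ (2 * m)` that are divisible by `u ^ m`. -/
def upperBinomialHalf (u v : R) (m : ℕ) : R :=
  ∑ i ∈ range (2 * m + 1) with m ≤ i, u ^ i * v ^ (2 * m - i) * (2 * m).choose i

theorem pow_dvd_upperBinomialHalf (u v : R) (m : ℕ) : u ^ m ∣ upperBinomialHalf u v m :=
  dvd_sum fun _ hi => ((pow_dvd_pow u (mem_filter.1 hi).2).mul_right _).mul_right _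

theorem pow_dvd_upperBinomialHalf_sub (u v : R) (m : ℕ) :
    v ^ m ∣ upperBinomialHalf u v m - (u + v) ^ (2 * m) := by
  rw [upperBinomialHalf, add_pow,
    ← sum_filter_add_sum_filter_not (range (2 * m + 1)) (m ≤ ·), sub_add_cancel_left, dvd_neg]
  refine dvd_sum fun i hi => ((pow_dvd_pow v ?_).mul_left _).mul_right _
  have := (mem_filter.1 hi).2
  omega

theorem upperBinomialHalf_mem (S : Subring R) {u v : R} (hu : u ∈ S) (hv : v ∈ S) (m : ℕ) :
    upperBinomialHalf u v m ∈ S :=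
  sum_mem fun _ _ => mul_mem (mul_mem (pow_mem hu _) (pow_mem hv _)) (natCast_mem S _)

open Polynomial in
theorem coeffNorm_upperBinomialHalf_le {ρ : ℝ} (hρ : 0 ≤ ρ) (u v : ℝ[X]) (m : ℕ) :
    coeffNorm ρ (upperBinomialHalf u v m) ≤ (coeffNorm ρ u + coeffNorm ρ v) ^ (2 * m) := by
  have hu := coeffNorm_nonneg (p := u) hρ
  have hv := coeffNorm_nonneg (p := v) hρ
  calc coeffNorm ρ (upperBinomialHalf u v m)
      ≤ ∑ i ∈ range (2 * m + 1) with m ≤ i,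
          coeffNorm ρ (u ^ i * v ^ (2 * m - i) * (2 * m).choose i) := coeffNorm_sum_le hρ _ _
    _ ≤ ∑ i ∈ range (2 * m + 1) with m ≤ i,
          coeffNorm ρ u ^ i * coeffNorm ρ v ^ (2 * m - i) * (2 * m).choose i := by
        refine sum_le_sum fun i _ => ?_
        refine (coeffNorm_mul_le hρ _ _).trans ?_
        rw [coeffNorm_natCast]
        gcongr
        refine (coeffNorm_mul_le hρ _ _).trans ?_
        gcongr
        exacts [coeffNorm_nonneg hρ, coeffNorm_pow_le hρ u i, coeffNorm_pow_le hρ v _]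
    _ ≤ (coeffNorm ρ u + coeffNorm ρ v) ^ (2 * m) := by
        rw [add_pow]
        exact sum_le_sum_of_subset_of_nonneg (filter_subset _ _) fun _ _ _ => by positivity

end UpperBinomialHalf

section PartitionOfUnity

open Polynomial Lagrange Finset

variable {ι : Type*} [Fintype ι]

/-- The polynomials `E j / D` are idempotents modulo `∏ (X - a j) ^ m`, the `j`-th one being `1` at
`a j` and `0` at the other nodes. -/
structure IsPartitionOfUnity (a : ι → ℝ) (m : ℕ) (E : ι → ℝ[X]) (D : ℝ) : Prop where
  ne_zero : D ≠ 0
  dvd_of_ne : ∀ ⦃j l⦄, l ≠ j → (X - C (a l)) ^ m ∣ E j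
  dvd_sub : ∀ j, (X - C (a j)) ^ m ∣ E j - C D

theorem IsPartitionOfUnity.nodal_dvd {a : ι → ℝ} {m : ℕ} {E : ι → ℝ[X]} {D : ℝ}
    (hE : IsPartitionOfUnity a m E D) (ha : Function.Injective a) :
    nodal univ a ^ m ∣ ∑ j, E j - C D := by
  classical
  refine nodal_pow_dvd ha m fun l => ?_
  rw [← add_sum_erase _ _ (mem_univ l), add_sub_right_comm]
  exact dvd_add (hE.dvd_sub l) (dvd_sum fun j hj => hE.dvd_of_ne (ne_of_mem_erase hj).symm)

variable [DecidableEq ι] (a : ι → ℝ)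

/-- The product of `a j - a l` over the other nodes `a l`. -/
noncomputable def nodeGap (j : ι) : ℝ := (nodal (univ.erase j) a).eval (a j)

/-- With `u` the product of `X - a l` over `l ≠ j`, the polynomial `v = u(a j) - u` vanishes at
`a j`, so half of the binomial expansion of the constant `(u + v) ^ (2 * m)` separates `a j` from
the other nodes; the remaining factor makes that constant independent of `j`. -/
noncomputable def nodeIdempotent (m : ℕ) (j : ι) : ℝ[X] :=
  C (∏ l ∈ univ.erase j, nodeGap a l ^ (2 * m)) *
    upperBinomialHalf (nodal (univ.erase j) a) (C (nodeGap a j) - nodal (univ.erase j) a) m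

variable {a}

theorem nodeGap_ne_zero (ha : Function.Injective a) (j : ι) : nodeGap a j ≠ 0 :=
  eval_nodal_not_at_node fun _ hl => ha.ne (ne_of_mem_erase hl).symm

theorem isPartitionOfUnity_nodeIdempotent (ha : Function.Injective a) (m : ℕ) :
    IsPartitionOfUnity a m (nodeIdempotent a m) (∏ l, nodeGap a l ^ (2 * m)) where
  ne_zero := prod_ne_zero_iff.2 fun l _ => pow_ne_zero _ (nodeGap_ne_zero ha l)
  dvd_of_ne j l hlj :=
    ((pow_dvd_pow_of_dvd (X_sub_C_dvd_nodal a (mem_erase.2 ⟨hlj, mem_univ l⟩)) m).trans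
      (pow_dvd_upperBinomialHalf _ _ m)).mul_left _
  dvd_sub j := by
    have hroot : X - C (a j) ∣ C (nodeGap a j) - nodal (univ.erase j) a := by
      rw [dvd_iff_isRoot]
      simp [nodeGap]
    have hdvd := (pow_dvd_pow_of_dvd hroot m).trans
      (pow_dvd_upperBinomialHalf_sub (nodal (univ.erase j) a) _ m)
    rw [add_sub_cancel, ← C_pow] at hdvd
    rw [← prod_erase_mul _ _ (mem_univ j), C_mul, nodeIdempotent, ← mul_sub]
    exact hdvd.mul_left _

section Bounds

variable {ρ : ℝ} (ha : ∀ j, |a j| ≤ ρ) (hρ : 1 ≤ ρ)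
include ha hρ

theorem coeffNorm_nodal_erase_le (j : ι) :
    coeffNorm ρ (nodal (univ.erase j) a) ≤ (2 * ρ) ^ Fintype.card ι :=
  (coeffNorm_nodal_le ha (by linarith) _).trans
    (pow_le_pow_right₀ (by linarith) (card_le_univ _))

theorem abs_nodeGap_le (j : ι) : |nodeGap a j| ≤ (2 * ρ) ^ Fintype.card ι :=
  (abs_eval_le_coeffNorm _ (ha j)).trans (coeffNorm_nodal_erase_le ha hρ j)

theorem coeffNorm_nodeIdempotent_le (m : ℕ) (j : ι) :
    coeffNorm ρ (nodeIdempotent a m j) ≤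
      (3 * (2 * ρ) ^ Fintype.card ι) ^ (2 * m * (Fintype.card ι + 1)) := by
  have hρ0 : 0 ≤ ρ := by linarith
  set T := (2 * ρ) ^ Fintype.card ι
  have hT : 1 ≤ T := one_le_pow₀ (by linarith)
  set u := nodal (univ.erase j) a
  have hu : coeffNorm ρ u ≤ T := coeffNorm_nodal_erase_le ha hρ j
  have hv : coeffNorm ρ (C (nodeGap a j) - u) ≤ T + T :=
    (coeffNorm_sub_le hρ0 _ _).trans (by simpa using add_le_add (abs_nodeGap_le ha hρ j) hu)
  have hhalf : coeffNorm ρ (upperBinomialHalf u (C (nodeGap a j) - u) m) ≤ (3 * T) ^ (2 * m) :=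
    (coeffNorm_upperBinomialHalf_le hρ0 _ _ m).trans
      (pow_le_pow_left₀ (add_nonneg (coeffNorm_nonneg hρ0) (coeffNorm_nonneg hρ0))
        (by linarith) _)
  have hprod : |∏ l ∈ univ.erase j, nodeGap a l ^ (2 * m)| ≤
      ((3 * T) ^ (2 * m)) ^ Fintype.card ι := by
    calc |∏ l ∈ univ.erase j, nodeGap a l ^ (2 * m)|
        = ∏ l ∈ univ.erase j, |nodeGap a l| ^ (2 * m) := by simp only [abs_prod, abs_pow]
      _ ≤ ∏ _l ∈ univ.erase j, (3 * T) ^ (2 * m) := by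
          gcongr with l
          linarith [abs_nodeGap_le ha hρ l]
      _ ≤ ((3 * T) ^ (2 * m)) ^ Fintype.card ι := by
          rw [prod_const]
          exact pow_le_pow_right₀ (one_le_pow₀ (by linarith)) (card_le_univ _)
  rw [nodeIdempotent, coeffNorm_C_mul, pow_mul, pow_succ]
  exact mul_le_mul hprod hhalf (coeffNorm_nonneg hρ0) (by positivity)

end Bounds

theorem nodeIdempotent_mem_integralPolynomials (b : ι → ℕ) (m : ℕ) (j : ι) :
    nodeIdempotent (fun j => (b j : ℝ)) m j ∈ integralPolynomials := by
  have hnodal : ∀ j, nodal (univ.erase j) (fun j => (b j : ℝ)) ∈ integralPolynomials :=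
    fun j => prod_mem fun l _ => X_sub_C_natCast_mem_integralPolynomials _
  have hgap : ∀ j, C (nodeGap (fun j => (b j : ℝ)) j) ∈ integralPolynomials := by
    intro j
    convert C_intCast_mem_integralPolynomials (∏ l ∈ univ.erase j, ((b j : ℤ) - b l)) using 2
    simp [nodeGap, eval_nodal]
  refine mul_mem ?_ (upperBinomialHalf_mem _ (hnodal j) (sub_mem (hgap j) (hnodal j)) m)
  rw [map_prod]
  exact prod_mem fun l _ => by rw [C_pow]; exact pow_mem (hgap l) _

end PartitionOfUnity

/-! ### Taylor polynomials of a power -/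

section BinomialJet

open Polynomial

/-- The Taylor polynomial of degree `k` of `(N + X) ^ α` at `x`, divided by `(N + x) ^ (α - k)`. -/
noncomputable def binomialJet (N α : ℝ) (k : ℕ) (x : ℝ) : ℝ[X] :=
  ∑ h ∈ Finset.range (k + 1), C (Ring.choose α h * (N + x) ^ (k - h)) * (X - C x) ^ h

/-- The differential operator `f ↦ (N + X) f' - α f`, which annihilates `(N + X) ^ α`. -/
noncomputable def powerOperator (N α : ℝ) (f : ℝ[X]) : ℝ[X] :=
  (C N + X) * derivative f - C α * f

theorem eval_binomialJet (N α : ℝ) (k : ℕ) (x : ℝ) :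
    (binomialJet N α k x).eval x = (N + x) ^ k := by
  simp [binomialJet, eval_finsetSum, Finset.sum_range_succ']

theorem powerOperator_partial_binomialJet (N α x : ℝ) {n k : ℕ} (hn : n ≤ k) :
    powerOperator N α
        (∑ h ∈ Finset.range (n + 1), C (Ring.choose α h * (N + x) ^ (k - h)) * (X - C x) ^ h) =
      -(C ((α - n) * Ring.choose α n * (N + x) ^ (k - n)) * (X - C x) ^ n) := by
  induction n with
  | zero => simp [powerOperator]
  | succ n ih =>
    have hpow : (N + x) ^ (k - n) = (N + x) ^ (k - (n + 1)) * (N + x) := by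
      rw [← pow_succ]
      congr 1
      omega
    have hchoose := congrArg C (succ_mul_choose_succ α n)
    have hprev := ih (by omega)
    rw [powerOperator, hpow] at hprev
    rw [powerOperator, Finset.sum_range_succ, derivative_add, derivative_C_mul,
      derivative_X_sub_C_pow]
    simp only [map_mul, map_sub, map_add, map_natCast, map_one, Nat.cast_add, Nat.cast_one,
      Nat.add_sub_cancel] at hchoose hprev ⊢
    linear_combination hprev +
      C ((N + x) ^ (k - (n + 1))) * (C N + C x) * (X - C x) ^ n * hchoose

theorem pow_dvd_powerOperator_binomialJet (N α : ℝ) (k : ℕ) (x : ℝ) :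
    (X - C x) ^ k ∣ powerOperator N α (binomialJet N α k x) := by
  rw [binomialJet, powerOperator_partial_binomialJet N α x le_rfl]
  exact (Dvd.intro_left _ rfl).neg_right

theorem pow_dvd_powerOperator_of_pow_succ_dvd (N α x : ℝ) (k : ℕ) {f : ℝ[X]}
    (hf : (X - C x) ^ (k + 1) ∣ f) : (X - C x) ^ k ∣ powerOperator N α f :=
  dvd_sub ((by simpa using pow_sub_one_dvd_derivative_of_pow_dvd hf : _ ∣ _).mul_left _)
    (((pow_dvd_pow _ k.le_succ).trans hf).mul_left _)

theorem powerOperator_sub_C_mul (N α c : ℝ) (f g : ℝ[X]) :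
    powerOperator N α (f - C c * g) = powerOperator N α f - C c * powerOperator N α g := by
  simp only [powerOperator, derivative_sub, derivative_C_mul]
  ring

theorem degree_powerOperator_le (N α : ℝ) (f : ℝ[X]) : (powerOperator N α f).degree ≤ f.degree := by
  refine (degree_sub_le _ _).trans (max_le ?_ ?_)
  · rcases eq_or_ne f.natDegree 0 with h0 | h0
    · simp [derivative_of_natDegree_zero h0]
    · rw [degree_mul, add_comm (C N) X, degree_X_add_C, degree_derivative h0,
        degree_eq_natDegree (by rintro rfl; simp at h0)]
      exact_mod_cast (by omega : 1 + (f.natDegree - 1) ≤ f.natDegree)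
  · rw [← smul_eq_C_mul]
    exact degree_smul_le _ _

theorem coeff_natDegree_powerOperator (N α : ℝ) (f : ℝ[X]) :
    (powerOperator N α f).coeff f.natDegree = (f.natDegree - α) * f.leadingCoeff := by
  have hderiv : (derivative f).coeff f.natDegree = 0 := by
    rw [coeff_derivative, coeff_eq_zero_of_natDegree_lt (Nat.lt_succ_self _), zero_mul]
  have hX : (X * derivative f).coeff f.natDegree = f.natDegree * f.leadingCoeff := by
    rw [leadingCoeff]
    rcases f.natDegree with _ | n
    · simp
    · rw [coeff_X_mul, coeff_derivative]
      push_cast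
      ring
  rw [powerOperator, coeff_sub, add_mul, coeff_add, coeff_C_mul, coeff_C_mul, hderiv, hX,
    leadingCoeff]
  ring

theorem eq_zero_of_powerOperator_eq_zero {N α : ℝ} (hα : ∀ n : ℕ, α ≠ n) {f : ℝ[X]}
    (h : powerOperator N α f = 0) : f = 0 := by
  have hcoeff := coeff_natDegree_powerOperator N α f
  rw [h, coeff_zero, eq_comm, mul_eq_zero, leadingCoeff_eq_zero] at hcoeff
  exact hcoeff.resolve_left (sub_ne_zero.2 (hα _).symm)

end BinomialJet

section HermiteInterpolation

open Polynomial Lagrange Finset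

variable {ι : Type*} [Fintype ι] {a : ι → ℝ} {k : ℕ} {E : ι → ℝ[X]} {D : ℝ}

theorem IsPartitionOfUnity.dvd_sum_sub {m : ℕ} (hE : IsPartitionOfUnity a m E D) (g : ι → ℝ[X])
    (i : ι) : (X - C (a i)) ^ m ∣ ∑ j, E j * g j - C D * g i := by
  classical
  rw [← add_sum_erase _ _ (mem_univ i), add_sub_right_comm, ← sub_mul]
  exact dvd_add ((hE.dvd_sub i).mul_right _)
    (dvd_sum fun j hj => (hE.dvd_of_ne (ne_of_mem_erase hj).symm).mul_right _)

/- The Hermite interpolation polynomial `R` of the jets `v j • binomialJet N α k (a j)` has degree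
less than `card ι * k`, so `powerOperator N α R` vanishes, being divisible by `nodal univ a ^ k`. -/
theorem eq_zero_of_dividedDifference_jets_eq_zero (hE : IsPartitionOfUnity a (k + 1) E D)
    (ha : Function.Injective a) {N α : ℝ} (hN : ∀ j, N + a j ≠ 0) (hα : ∀ n : ℕ, α ≠ n)
    (v : ι → ℝ)
    (hv : ∀ i, dividedDifference a k i (∑ j, E j * (C (v j) * binomialJet N α k (a j))) = 0) :
    v = 0 := by
  set G := ∑ j, E j * (C (v j) * binomialJet N α k (a j))
  set Q := nodal univ a ^ k
  set R := G %ₘ Q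
  have hQ : Q.Monic := nodal_monic.pow k
  have hquot : ∀ i, (X - C (a i)) ^ (k + 1) ∣ Q * (G /ₘ Q) := fun i => by
    rw [pow_succ]
    exact mul_dvd_mul (pow_dvd_pow_of_dvd (X_sub_C_dvd_nodal a (mem_univ i)) k)
      (dvd_iff_isRoot.2 (hv i))
  have hjet : ∀ i, (X - C (a i)) ^ (k + 1) ∣ R - C (D * v i) * binomialJet N α k (a i) := by
    intro i
    have hsub := dvd_sub (hE.dvd_sum_sub (fun j => C (v j) * binomialJet N α k (a j)) i) (hquot i)
    convert hsub using 1
    rw [C_mul]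
    linear_combination modByMonic_add_div G Q
  have hop : Q ∣ powerOperator N α R := nodal_pow_dvd ha k fun i => by
    have hsub := pow_dvd_powerOperator_of_pow_succ_dvd N α (a i) k (hjet i)
    rw [powerOperator_sub_C_mul] at hsub
    exact (dvd_sub_left ((pow_dvd_powerOperator_binomialJet N α k (a i)).mul_left _)).1 hsub
  have hR : R = 0 := eq_zero_of_powerOperator_eq_zero hα <|
    eq_zero_of_dvd_of_degree_lt hop
      ((degree_powerOperator_le N α R).trans_lt (degree_modByMonic_lt _ hQ))
  funext i
  have hroot := dvd_iff_isRoot.1 ((dvd_pow_self _ k.succ_ne_zero).trans (hjet i))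
  rw [hR, zero_sub, IsRoot, eval_neg, neg_eq_zero, eval_mul, eval_C, eval_binomialJet] at hroot
  simpa [hE.ne_zero, hN i] using hroot

theorem IsPartitionOfUnity.sum_dividedDifference_eq_zero (hE : IsPartitionOfUnity a (k + 1) E D)
    (ha : Function.Injective a) (i : ι) {f : ℝ[X]} (hf : f.degree < (Fintype.card ι * k : ℕ)) :
    ∑ j, dividedDifference a k i (E j * f) = 0 := by
  have hsplit : ∑ j, E j * f = (∑ j, E j - C D) * f + D • f := by
    rw [← sum_mul, smul_eq_C_mul]
    ring
  rw [← map_sum, hsplit, map_add, map_smul,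
    dividedDifference_eq_zero_of_dvd i ((hE.nodal_dvd ha).mul_right f),
    dividedDifference_eq_zero_of_degree_lt i hf, smul_zero, add_zero]

theorem pow_dvd_sub_sum_hasseDeriv (f : ℝ[X]) (x : ℝ) (m : ℕ) :
    (X - C x) ^ m ∣ f - ∑ h ∈ range m, C ((hasseDeriv h f).eval x) * (X - C x) ^ h := by
  have hcoe (g : ℝ[X]) : taylorEquiv x g = taylor x g := rfl
  rw [← map_dvd_iff (taylorEquiv x)]
  simp only [hcoe, taylor_pow, map_sub, map_sum, taylor_mul, taylor_C, taylor_X,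
    add_sub_cancel_right]
  rw [X_pow_dvd_iff]
  intro d hd
  simp [coeff_X_pow, taylor_coeff, hd]

theorem IsPartitionOfUnity.dividedDifference_mul (hE : IsPartitionOfUnity a (k + 1) E D)
    (ha : Function.Injective a) (i j : ι) (f : ℝ[X]) :
    dividedDifference a k i (E j * f) = ∑ h ∈ range (k + 1),
      (hasseDeriv h f).eval (a j) * dividedDifference a k i (E j * (X - C (a j)) ^ h) := by
  have hdvd : nodal univ a ^ (k + 1) ∣ E j *
      (f - ∑ h ∈ range (k + 1), C ((hasseDeriv h f).eval (a j)) * (X - C (a j)) ^ h) := by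
    refine nodal_pow_dvd ha _ fun l => ?_
    rcases eq_or_ne l j with rfl | hlj
    · exact (pow_dvd_sub_sum_hasseDeriv f (a l) (k + 1)).mul_left _
    · exact (hE.dvd_of_ne hlj).mul_right _
  have hzero := dividedDifference_eq_zero_of_dvd i hdvd
  rw [mul_sub, map_sub, sub_eq_zero, mul_sum, map_sum] at hzero
  rw [hzero]
  refine sum_congr rfl fun h _ => ?_
  rw [mul_left_comm, ← smul_eq_C_mul, map_smul, smul_eq_mul]

end HermiteInterpolation

/-! ### Simultaneous Padé approximation of powers -/

section PadeMatrix

open Polynomial Finset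

variable {ι : Type*} [Fintype ι] [DecidableEq ι] {a : ι → ℝ} {N ν ρ : ℝ} {k : ℕ}

/-- The coefficients of the Padé-type linear forms in the numbers `(N + a j) ^ ν`. -/
noncomputable def padeMatrix (a : ι → ℝ) (N ν : ℝ) (k : ℕ) : Matrix ι ι ℝ :=
  Matrix.of fun i j =>
    dividedDifference a k i (nodeIdempotent a (k + 1) j * binomialJet N (k + ν) k (a j))

/-- A bound for the exponential growth rate in `k` of the entries and linear forms of `padeMatrix`
with `J` nodes, all of size at most `ρ`. -/
noncomputable def padeGrowth (J : ℕ) (ρ : ℝ) : ℝ :=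
  2 ^ (2 * J + 10) * ρ ^ (J + 1) * (3 * (2 * ρ) ^ J) ^ (4 * (J + 1))

theorem padeMatrix_apply (i j : ι) : padeMatrix a N ν k i j =
    dividedDifference a k i (nodeIdempotent a (k + 1) j * binomialJet N (k + ν) k (a j)) := rfl

theorem eq_zero_of_padeMatrix_mulVec_eq_zero (ha : Function.Injective a) (hN : ∀ j, N + a j ≠ 0)
    (hν₀ : 0 < ν) (hν₁ : ν < 1) {v : ι → ℝ} (hv : (padeMatrix a N ν k).mulVec v = 0) : v = 0 := by
  have hα : ∀ n : ℕ, (k : ℝ) + ν ≠ n := fun n hn => by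
    have hlt : k < n := by exact_mod_cast (by linarith : (k : ℝ) < n)
    have hgt : n < k + 1 := by exact_mod_cast (by linarith : (n : ℝ) < k + 1)
    omega
  refine eq_zero_of_dividedDifference_jets_eq_zero
    (isPartitionOfUnity_nodeIdempotent ha (k + 1)) ha hN hα v fun i => ?_
  rw [map_sum]
  refine (sum_congr rfl fun j _ => ?_).trans (congrFun hv i)
  rw [mul_left_comm, ← smul_eq_C_mul, map_smul, smul_eq_mul, mul_comm]
  rfl

theorem exists_intCast_eq_pow_mul_padeMatrix {p : ℕ} (hp : p.Prime) (b : ι → ℕ) (M k : ℕ)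
    (i j : ι) : ∃ z : ℤ,
      (z : ℝ) = p ^ (2 * k) * padeMatrix (fun l => (b l : ℝ)) (M : ℝ) (1 / (p : ℝ)) k i j := by
  have hjet : C ((p : ℝ) ^ (2 * k)) * binomialJet (M : ℝ) (k + 1 / p) k (b j) ∈
      integralPolynomials := by
    rw [binomialJet, mul_sum]
    refine sum_mem fun h hh => ?_
    obtain ⟨z, hz⟩ := exists_intCast_eq_pow_mul_choose hp (Nat.lt_succ_iff.1 (mem_range.1 hh))
    rw [← mul_assoc, ← C_mul, ← mul_assoc, ← hz]
    refine mul_mem ?_ (pow_mem (X_sub_C_natCast_mem_integralPolynomials _) _)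
    exact_mod_cast C_intCast_mem_integralPolynomials (z * ((M : ℤ) + b j) ^ (k - h))
  obtain ⟨z, hz⟩ := exists_intCast_eq_dividedDifference b k i
    (mul_mem (nodeIdempotent_mem_integralPolynomials b (k + 1) j) hjet)
  refine ⟨z, ?_⟩
  rw [hz, mul_left_comm, ← smul_eq_C_mul, map_smul, smul_eq_mul, padeMatrix_apply]

theorem abs_choose_add_le (hν₀ : 0 < ν) (hν₁ : ν < 1) (hk : 1 ≤ k) {h : ℕ} (hh : h ≤ k) :
    |Ring.choose (k + ν) h| ≤ 2 ^ (3 * k) := by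
  refine (abs_choose_le (k + ν) (k + 1) h ?_).trans (pow_le_pow_right₀ one_le_two (by omega))
  rw [abs_of_pos (by positivity)]
  push_cast
  linarith

theorem coeffNorm_X_sub_C_pow_le {x : ℝ} (hx₀ : 0 ≤ x) (hx : x + 1 ≤ ρ) (h : ℕ) :
    coeffNorm ρ ((X - C x) ^ h) ≤ (2 * ρ) ^ h :=
  (coeffNorm_pow_le (by linarith) _ h).trans <|
    pow_le_pow_left₀ (coeffNorm_nonneg (by linarith))
      (coeffNorm_X_sub_C_le (by rw [abs_of_nonneg hx₀]; linarith)) h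

theorem natCast_add_one_le_two_pow (k : ℕ) : (k : ℝ) + 1 ≤ 2 ^ k := by
  exact_mod_cast Nat.lt_two_pow_self (n := k)

theorem coeffNorm_binomialJet_le (hν₀ : 0 < ν) (hν₁ : ν < 1) (hk : 1 ≤ k) {x : ℝ} (hx₀ : 0 ≤ x)
    (hx : x + 1 ≤ ρ) (hN : ρ ≤ N) : coeffNorm ρ (binomialJet N (k + ν) k x) ≤ (32 * N) ^ k := by
  have hρ : 0 ≤ ρ := by linarith
  have hterm : ∀ h ∈ range (k + 1),
      coeffNorm ρ (C (Ring.choose (k + ν) h * (N + x) ^ (k - h)) * (X - C x) ^ h) ≤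
        2 ^ (3 * k) * (2 * N) ^ k := fun h hh => by
    have hhk : h ≤ k := Nat.lt_succ_iff.1 (mem_range.1 hh)
    have hN₀ : 0 ≤ N := hρ.trans hN
    rw [coeffNorm_C_mul, abs_mul, abs_of_nonneg (by positivity : 0 ≤ (N + x) ^ (k - h)), mul_assoc]
    refine mul_le_mul (abs_choose_add_le hν₀ hν₁ hk hhk) ?_
      (mul_nonneg (by positivity) (coeffNorm_nonneg hρ)) (by positivity)
    calc (N + x) ^ (k - h) * coeffNorm ρ ((X - C x) ^ h)
        ≤ (2 * N) ^ (k - h) * (2 * N) ^ h := by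
          have hX := coeffNorm_X_sub_C_pow_le hx₀ hx h
          have hbase : N + x ≤ 2 * N := by linarith
          have hpow : (2 * ρ) ^ h ≤ (2 * N) ^ h := by gcongr
          gcongr
          · exact coeffNorm_nonneg hρ
          · exact hX.trans hpow
      _ = (2 * N) ^ k := by rw [← pow_add, Nat.sub_add_cancel hhk]
  calc coeffNorm ρ (binomialJet N (k + ν) k x)
      ≤ ∑ _h ∈ range (k + 1), (2 ^ (3 * k) * (2 * N) ^ k) :=
        (coeffNorm_sum_le hρ _ _).trans (sum_le_sum hterm)
    _ = ((k : ℝ) + 1) * (2 ^ (3 * k) * (2 * N) ^ k) := by simp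
    _ ≤ 2 ^ k * (2 ^ (3 * k) * (2 * N) ^ k) := by
        gcongr
        · exact mul_nonneg (by positivity) (pow_nonneg (by linarith) k)
        · exact natCast_add_one_le_two_pow k
    _ = (32 * N) ^ k := by
        rw [pow_mul, ← mul_pow, ← mul_pow]
        ring

theorem coeffNorm_nodeIdempotent_succ_le (ha₀ : ∀ j, 0 ≤ a j) (ha : ∀ j, a j + 1 ≤ ρ)
    (hk : 1 ≤ k) (j : ι) : coeffNorm ρ (nodeIdempotent a (k + 1) j) ≤
      ((3 * (2 * ρ) ^ Fintype.card ι) ^ (4 * (Fintype.card ι + 1))) ^ k := by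
  have hρ : 1 ≤ ρ := by linarith [ha₀ j, ha j]
  refine (coeffNorm_nodeIdempotent_le
    (fun l => by rw [abs_of_nonneg (ha₀ l)]; linarith [ha l]) hρ (k + 1) j).trans ?_
  rw [← pow_mul]
  refine pow_le_pow_right₀ ?_ (by nlinarith)
  linarith [one_le_pow₀ (by linarith : 1 ≤ 2 * ρ) (n := Fintype.card ι)]

theorem abs_dividedDifference_nodeIdempotent_mul_le (ha₀ : ∀ j, 0 ≤ a j)
    (ha : ∀ j, a j + 1 ≤ ρ) (hk : 1 ≤ k) (i j : ι) {f : ℝ[X]} {B : ℝ} (hf : coeffNorm ρ f ≤ B) :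
    |dividedDifference a k i (nodeIdempotent a (k + 1) j * f)| ≤
      ((3 * (2 * ρ) ^ Fintype.card ι) ^ (4 * (Fintype.card ι + 1))) ^ k * B := by
  have hρ : 0 ≤ ρ := by linarith [ha₀ j, ha j]
  refine (abs_dividedDifference_le (fun l => by rw [abs_of_nonneg (ha₀ l)]; exact ha l) i _).trans
    ((coeffNorm_mul_le hρ _ _).trans ?_)
  exact mul_le_mul (coeffNorm_nodeIdempotent_succ_le ha₀ ha hk j) hf (coeffNorm_nonneg hρ)
    (by positivity)

theorem abs_padeMatrix_le (hν₀ : 0 < ν) (hν₁ : ν < 1) (hk : 1 ≤ k) (ha₀ : ∀ j, 0 ≤ a j)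
    (ha : ∀ j, a j + 1 ≤ ρ) (hN : ρ ≤ N) (i j : ι) :
    |padeMatrix a N ν k i j| ≤ (padeGrowth (Fintype.card ι) ρ * N) ^ k := by
  have hρ : 1 ≤ ρ := by linarith [ha₀ j, ha j]
  have hN₀ : 0 ≤ N := by linarith
  refine (abs_dividedDifference_nodeIdempotent_mul_le ha₀ ha hk i j
    (coeffNorm_binomialJet_le hν₀ hν₁ hk (ha₀ j) (ha j) hN)).trans ?_
  rw [← mul_pow, padeGrowth]
  have h32 : (32 : ℝ) ≤ 2 ^ (2 * Fintype.card ι + 10) :=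
    (by norm_num : (32 : ℝ) ≤ 2 ^ 10).trans (pow_le_pow_right₀ one_le_two (by omega))
  gcongr ?_ ^ k
  calc (3 * (2 * ρ) ^ Fintype.card ι) ^ (4 * (Fintype.card ι + 1)) * (32 * N)
      = 32 * 1 * (3 * (2 * ρ) ^ Fintype.card ι) ^ (4 * (Fintype.card ι + 1)) * N := by ring
    _ ≤ _ := by
        gcongr
        exact one_le_pow₀ hρ

/- By `IsPartitionOfUnity.sum_dividedDifference_eq_zero` the Taylor polynomial at `0` of
`(N + X) ^ (k + ν)` contributes nothing, which leaves only its remainders. -/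
theorem sum_padeMatrix_mul_rpow (ha : Function.Injective a) (hN : ∀ j, 0 < N + a j)
    (hJ : 1 ≤ Fintype.card ι) (i : ι) :
    ∑ j, padeMatrix a N ν k i j * (N + a j) ^ ν = ∑ j, ∑ h ∈ range (k + 1),
      dividedDifference a k i (nodeIdempotent a (k + 1) j * (X - C (a j)) ^ h) *
        (Ring.choose (k + ν) h *
          binomialRemainder N (k + ν - h) (Fintype.card ι * k - h) (a j)) := by
  have hE := isPartitionOfUnity_nodeIdempotent ha (k + 1)
  rw [← sub_zero (∑ j, padeMatrix a N ν k i j * (N + a j) ^ ν),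
    ← hE.sum_dividedDifference_eq_zero ha i
      (degree_binomialPolynomial_lt N (k + ν) (Fintype.card ι * k)), ← sum_sub_distrib]
  refine sum_congr rfl fun j _ => ?_
  rw [hE.dividedDifference_mul ha, padeMatrix_apply, binomialJet, mul_sum, map_sum, sum_mul,
    ← sum_sub_distrib]
  refine sum_congr rfl fun h hh => ?_
  have hhk : h ≤ k := Nat.lt_succ_iff.1 (mem_range.1 hh)
  obtain ⟨R, hR⟩ := Nat.exists_eq_add_of_le (hhk.trans (Nat.le_mul_of_pos_left k hJ))
  have hpow : (N + a j) ^ ((k : ℝ) + ν - h) = (N + a j) ^ (k - h) * (N + a j) ^ ν := by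
    rw [← Real.rpow_natCast, ← Real.rpow_add (hN j), Nat.cast_sub hhk]
    congr 1
    ring
  rw [hR, hasseDeriv_binomialPolynomial, Nat.add_sub_cancel_left, binomialRemainder, hpow,
    mul_left_comm (nodeIdempotent a (k + 1) j), ← smul_eq_C_mul, map_smul, eval_smul, smul_eq_mul,
    smul_eq_mul]
  ring

theorem abs_binomialRemainder_shift_le (hν₀ : 0 < ν) (hν₁ : ν < 1) (hk : 1 ≤ k) {J h : ℕ}
    (hJ : 2 ≤ J) (hh : h ≤ k) {x : ℝ} (hx₀ : 0 ≤ x) (hx : x + 1 ≤ ρ) (hN : 0 < N) :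
    |binomialRemainder N (k + ν - h) (J * k - h) x| ≤
      2 ^ ((J + 2) * k) * ρ ^ (J * k) * N ^ (ν - ((J : ℝ) - 1) * k) := by
  have hJk : 2 * k ≤ J * k := Nat.mul_le_mul_right k hJ
  have hJk' : (2 : ℝ) * k ≤ J * k := by exact_mod_cast hJk
  have hk' : (1 : ℝ) ≤ k := by exact_mod_cast hk
  have hhk : (h : ℝ) ≤ k := by exact_mod_cast hh
  have hcast : ((J * k - h : ℕ) : ℝ) = J * k - h := by
    rw [Nat.cast_sub (by omega), Nat.cast_mul]
  have hexp : (k : ℝ) + ν - h - ((J * k - h : ℕ) : ℝ) = ν - ((J : ℝ) - 1) * k := by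
    rw [hcast]
    ring
  have hchoose : |Ring.choose ((k : ℝ) + ν - h) (J * k - h)| ≤ 2 ^ ((J + 2) * k) := by
    refine (abs_choose_le _ (k + 1) _ ?_).trans (pow_le_pow_right₀ one_le_two ?_)
    · rw [abs_of_nonneg (by linarith)]
      push_cast
      linarith [(Nat.cast_nonneg h : (0 : ℝ) ≤ h)]
    · rw [add_mul]
      omega
  have hpow : x ^ (J * k - h) ≤ ρ ^ (J * k) :=
    (pow_le_pow_left₀ hx₀ (by linarith) _).trans (pow_le_pow_right₀ (by linarith) (by omega))
  calc |binomialRemainder N (k + ν - h) (J * k - h) x|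
      ≤ |Ring.choose ((k : ℝ) + ν - h) (J * k - h)| * N ^ (ν - ((J : ℝ) - 1) * k) *
          x ^ (J * k - h) :=
        hexp ▸ abs_binomialRemainder_le hN _ (by linarith) hx₀
    _ ≤ 2 ^ ((J + 2) * k) * N ^ (ν - ((J : ℝ) - 1) * k) * ρ ^ (J * k) := by gcongr
    _ = _ := by ring

theorem card_mul_succ_mul_le_padeGrowth_pow {J : ℕ} (hk : 1 ≤ k) (hρ : 0 ≤ ρ) :
    (J : ℝ) * ((k + 1) * (((3 * (2 * ρ) ^ J) ^ (4 * (J + 1))) ^ k * (2 * ρ) ^ k *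
      (2 ^ (3 * k) * (2 ^ ((J + 2) * k) * ρ ^ (J * k))))) ≤ padeGrowth J ρ ^ k := by
  have hJ : (J : ℝ) ≤ (2 ^ J) ^ k := by
    exact_mod_cast Nat.lt_two_pow_self.le.trans (Nat.le_self_pow (by omega) (2 ^ J))
  calc _ ≤ (2 ^ J) ^ k * (2 ^ k * (((3 * (2 * ρ) ^ J) ^ (4 * (J + 1))) ^ k * (2 * ρ) ^ k *
        (2 ^ (3 * k) * (2 ^ ((J + 2) * k) * ρ ^ (J * k))))) := by
        gcongr
        exact natCast_add_one_le_two_pow k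
    _ = (2 ^ J * 2 ^ J * 2 ^ 7 * ρ ^ (J + 1) * (3 * (2 * ρ) ^ J) ^ (4 * (J + 1))) ^ k := by
        simp only [pow_mul _ _ k, ← mul_pow _ _ k]
        ring
    _ ≤ padeGrowth J ρ ^ k := by
        have htwo : (2 : ℝ) ^ (2 * J + 10) = 2 ^ J * 2 ^ J * 2 ^ 10 := by ring
        rw [padeGrowth, htwo]
        gcongr <;> norm_num

theorem abs_sum_padeMatrix_mul_rpow_le (hν₀ : 0 < ν) (hν₁ : ν < 1) (hk : 1 ≤ k)
    (hinj : Function.Injective a) (ha₀ : ∀ j, 0 ≤ a j) (ha : ∀ j, a j + 1 ≤ ρ) (hN : 0 < N)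
    (hJ : 2 ≤ Fintype.card ι) (i : ι) :
    |∑ j, padeMatrix a N ν k i j * (N + a j) ^ ν| ≤
      padeGrowth (Fintype.card ι) ρ ^ k * N ^ (ν - ((Fintype.card ι : ℝ) - 1) * k) := by
  have hρ : 1 ≤ ρ := by linarith [ha₀ i, ha i]
  rw [sum_padeMatrix_mul_rpow hinj (fun j => add_pos_of_pos_of_nonneg hN (ha₀ j)) (by omega)]
  set J := Fintype.card ι with hJ_def
  set B := ((3 * (2 * ρ) ^ J) ^ (4 * (J + 1))) ^ k * (2 * ρ) ^ k *
    (2 ^ (3 * k) * (2 ^ ((J + 2) * k) * ρ ^ (J * k) * N ^ (ν - ((J : ℝ) - 1) * k))) with hB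
  have hterm : ∀ j, ∀ h ∈ range (k + 1),
      |dividedDifference a k i (nodeIdempotent a (k + 1) j * (X - C (a j)) ^ h) *
        (Ring.choose (k + ν) h * binomialRemainder N (k + ν - h) (J * k - h) (a j))| ≤ B := by
    intro j h hh
    have hhk : h ≤ k := Nat.lt_succ_iff.1 (mem_range.1 hh)
    have hweight := abs_dividedDifference_nodeIdempotent_mul_le ha₀ ha hk i j
      ((coeffNorm_X_sub_C_pow_le (ha₀ j) (ha j) h).trans
        (pow_le_pow_right₀ (by linarith) hhk))
    have hchoose := abs_choose_add_le hν₀ hν₁ hk hhk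
    have hremainder := abs_binomialRemainder_shift_le hν₀ hν₁ hk hJ hhk (ha₀ j) (ha j) hN
    rw [abs_mul, abs_mul]
    exact mul_le_mul hweight (mul_le_mul hchoose hremainder (abs_nonneg _) (by positivity))
      (by positivity) (by positivity)
  calc _ ≤ ∑ _j : ι, ∑ _h ∈ range (k + 1), B :=
        (abs_sum_le_sum_abs _ _).trans <| sum_le_sum fun j _ =>
          (abs_sum_le_sum_abs _ _).trans (sum_le_sum (hterm j))
    _ = (J : ℝ) * ((k + 1) * (((3 * (2 * ρ) ^ J) ^ (4 * (J + 1))) ^ k * (2 * ρ) ^ k *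
          (2 ^ (3 * k) * (2 ^ ((J + 2) * k) * ρ ^ (J * k))))) *
            N ^ (ν - ((J : ℝ) - 1) * k) := by
        simp only [sum_const, card_range, card_univ, nsmul_eq_mul, Nat.cast_add, Nat.cast_one]
        rw [hB, ← hJ_def]
        ring
    _ ≤ _ := by
        gcongr
        exact card_mul_succ_mul_le_padeGrowth_pow hk (by linarith)

theorem padeGrowth_eq (J : ℕ) (ρ : ℝ) : padeGrowth J ρ =
    2 ^ (2 * J + 10) * (3 * 2 ^ J) ^ (4 * (J + 1)) * ρ ^ (J + 1 + J * (4 * (J + 1))) := by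
  rw [padeGrowth, mul_pow 2 ρ J, ← mul_assoc 3, mul_pow _ (ρ ^ J), ← pow_mul, pow_add ρ]
  ring

theorem exists_sq_mul_padeGrowth_le (J p : ℕ) : ∃ c : ℕ, 1 ≤ c ∧
    ∀ ρ : ℝ, 1 ≤ ρ → (p : ℝ) ^ 2 * padeGrowth J ρ ≤ (c * ρ) ^ c := by
  set c₁ : ℕ := p ^ 2 * (2 ^ (2 * J + 10) * (3 * 2 ^ J) ^ (4 * (J + 1))) with hc₁
  set c : ℕ := c₁ + (J + 1 + J * (4 * (J + 1)))
  refine ⟨c, by omega, fun ρ hρ => ?_⟩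
  have hc_one : (1 : ℝ) ≤ c := by exact_mod_cast (by omega : 1 ≤ c)
  calc (p : ℝ) ^ 2 * padeGrowth J ρ = c₁ * ρ ^ (J + 1 + J * (4 * (J + 1))) := by
        rw [padeGrowth_eq, hc₁]
        push_cast
        ring
    _ ≤ (c : ℝ) ^ c * ρ ^ c := by
        gcongr
        · exact (by exact_mod_cast (by omega : c₁ ≤ c) : (c₁ : ℝ) ≤ c).trans
            (le_self_pow₀ hc_one (by omega))
        · omega
    _ = (c * ρ) ^ c := (mul_pow _ _ _).symm

theorem abs_sum_mul_le_of_approx {ι : Type*} [Fintype ι] {P x : ι → ℝ} {v : ι → ℤ}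
    {l η A B : ℝ} (hl : 0 ≤ l) (hA : ∀ j, |P j| ≤ A) (hB : |∑ j, P j * x j| ≤ B)
    (hη : ∀ j, |(v j : ℝ) - l * x j| ≤ η) :
    |∑ j, P j * v j| ≤ l * B + Fintype.card ι * (A * η) := by
  have hsplit : ∑ j, P j * v j = l * ∑ j, P j * x j + ∑ j, P j * (v j - l * x j) := by
    rw [mul_sum, ← sum_add_distrib]
    exact sum_congr rfl fun j _ => by ring
  rw [hsplit]
  refine (abs_add_le _ _).trans (add_le_add ?_ ?_)
  · rw [abs_mul, abs_of_nonneg hl]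
    gcongr
  · calc |∑ j, P j * (v j - l * x j)| ≤ ∑ _j : ι, A * η :=
          (abs_sum_le_sum_abs _ _).trans <| sum_le_sum fun j _ => by
            rw [abs_mul]
            exact mul_le_mul (hA j) (hη j) (abs_nonneg _) ((abs_nonneg _).trans (hA j))
      _ = Fintype.card ι * (A * η) := by simp

theorem exists_one_le_pow_mul_abs_padeMatrix_form {p : ℕ} (hp : p.Prime) {b : ι → ℕ}
    (hb : Function.Injective b) {M : ℕ} (hM : 0 < M) (k : ℕ) {v : ι → ℤ} (hv : v ≠ 0) :
    ∃ i, 1 ≤ (p : ℝ) ^ (2 * k) *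
      |∑ j, padeMatrix (fun l => (b l : ℝ)) (M : ℝ) (1 / (p : ℝ)) k i j * v j| := by
  have hp₁ : (1 : ℝ) < p := by exact_mod_cast hp.one_lt
  choose P hP using exists_intCast_eq_pow_mul_padeMatrix hp b M k
  obtain ⟨i, hi⟩ : ∃ i,
      ∑ j, padeMatrix (fun l => (b l : ℝ)) (M : ℝ) (1 / (p : ℝ)) k i j * v j ≠ 0 := by
    by_contra! hzero
    refine hv (funext fun j => ?_)
    have hreal := eq_zero_of_padeMatrix_mulVec_eq_zero (Nat.cast_injective.comp hb)
      (fun l => (add_pos_of_pos_of_nonneg (Nat.cast_pos.2 hM) (Nat.cast_nonneg _)).ne')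
      (by positivity) ((div_lt_one (by positivity)).2 hp₁)
      (funext hzero : _ = (0 : ι → ℝ))
    exact Int.cast_eq_zero.1 (congrFun hreal j)
  refine ⟨i, ?_⟩
  have hintegral : ((∑ j, P i j * v j : ℤ) : ℝ) = p ^ (2 * k) *
      ∑ j, padeMatrix (fun l => (b l : ℝ)) (M : ℝ) (1 / (p : ℝ)) k i j * v j := by
    push_cast
    rw [mul_sum]
    exact sum_congr rfl fun j _ => by rw [hP, mul_assoc]
  have hne : ∑ j, P i j * v j ≠ 0 := fun h => by
    rw [h, Int.cast_zero, eq_comm, mul_eq_zero] at hintegral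
    exact hintegral.elim (by positivity) hi
  rw [← abs_of_pos (by positivity : (0 : ℝ) < p ^ (2 * k)), ← abs_mul, ← hintegral]
  exact_mod_cast Int.one_le_abs hne

end PadeMatrix

/- A nonsingular integral matrix sends `v ≠ 0` to a vector with an entry of size at least `1`. -/
theorem one_le_padeGrowth_mul {ι : Type*} [Fintype ι] {p : ℕ} (hp : p.Prime)
    (hJ : 2 ≤ Fintype.card ι) {H N : ℕ} {b : ι → ℕ} (hb : Function.Injective b)
    (hbH : ∀ j, b j ≤ H) (hN : H + 1 ≤ N) {k : ℕ} (hk : 1 ≤ k) {v : ι → ℤ} (hv : v ≠ 0) {l η : ℝ}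
    (hl : 0 ≤ l)
    (hη : ∀ j, |(v j : ℝ) - l * ((N : ℝ) + b j) ^ (1 / (p : ℝ))| ≤ η) :
    1 ≤ ((p : ℝ) ^ 2 * padeGrowth (Fintype.card ι) ((H : ℝ) + 1)) ^ k *
      (l * (N : ℝ) ^ (1 / (p : ℝ) - ((Fintype.card ι : ℝ) - 1) * k) +
        Fintype.card ι * (N : ℝ) ^ k * η) := by
  classical
  set ρ : ℝ := (H : ℝ) + 1
  set κ := padeGrowth (Fintype.card ι) ρ
  have hp₁ : (1 : ℝ) < p := by exact_mod_cast hp.one_lt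
  have hν₀ : 0 < 1 / (p : ℝ) := by positivity
  have hν₁ : 1 / (p : ℝ) < 1 := (div_lt_one (by positivity)).2 hp₁
  have hb₀ : ∀ j, (0 : ℝ) ≤ b j := fun j => Nat.cast_nonneg _
  have hbρ : ∀ j, (b j : ℝ) + 1 ≤ ρ := fun j => by
    have := hbH j
    simp only [ρ]
    gcongr
  have hNρ : ρ ≤ N := by
    simp only [ρ]
    exact_mod_cast hN
  have hN₀ : 0 < N := by omega
  obtain ⟨i, hi⟩ := exists_one_le_pow_mul_abs_padeMatrix_form hp hb hN₀ k hv
  calc (1 : ℝ) ≤ (p : ℝ) ^ (2 * k) * (l * (κ ^ k * (N : ℝ) ^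
          (1 / (p : ℝ) - ((Fintype.card ι : ℝ) - 1) * k)) + Fintype.card ι * ((κ * N) ^ k * η)) :=
        hi.trans <| mul_le_mul_of_nonneg_left (abs_sum_mul_le_of_approx hl
          (abs_padeMatrix_le hν₀ hν₁ hk hb₀ hbρ hNρ i)
          (abs_sum_padeMatrix_mul_rpow_le hν₀ hν₁ hk (Nat.cast_injective.comp hb) hb₀ hbρ
            (by positivity) hJ i) hη) (by positivity)
    _ = ((p : ℝ) ^ 2 * κ) ^ k * (l * (N : ℝ) ^ (1 / (p : ℝ) - ((Fintype.card ι : ℝ) - 1) * k) +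
          Fintype.card ι * (N : ℝ) ^ k * η) := by
        rw [mul_pow, mul_pow, pow_mul]
        ring

theorem exists_pade_lower_bound (ι : Type*) [Fintype ι] {p : ℕ} (hp : p.Prime)
    (hJ : 2 ≤ Fintype.card ι) :
    ∃ c : ℕ, 1 ≤ c ∧ ∀ (H N : ℕ) (b : ι → ℕ), Function.Injective b → (∀ j, b j ≤ H) →
      H + 1 ≤ N → ∀ k : ℕ, 1 ≤ k → ∀ (v : ι → ℤ) (l η : ℝ), 0 ≤ l → v ≠ 0 →
      (∀ j, |(v j : ℝ) - l * ((N : ℝ) + b j) ^ (1 / (p : ℝ))| ≤ η) →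
      1 ≤ ((c * ((H : ℝ) + 1)) ^ c) ^ k *
        (l * (N : ℝ) ^ (1 / (p : ℝ) - ((Fintype.card ι : ℝ) - 1) * k) +
          Fintype.card ι * (N : ℝ) ^ k * η) := by
  obtain ⟨c, hc, hgrowth⟩ := exists_sq_mul_padeGrowth_le (Fintype.card ι) p
  refine ⟨c, hc, fun H N b hb hbH hN k hk v l η hl hv hη => ?_⟩
  refine (one_le_padeGrowth_mul hp hJ hb hbH hN hk hv hl hη).trans ?_
  obtain ⟨j₀, -⟩ := Function.ne_iff.1 hv
  have hη₀ : 0 ≤ η := (abs_nonneg _).trans (hη j₀)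
  have hκ : 0 ≤ padeGrowth (Fintype.card ι) ((H : ℝ) + 1) := by
    rw [padeGrowth]
    positivity
  gcongr
  exact hgrowth _ (by simp)

/-! ### Trace-anisotropic algebras -/

section TraceAnisotropic

/-- No nonzero element of the `R`-algebra `A` has both its trace and the trace of its `q`-th power
equal to zero. -/
def TraceAnisotropic (q : ℕ) (R A : Type*) [CommRing R] [CommRing A] [Algebra R A] : Prop :=
  ∀ x : A, Algebra.trace R A x = 0 → Algebra.trace R A (x ^ q) = 0 → x = 0

theorem TraceAnisotropic.of_algEquiv {q : ℕ} {R A B : Type*} [CommRing R] [CommRing A] [CommRing B]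
    [Algebra R A] [Algebra R B] (hA : TraceAnisotropic q R A) (e : B ≃ₐ[R] A) :
    TraceAnisotropic q R B := fun x h₁ hq => by
  refine (map_eq_zero_iff e e.injective).1 (hA (e x) ?_ ?_)
  · rwa [Algebra.trace_eq_of_algEquiv]
  · rwa [← map_pow, Algebra.trace_eq_of_algEquiv]

theorem trace_pi {R ι : Type*} [CommRing R] [Fintype ι] {A : ι → Type*} [∀ i, CommRing (A i)]
    [∀ i, Algebra R (A i)] [∀ i, Module.Free R (A i)] [∀ i, Module.Finite R (A i)]
    (x : ∀ i, A i) :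
    Algebra.trace R (∀ i, A i) x = ∑ i, Algebra.trace R (A i) (x i) := by
  classical
  let b := fun i => Module.Free.chooseBasis R (A i)
  rw [Algebra.trace_eq_matrix_trace (Pi.basis b), Matrix.trace, Fintype.sum_sigma]
  refine Finset.sum_congr rfl fun i _ => ?_
  rw [Algebra.trace_eq_matrix_trace (b i), Matrix.trace]
  refine Finset.sum_congr rfl fun j _ => ?_
  simp [Algebra.leftMulMatrix_eq_repr_mul, Pi.basis_repr, Pi.basis_apply]

/-- No nonzero vector `c` satisfies both `∑ i, w i * c i = 0` and `∑ i, w i * c i ^ q = 0`. -/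
def WeightAnisotropic (q : ℕ) {k ι : Type*} [Field k] [Fintype ι] (w : ι → k) : Prop :=
  ∀ c : ι → k, ∑ i, w i * c i = 0 → ∑ i, w i * c i ^ q = 0 → c = 0

end TraceAnisotropic

/-! ### Ramified extensions of Hahn series fields -/

section HahnSeries

open HahnSeries

theorem exists_inclusion_add_out {G : Type*} [AddCommGroup G] {Δ Γ : AddSubgroup G} (hΔΓ : Δ ≤ Γ)
    (x : Γ) : ∃ d : Δ,
      AddSubgroup.inclusion hΔΓ d + (QuotientAddGroup.mk x : Γ ⧸ Δ.addSubgroupOf Γ).out = x := by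
  obtain ⟨d, hd⟩ := QuotientAddGroup.mk_out_eq_add (Δ.addSubgroupOf Γ) x
  refine ⟨-⟨d.1, d.2⟩, ?_⟩
  rw [hd]
  ext
  simp

variable {k : Type*} [Field k] {G : Type*} [AddCommGroup G] [LinearOrder G] [IsOrderedAddMonoid G]

variable (k) in
/-- The extension by zero of Hahn series with exponents in `Γ`. -/
noncomputable def hahnSubtype (Γ : AddSubgroup G) : HahnSeries Γ k →+* HahnSeries G k :=
  embDomainRingHom Γ.subtype Subtype.val_injective fun _ _ => Iff.rfl

theorem coeff_hahnSubtype {Γ : AddSubgroup G} (f : HahnSeries Γ k) (x : Γ) :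
    (hahnSubtype k Γ f).coeff x = f.coeff x :=
  embDomain_coeff (f := ⟨⟨Γ.subtype, Subtype.val_injective⟩, Iff.rfl⟩)

theorem mem_of_coeff_hahnSubtype_ne_zero {Γ : AddSubgroup G} {f : HahnSeries Γ k} {x : G}
    (hx : (hahnSubtype k Γ f).coeff x ≠ 0) : x ∈ Γ := by
  by_contra hxΓ
  refine hx (embDomain_of_notMem_range (f := ⟨⟨Γ.subtype, Subtype.val_injective⟩, Iff.rfl⟩) ?_)
  rintro ⟨y, rfl⟩
  exact hxΓ y.2

variable {Δ Γ : AddSubgroup G} [hΔΓ : Fact (Δ ≤ Γ)]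

/-- Hahn series with exponents in `Δ` act on those with exponents in `Γ` through extension by zero.
The inclusion `Δ ≤ Γ` is a `Fact` so that it can be found by instance search. -/
noncomputable local instance hahnAlgebra : Algebra (HahnSeries Δ k) (HahnSeries Γ k) :=
  (embDomainRingHom (AddSubgroup.inclusion hΔΓ.out) (AddSubgroup.inclusion_injective _)
    fun _ _ => Iff.rfl).toAlgebra

theorem coeff_algebraMap_inclusion (l : HahnSeries Δ k) (d : Δ) :
    (algebraMap _ (HahnSeries Γ k) l).coeff (AddSubgroup.inclusion hΔΓ.out d) = l.coeff d :=
  embDomain_coeff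
    (f := ⟨⟨AddSubgroup.inclusion hΔΓ.out, AddSubgroup.inclusion_injective _⟩, Iff.rfl⟩)

theorem mem_of_coeff_algebraMap_ne_zero {l : HahnSeries Δ k} {x : Γ}
    (hx : (algebraMap _ (HahnSeries Γ k) l).coeff x ≠ 0) : x ∈ Δ.addSubgroupOf Γ := by
  by_contra hxΔ
  refine hx (embDomain_of_notMem_range
    (f := ⟨⟨AddSubgroup.inclusion hΔΓ.out, AddSubgroup.inclusion_injective _⟩, Iff.rfl⟩) ?_)
  rintro ⟨y, rfl⟩
  exact hxΔ y.2

/-- The part of `f` with exponents in the coset `Δ + x`, divided by the monomial of exponent `x`. -/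
noncomputable def hahnCosetPart (x : Γ) (f : HahnSeries Γ k) : HahnSeries Δ k where
  coeff d := f.coeff (AddSubgroup.inclusion hΔΓ.out d + x)
  isPWO_support' u := by
    obtain ⟨m, n, hmn, hle⟩ := f.isPWO_support fun n =>
      ⟨AddSubgroup.inclusion hΔΓ.out (u n) + x, (u n).2⟩
    exact ⟨m, n, hmn, (add_le_add_iff_right x).1 (show _ + x ≤ _ + x from hle)⟩

theorem coeff_smul_single (l : HahnSeries Δ k) (x y : Γ) :
    (l • (single x (1 : k) : HahnSeries Γ k)).coeff y =
      (algebraMap _ (HahnSeries Γ k) l).coeff (y - x) := by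
  rw [Algebra.smul_def, coeff_mul_single, mul_one]

section CosetBasis

variable [Fintype (Γ ⧸ Δ.addSubgroupOf Γ)]

theorem coeff_sum_smul_single (l : Γ ⧸ Δ.addSubgroupOf Γ → HahnSeries Δ k)
    (c : Γ ⧸ Δ.addSubgroupOf Γ) (d : Δ) :
    (∑ c', l c' • (single c'.out (1 : k) : HahnSeries Γ k)).coeff
      (AddSubgroup.inclusion hΔΓ.out d + c.out) = (l c).coeff d := by
  rw [HahnSeries.coeff_sum, Finset.sum_eq_single c]
  · rw [coeff_smul_single, add_sub_cancel_right, coeff_algebraMap_inclusion]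
  · intro c' _ hc'
    by_contra hne
    rw [coeff_smul_single] at hne
    have hmem := mem_of_coeff_algebraMap_ne_zero hne
    have hd : AddSubgroup.inclusion hΔΓ.out d ∈ Δ.addSubgroupOf Γ := d.2
    refine hc' ?_
    rw [← Quotient.out_eq' c, ← Quotient.out_eq' c']
    refine QuotientAddGroup.eq.2 ?_
    convert sub_mem hmem hd using 1
    abel
  · simp

variable (k Δ Γ) in
/-- The basis of Hahn series over `Γ` as a module over those over `Δ` that consists of the monomials
whose exponents represent the cosets of `Δ`. -/
noncomputable def hahnCosetBasis :
    Module.Basis (Γ ⧸ Δ.addSubgroupOf Γ) (HahnSeries Δ k) (HahnSeries Γ k) :=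
  .ofEquivFun <| .symm
    { toFun := fun l => ∑ c, l c • single c.out 1
      map_add' := fun l l' => by simp only [Pi.add_apply, add_smul, Finset.sum_add_distrib]
      map_smul' := fun a l => by
        simp only [Pi.smul_apply, smul_eq_mul, mul_smul, Finset.smul_sum, RingHom.id_apply]
      invFun := fun f c => hahnCosetPart c.out f
      left_inv := fun l => by
        ext c d
        exact coeff_sum_smul_single l c d
      right_inv := fun f => by
        ext x
        obtain ⟨d, hd⟩ := exists_inclusion_add_out hΔΓ.out x
        rw [← hd]
        exact coeff_sum_smul_single _ _ d }

theorem hahnCosetBasis_apply (c : Γ ⧸ Δ.addSubgroupOf Γ) :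
    hahnCosetBasis k Δ Γ c = single c.out 1 := by
  classical
  simp [hahnCosetBasis, Module.Basis.ofEquivFun, Pi.single_apply]

theorem coeff_hahnCosetBasis_repr (f : HahnSeries Γ k) (c : Γ ⧸ Δ.addSubgroupOf Γ) (d : Δ) :
    ((hahnCosetBasis k Δ Γ).repr f c).coeff d =
      f.coeff (AddSubgroup.inclusion hΔΓ.out d + c.out) :=
  rfl

end CosetBasis

variable (k Δ Γ) in
theorem finrank_hahnSeries [Finite (Γ ⧸ Δ.addSubgroupOf Γ)] :
    Module.finrank (HahnSeries Δ k) (HahnSeries Γ k) = Δ.relIndex Γ := by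
  have := Fintype.ofFinite (Γ ⧸ Δ.addSubgroupOf Γ)
  rw [Module.finrank_eq_card_basis (hahnCosetBasis k Δ Γ), AddSubgroup.relIndex,
    AddSubgroup.index_eq_card, Nat.card_eq_fintype_card]

theorem coeff_trace_hahnSeries [Finite (Γ ⧸ Δ.addSubgroupOf Γ)] (f : HahnSeries Γ k) (d : Δ) :
    (Algebra.trace (HahnSeries Δ k) (HahnSeries Γ k) f).coeff d =
      Δ.relIndex Γ * f.coeff (AddSubgroup.inclusion hΔΓ.out d) := by
  classical
  have := Fintype.ofFinite (Γ ⧸ Δ.addSubgroupOf Γ)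
  rw [Algebra.trace_eq_matrix_trace (hahnCosetBasis k Δ Γ), Matrix.trace, HahnSeries.coeff_sum]
  simp only [Matrix.diag_apply, Algebra.leftMulMatrix_eq_repr_mul, coeff_hahnCosetBasis_repr,
    hahnCosetBasis_apply, coeff_mul_single_add, mul_one, Finset.sum_const, Finset.card_univ,
    nsmul_eq_mul]
  rw [AddSubgroup.relIndex, AddSubgroup.index_eq_card, Nat.card_eq_fintype_card]

theorem coeff_mul_add_of_le_orderTop {x y : HahnSeries G k} {a b : G} (hx : a ≤ x.orderTop)
    (hy : b ≤ y.orderTop) : (x * y).coeff (a + b) = x.coeff a * y.coeff b := by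
  rcases hx.lt_or_eq with hxlt | hxeq
  · rw [coeff_eq_zero_of_lt_orderTop hxlt, zero_mul]
    refine coeff_eq_zero_of_lt_orderTop (lt_of_lt_of_le ?_ orderTop_add_le_mul)
    exact WithTop.add_lt_add_of_lt_of_le WithTop.coe_ne_top hxlt hy
  rcases hy.lt_or_eq with hylt | hyeq
  · rw [coeff_eq_zero_of_lt_orderTop hylt, mul_zero]
    refine coeff_eq_zero_of_lt_orderTop (lt_of_lt_of_le ?_ orderTop_add_le_mul)
    exact WithTop.add_lt_add_of_le_of_lt WithTop.coe_ne_top hx hylt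
  have hx0 : x ≠ 0 := orderTop_ne_top.1 (hxeq ▸ WithTop.coe_ne_top)
  have hy0 : y ≠ 0 := orderTop_ne_top.1 (hyeq ▸ WithTop.coe_ne_top)
  rw [← order_eq_orderTop_of_ne_zero hx0, WithTop.coe_inj] at hxeq
  rw [← order_eq_orderTop_of_ne_zero hy0, WithTop.coe_inj] at hyeq
  rw [hxeq, hyeq, coeff_mul_order_add_order, leadingCoeff_eq, leadingCoeff_eq]

theorem coeff_pow_nsmul_of_le_orderTop {x : HahnSeries G k} {a : G} (hx : a ≤ x.orderTop) (n : ℕ) :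
    (x ^ n).coeff (n • a) = x.coeff a ^ n := by
  induction n with
  | zero => simp
  | succ n ih =>
    have hpow : (n • a : G) ≤ (x ^ n).orderTop :=
      (nsmul_le_nsmul_right hx n).trans orderTop_nsmul_le_orderTop_pow
    rw [pow_succ, succ_nsmul, coeff_mul_add_of_le_orderTop hpow hx, ih, pow_succ]

variable {ι : Type*} [Fintype ι]

/- If the lowest exponent `γ` of the `D i` is not in `Δ`, then it occurs in only one `D i`, and the
coefficient of exponent `q • γ ∈ Δ` in the second sum has a single nonzero term. -/
theorem WeightAnisotropic.eq_zero_of_hahnSeries {q : ℕ} {w : ι → k} (hw : WeightAnisotropic q w)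
    (hq : q ≠ 0) (hw0 : ∀ i, w i ≠ 0) {Δ : AddSubgroup G} {Γ : ι → AddSubgroup G}
    (hqΓ : ∀ i, ∀ x ∈ Γ i, q • x ∈ Δ) (hΓ : Pairwise fun i j => Γ i ⊓ Γ j ≤ Δ)
    {D : ι → HahnSeries G k} (hD : ∀ i x, (D i).coeff x ≠ 0 → x ∈ Γ i)
    (hsum : ∀ d ∈ Δ, ∑ i, w i * (D i).coeff d = 0)
    (hsum_pow : ∀ d ∈ Δ, ∑ i, w i * (D i ^ q).coeff d = 0) : D = 0 := by
  by_contra hne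
  obtain ⟨j, hj⟩ := Function.ne_iff.1 hne
  have : Nonempty ι := ⟨j⟩
  obtain ⟨i₀, hmin⟩ := Finite.exists_min fun i => (D i).orderTop
  have hD₀ : D i₀ ≠ 0 := fun h => hj <| show D j = 0 by
    simpa only [h, orderTop_zero, top_le_iff, orderTop_eq_top] using hmin j
  set γ := (D i₀).order
  have hle (i : ι) : γ ≤ (D i).orderTop := order_eq_orderTop_of_ne_zero hD₀ ▸ hmin i
  have hγ : (D i₀).coeff γ ≠ 0 := coeff_order_eq_zero.not.2 hD₀
  have hlow : ∑ i, w i * (D i).coeff γ ^ q = 0 := by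
    rw [← hsum_pow _ (hqΓ i₀ γ (hD _ _ hγ))]
    exact Finset.sum_congr rfl fun i _ => by rw [coeff_pow_nsmul_of_le_orderTop (hle i)]
  by_cases hγΔ : γ ∈ Δ
  · exact hγ (congrFun (hw _ (hsum γ hγΔ) hlow) i₀)
  · have hcoeff (i : ι) (hi : i ≠ i₀) : (D i).coeff γ = 0 := by
      by_contra h
      exact hγΔ (hΓ hi ⟨hD _ _ h, hD _ _ hγ⟩)
    rw [Finset.sum_eq_single i₀ (fun i _ hi => ?_) (by simp)] at hlow
    · exact mul_ne_zero (hw0 i₀) (pow_ne_zero q hγ) hlow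
    · rw [hcoeff i hi, zero_pow hq, mul_zero]

theorem traceAnisotropic_hahnSeries {q : ℕ} (hq : q ≠ 0) {Δ : AddSubgroup G} {Γ : ι → AddSubgroup G}
    [∀ i, Fact (Δ ≤ Γ i)] [∀ i, Finite (Γ i ⧸ Δ.addSubgroupOf (Γ i))]
    (hw : WeightAnisotropic q fun i => (Δ.relIndex (Γ i) : k))
    (hw0 : ∀ i, (Δ.relIndex (Γ i) : k) ≠ 0)
    (hqΓ : ∀ i, ∀ x ∈ Γ i, q • x ∈ Δ) (hΓ : Pairwise fun i j => Γ i ⊓ Γ j ≤ Δ) :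
    TraceAnisotropic q (HahnSeries Δ k) (∀ i, HahnSeries (Γ i) k) := by
  have (i : ι) := Fintype.ofFinite (Γ i ⧸ Δ.addSubgroupOf (Γ i))
  have (i : ι) : Module.Finite (HahnSeries Δ k) (HahnSeries (Γ i) k) :=
    .of_basis (hahnCosetBasis k Δ (Γ i))
  have (i : ι) : Module.Free (HahnSeries Δ k) (HahnSeries (Γ i) k) :=
    .of_basis (hahnCosetBasis k Δ (Γ i))
  have hcoeff (x : ∀ i, HahnSeries (Γ i) k)
      (hx : Algebra.trace (HahnSeries Δ k) (∀ i, HahnSeries (Γ i) k) x = 0) (d : G) (hd : d ∈ Δ) :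
      ∑ i, (Δ.relIndex (Γ i) : k) * (hahnSubtype k (Γ i) (x i)).coeff d = 0 := by
    have htrace := congrArg (fun f => f.coeff ⟨d, hd⟩) hx
    simp only [trace_pi, HahnSeries.coeff_sum, coeff_trace_hahnSeries, coeff_zero] at htrace
    rw [← htrace]
    exact Finset.sum_congr rfl fun i _ => by rw [← coeff_hahnSubtype]; rfl
  intro x h₁ h₂
  have hzero := hw.eq_zero_of_hahnSeries (D := fun i => hahnSubtype k (Γ i) (x i)) hq hw0 hqΓ hΓ
    (fun _ _ => mem_of_coeff_hahnSubtype_ne_zero) (hcoeff x h₁)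
    fun d hd => by simpa only [map_pow, Pi.pow_apply] using hcoeff _ h₂ d hd
  exact funext fun i => (map_eq_zero (hahnSubtype k (Γ i))).1 (congrFun hzero i)

section KernelLattice

variable {H ι : Type*} [AddCommGroup H] {M : ι → Type*} [∀ i, AddCommGroup (M i)] [DecidableEq ι]
  (f : H →+ ∀ i, M i)

/-- The elements of `H` whose image under `f` is concentrated in the `i`-th component. -/
def componentPreimage (i : ι) : AddSubgroup H :=
  (AddMonoidHom.single M i).range.comap f

theorem ker_le_componentPreimage (i : ι) : f.ker ≤ componentPreimage f i := fun _ hx =>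
  ⟨0, (map_zero _).trans hx.symm⟩

theorem nsmul_mem_ker_of_mem_componentPreimage {q : ℕ} {i : ι} (hM : ∀ y : M i, q • y = 0) {x : H}
    (hx : x ∈ componentPreimage f i) : q • x ∈ f.ker := by
  obtain ⟨y, hy⟩ := hx
  rw [AddMonoidHom.mem_ker, map_nsmul, ← hy, ← map_nsmul, hM, map_zero]

theorem pairwise_componentPreimage_inf_le_ker :
    Pairwise fun i j => componentPreimage f i ⊓ componentPreimage f j ≤ f.ker := by
  rintro i j hij x ⟨⟨y, hy⟩, ⟨z, hz⟩⟩
  have hy0 : y = 0 := by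
    simpa [Pi.single_eq_of_ne hij] using congrFun (hy.trans hz.symm) i
  rw [AddMonoidHom.mem_ker, ← hy, hy0, map_zero]

theorem relIndex_ker_componentPreimage (hf : Function.Surjective f) (i : ι) :
    f.ker.relIndex (componentPreimage f i) = Nat.card (M i) := by
  rw [AddSubgroup.relIndex_ker, componentPreimage, AddSubgroup.map_comap_eq_self_of_surjective hf]
  exact (Nat.card_congr (AddMonoidHom.ofInjective (Pi.single_injective i)).toEquiv).symm

end KernelLattice

theorem exists_traceAnisotropic_pi_of_surjective {ι : Type} [Fintype ι] {M : ι → Type}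
    [∀ i, AddCommGroup (M i)] [∀ i, Finite (M i)] {k : Type u} [Field k] [CharZero k] {G : Type}
    [AddCommGroup G] [LinearOrder G] [IsOrderedAddMonoid G] (f : G →+ ∀ i, M i)
    (hf : Function.Surjective f) {q : ℕ} (hq : q ≠ 0) (hM : ∀ i, ∀ y : M i, q • y = 0)
    (hw : WeightAnisotropic q fun i => (Nat.card (M i) : k)) :
    ∃ (L : Type u) (E : ι → Type u) (_ : Field L) (_ : ∀ i, Field (E i)) (_ : Algebra k L)
      (_ : ∀ i, Algebra L (E i)), (∀ i, FiniteDimensional L (E i)) ∧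
        (∀ i, Module.finrank L (E i) = Nat.card (M i)) ∧ TraceAnisotropic q L (∀ i, E i) := by
  classical
  have hindex := relIndex_ker_componentPreimage f hf
  have (i : ι) : Fact (f.ker ≤ componentPreimage f i) := ⟨ker_le_componentPreimage f i⟩
  have (i : ι) : Fintype (componentPreimage f i ⧸ f.ker.addSubgroupOf (componentPreimage f i)) :=
    AddSubgroup.fintypeOfIndexNeZero ((hindex i).trans_ne Nat.card_pos.ne')
  refine ⟨HahnSeries f.ker k, fun i => HahnSeries (componentPreimage f i) k, inferInstance,
    inferInstance, HahnSeries.C.toAlgebra, fun i => hahnAlgebra,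
    fun i => .of_basis (hahnCosetBasis k f.ker _), fun i => ?_,
    traceAnisotropic_hahnSeries hq ?_ ?_ ?_ ?_⟩
  · rw [finrank_hahnSeries, hindex]
  · simpa only [hindex] using hw
  · simpa only [hindex, Nat.cast_ne_zero] using fun i => Nat.card_pos.ne'
  · exact fun i x => nsmul_mem_ker_of_mem_componentPreimage f (hM i)
  · exact pairwise_componentPreimage_inf_le_ker f

theorem exists_traceAnisotropic_pi {ι : Type} [Fintype ι] [LinearOrder ι] {k : Type u} [Field k]
    [CharZero k] {q : ℕ} [NeZero q] (n : ι → ℕ)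
    (hw : WeightAnisotropic q fun i => (q : k) ^ n i) :
    ∃ (L : Type u) (E : ι → Type u) (_ : Field L) (_ : ∀ i, Field (E i)) (_ : Algebra k L)
      (_ : ∀ i, Algebra L (E i)), (∀ i, FiniteDimensional L (E i)) ∧
        (∀ i, Module.finrank L (E i) = q ^ n i) ∧ TraceAnisotropic q L (∀ i, E i) := by
  let reduce : Lex ((Σₗ i, Fin (n i)) → ℤ) →+ ∀ i, Fin (n i) → ZMod q :=
    { toFun := fun x i j => (ofLex x (toLex ⟨i, j⟩) : ZMod q)
      map_zero' := funext₂ fun _ _ => Int.cast_zero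
      map_add' := fun _ _ => funext₂ fun _ _ => Int.cast_add _ _ }
  have hreduce : Function.Surjective reduce := fun y =>
    ⟨toLex fun a => (y (ofLex a).1 (ofLex a).2).cast, by ext; simp [reduce]⟩
  have hcard (i : ι) : Nat.card (Fin (n i) → ZMod q) = q ^ n i := by simp
  simpa only [hcard] using exists_traceAnisotropic_pi_of_surjective reduce hreduce (NeZero.ne q)
    (fun i y => by ext; simp) (by simpa only [hcard, Nat.cast_pow] using hw)

end HahnSeries

/-! ### Deformation of a product of fields to a field -/

section AdjoinRoot

open Polynomial

variable {R S : Type*} [CommRing R] [CommRing S] {g : R[X]}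

theorem trace_adjoinRoot_mk (hg : g.Monic) (a : R[X]) :
    Algebra.trace R (AdjoinRoot g) (AdjoinRoot.mk g a) =
      ∑ j ∈ Finset.range g.natDegree, ((a * X ^ j) %ₘ g).coeff j := by
  classical
  rw [Algebra.trace_eq_matrix_trace (AdjoinRoot.powerBasis' hg).basis, Matrix.trace,
    ← Fin.sum_univ_eq_sum_range fun j => ((a * X ^ j) %ₘ g).coeff j]
  refine Finset.sum_congr rfl fun j _ => ?_
  rw [Matrix.diag_apply, Algebra.leftMulMatrix_eq_repr_mul, PowerBasis.basis_eq_pow,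
    AdjoinRoot.powerBasis'_gen, ← AdjoinRoot.mk_X, ← map_pow, ← map_mul]
  refine (AdjoinRoot.powerBasisAux'_repr_apply_to_fun hg _ _).trans ?_
  rw [AdjoinRoot.modByMonicHom_mk]

theorem trace_adjoinRoot_map [Nontrivial S] (hg : g.Monic) (f : R →+* S) (a : R[X]) :
    Algebra.trace S (AdjoinRoot (g.map f)) (AdjoinRoot.mk (g.map f) (a.map f)) =
      f (Algebra.trace R (AdjoinRoot g) (AdjoinRoot.mk g a)) := by
  rw [trace_adjoinRoot_mk (hg.map f), trace_adjoinRoot_mk hg, hg.natDegree_map, map_sum]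
  refine Finset.sum_congr rfl fun j _ => ?_
  rw [← coeff_map, map_modByMonic f hg, Polynomial.map_mul, Polynomial.map_pow, map_X]

theorem trace_adjoinRoot_smul_pow (r : R) (a : R[X]) (n : ℕ) :
    Algebra.trace R (AdjoinRoot g) (AdjoinRoot.mk g (r • a) ^ n) =
      r ^ n * Algebra.trace R (AdjoinRoot g) (AdjoinRoot.mk g a ^ n) := by
  rw [← AdjoinRoot.smul_mk, _root_.smul_pow, map_smul, smul_eq_mul]

theorem exists_pow_smul_map_ne_zero [IsDomain R] [WfDvdMonoid R] {φ : R →+* S} {t : R}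
    (ht : ¬IsUnit t) (hφ : ∀ r, φ r = 0 → t ∣ r) {a : R[X]} (ha : a ≠ 0) :
    ∃ (m : ℕ) (c : R[X]), a = t ^ m • c ∧ c.map φ ≠ 0 := by
  have htC : ¬IsUnit (C t) := isUnit_C.not.2 ht
  obtain ⟨c, hac, hc⟩ :=
    (FiniteMultiplicity.of_not_isUnit htC ha).exists_eq_pow_mul_and_not_dvd
  refine ⟨_, c, by rwa [← C_pow, ← smul_eq_C_mul] at hac, fun hzero => hc ?_⟩
  refine (C_dvd_iff_dvd_coeff _ _).2 fun i => hφ _ ?_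
  rw [← coeff_map, hzero, coeff_zero]

theorem TraceAnisotropic.adjoinRoot_of_map [IsDomain R] [WfDvdMonoid R] [Nontrivial S] {q : ℕ}
    (hg : g.Monic) {φ : R →+* S} {t : R} (ht0 : t ≠ 0) (ht : ¬IsUnit t) (hφ : ∀ r, φ r = 0 → t ∣ r)
    (h : TraceAnisotropic q S (AdjoinRoot (g.map φ))) : TraceAnisotropic q R (AdjoinRoot g) := by
  intro x h₁ h₂
  obtain ⟨a₀, rfl⟩ := AdjoinRoot.mk_surjective x
  by_contra hx
  set a := a₀ %ₘ g
  have hmk : AdjoinRoot.mk g a₀ = AdjoinRoot.mk g a := by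
    rw [AdjoinRoot.mk_eq_mk]
    exact ⟨a₀ /ₘ g, sub_eq_iff_eq_add'.2 (modByMonic_add_div a₀ g).symm⟩
  rw [hmk] at h₁ h₂ hx
  have ha : a ≠ 0 := fun ha => hx (by rw [ha, map_zero])
  obtain ⟨m, c, hac, hc⟩ := exists_pow_smul_map_ne_zero ht hφ ha
  have hcdeg : (c.map φ).degree < (g.map φ).degree :=
    calc (c.map φ).degree ≤ c.degree := degree_map_le
      _ = a.degree := by rw [hac, smul_eq_C_mul, degree_C_mul (pow_ne_zero m ht0)]
      _ < g.degree := degree_modByMonic_lt a₀ hg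
      _ = (g.map φ).degree := (hg.degree_map φ).symm
  have htrace (n : ℕ) (hn : Algebra.trace R (AdjoinRoot g) (AdjoinRoot.mk g a ^ n) = 0) :
      Algebra.trace S (AdjoinRoot (g.map φ)) (AdjoinRoot.mk (g.map φ) (c.map φ) ^ n) = 0 := by
    rw [hac, trace_adjoinRoot_smul_pow] at hn
    rw [← map_pow, ← Polynomial.map_pow, trace_adjoinRoot_map hg, map_pow,
      (mul_eq_zero.1 hn).resolve_left (pow_ne_zero _ (pow_ne_zero _ ht0)), map_zero]
  have hzero := h (AdjoinRoot.mk (g.map φ) (c.map φ)) (by simpa using htrace 1 (by simpa using h₁))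
    (htrace q h₂)
  exact (hg.map φ).not_dvd_of_degree_lt hc hcdeg (AdjoinRoot.mk_eq_zero.1 hzero)

theorem TraceAnisotropic.adjoinRoot_fractionRing [IsDomain R] {K : Type*} [Field K] [Algebra R K]
    [IsFractionRing R K] {q : ℕ} (hg : g.Monic) (h : TraceAnisotropic q R (AdjoinRoot g)) :
    TraceAnisotropic q K (AdjoinRoot (g.map (algebraMap R K))) := by
  intro x h₁ h₂
  obtain ⟨a, rfl⟩ := AdjoinRoot.mk_surjective x
  obtain ⟨b, hb, hba⟩ := IsLocalization.integerNormalization_spec (nonZeroDivisors R) a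
  set a' := IsLocalization.integerNormalization (nonZeroDivisors R) a
  have hb0 : algebraMap R K b ≠ 0 :=
    (map_ne_zero_iff _ (IsFractionRing.injective R K)).2 (nonZeroDivisors.ne_zero hb)
  rw [← algebraMap_smul K b a] at hba
  have htrace (n : ℕ)
      (hn : Algebra.trace K (AdjoinRoot (g.map (algebraMap R K))) (AdjoinRoot.mk _ a ^ n) = 0) :
      Algebra.trace R (AdjoinRoot g) (AdjoinRoot.mk g a' ^ n) = 0 := by
    refine IsFractionRing.injective R K ?_
    rw [← map_pow, ← trace_adjoinRoot_map hg, Polynomial.map_pow, hba, map_pow,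
      trace_adjoinRoot_smul_pow, hn, mul_zero, map_zero]
  have hzero := h (AdjoinRoot.mk g a') (by simpa using htrace 1 (by simpa using h₁)) (htrace q h₂)
  have hdvd := Polynomial.map_dvd (algebraMap R K) (AdjoinRoot.mk_eq_zero.1 hzero)
  rw [hba, ← AdjoinRoot.mk_eq_zero, ← AdjoinRoot.smul_mk] at hdvd
  exact (smul_eq_zero_iff_right hb0).1 hdvd

end AdjoinRoot

section EisensteinDeformation

open Polynomial

variable {L : Type u} [Field L] {h : L[X]}

/-- The line through `h` and `X ^ h.natDegree` in the space of monic polynomials: it specializes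
to `h` at parameter `0` and is Eisenstein at parameter `1`. -/
noncomputable def eisensteinDeformation (h : L[X]) : L[X][X] :=
  h.map C + C X * (X ^ h.natDegree - h.map C)

theorem degree_eisensteinDeformation_sub_lt (hm : h.Monic) :
    (C X * (X ^ h.natDegree - h.map C)).degree < (h.map (C : L →+* L[X])).degree := by
  have hdeg : (X ^ h.natDegree : L[X][X]).degree = (h.map C).degree := by
    rw [degree_X_pow, hm.degree_map, degree_eq_natDegree hm.ne_zero]
  rw [degree_C_mul X_ne_zero, ← hdeg]
  refine degree_sub_lt_left hdeg (pow_ne_zero _ X_ne_zero) ?_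
  rw [(hm.map C).leadingCoeff, leadingCoeff_X_pow]

theorem monic_eisensteinDeformation (hm : h.Monic) : (eisensteinDeformation h).Monic :=
  (hm.map C).add_of_left (degree_eisensteinDeformation_sub_lt hm)

theorem natDegree_eisensteinDeformation (hm : h.Monic) :
    (eisensteinDeformation h).natDegree = h.natDegree := by
  rw [eisensteinDeformation,
    natDegree_add_eq_left_of_degree_lt (degree_eisensteinDeformation_sub_lt hm), hm.natDegree_map]

theorem map_eval_zero_eisensteinDeformation (h : L[X]) :
    (eisensteinDeformation h).map (evalRingHom 0) = h := by
  have hcomp : (evalRingHom (0 : L)).comp C = RingHom.id L := by ext; simp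
  simp [eisensteinDeformation, Polynomial.map_map, hcomp]

theorem coeff_eisensteinDeformation {j : ℕ} (hj : j < h.natDegree) :
    (eisensteinDeformation h).coeff j = C (-h.coeff j) * (X - C 1) := by
  simp only [eisensteinDeformation, coeff_add, coeff_C_mul, coeff_sub, coeff_X_pow, coeff_map,
    if_neg hj.ne, C_neg, C_1]
  ring

theorem irreducible_eisensteinDeformation (hm : h.Monic) (h0 : h.coeff 0 ≠ 0)
    (hd : 0 < h.natDegree) : Irreducible (eisensteinDeformation h) := by
  have hmonic := monic_eisensteinDeformation hm
  have hdeg := natDegree_eisensteinDeformation hm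
  have hprime : Prime (X - C (1 : L)) := prime_X_sub_C 1
  have heis : (eisensteinDeformation h).IsEisensteinAt (Ideal.span {X - C (1 : L)}) := by
    refine ⟨?_, fun {j} hj => ?_, ?_⟩
    · rw [hmonic.leadingCoeff, Ideal.mem_span_singleton]
      exact fun hdvd => hprime.not_isUnit (isUnit_of_dvd_one hdvd)
    · rw [coeff_eisensteinDeformation (hdeg ▸ hj), Ideal.mem_span_singleton]
      exact dvd_mul_left _ _
    · rw [coeff_eisensteinDeformation hd, Ideal.span_singleton_pow, Ideal.mem_span_singleton, sq,
        mul_dvd_mul_iff_right hprime.ne_zero]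
      exact fun hdvd => hprime.not_isUnit
        (isUnit_of_dvd_unit hdvd (isUnit_C.2 (neg_ne_zero.2 h0).isUnit))
  exact heis.irreducible ((Ideal.span_singleton_prime hprime.ne_zero).2 hprime) hmonic.isPrimitive
    (hdeg ▸ hd)

theorem exists_traceAnisotropic_field_of_adjoinRoot {q : ℕ} (hm : h.Monic) (h0 : h.coeff 0 ≠ 0)
    (hd : 0 < h.natDegree) (haniso : TraceAnisotropic q L (AdjoinRoot h)) :
    ∃ (F E : Type u) (_ : Field F) (_ : Field E) (_ : Algebra L F) (_ : Algebra F E),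
      Module.finrank F E = h.natDegree ∧ TraceAnisotropic q F E := by
  have hmonic := monic_eisensteinDeformation hm
  set g := (eisensteinDeformation h).map (algebraMap L[X] (FractionRing L[X])) with hg
  have : Fact (Irreducible g) := ⟨hmonic.irreducible_iff_irreducible_map_fraction_map.1
    (irreducible_eisensteinDeformation hm h0 hd)⟩
  refine ⟨FractionRing L[X], AdjoinRoot g, inferInstance, inferInstance, inferInstance,
    inferInstance, ?_, ?_⟩
  · rw [(AdjoinRoot.powerBasis' (hmonic.map _)).finrank, AdjoinRoot.powerBasis'_dim,
      hmonic.natDegree_map, natDegree_eisensteinDeformation hm]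
  · refine .adjoinRoot_fractionRing hmonic ?_
    rw [← map_eval_zero_eisensteinDeformation h] at haniso
    refine .adjoinRoot_of_map hmonic X_ne_zero not_isUnit_X (fun r hr => ?_) haniso
    rwa [X_dvd_iff, coeff_zero_eq_eval_zero]

end EisensteinDeformation

section ProductOfFields

open Polynomial

variable {L : Type u} [Field L]

theorem exists_ne_zero_natDegree_minpoly_eq_finrank (L E : Type*) [Field L] [Field E] [Algebra L E]
    [FiniteDimensional L E] [Algebra.IsSeparable L E] :
    ∃ θ : E, θ ≠ 0 ∧ (minpoly L θ).natDegree = Module.finrank L E := by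
  obtain ⟨θ, hθ⟩ := Field.exists_primitive_element L E
  rcases eq_or_ne θ 0 with rfl | hθ0
  · refine ⟨1, one_ne_zero, (Field.primitive_element_iff_minpoly_natDegree_eq L 1).1 ?_⟩
    rw [← hθ]
    simp
  · exact ⟨θ, hθ0, (Field.primitive_element_iff_minpoly_natDegree_eq L θ).1 hθ⟩

variable {ι : Type*} {E : ι → Type u} [∀ i, Field (E i)] [∀ i, Algebra L (E i)]

theorem aeval_pi_apply (θ : ∀ i, E i) (a : L[X]) (i : ι) : aeval θ a i = aeval (θ i) a :=
  (aeval_algHom_apply (Pi.evalAlgHom L E i) θ a).symm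

variable [Fintype ι] [∀ i, FiniteDimensional L (E i)]

theorem nonempty_algEquiv_adjoinRoot_prod_minpoly {θ : ∀ i, E i}
    (hθ : ∀ i, (minpoly L (θ i)).natDegree = Module.finrank L (E i))
    (hcop : Pairwise (Function.onFun IsCoprime fun i => minpoly L (θ i))) :
    Nonempty (AdjoinRoot (∏ i, minpoly L (θ i)) ≃ₐ[L] ∀ i, E i) := by
  have hmonic (i : ι) : (minpoly L (θ i)).Monic := minpoly.monic (.of_finite L _)
  have hm : (∏ i, minpoly L (θ i)).Monic := monic_prod_of_monic _ _ fun i _ => hmonic i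
  have hroot : aeval θ (∏ i, minpoly L (θ i)) = 0 := by
    funext i
    rw [aeval_pi_apply, map_prod]
    exact Finset.prod_eq_zero (Finset.mem_univ i) (minpoly.aeval L (θ i))
  let ψ : AdjoinRoot (∏ i, minpoly L (θ i)) →ₐ[L] ∀ i, E i :=
    AdjoinRoot.liftAlgHom _ (Algebra.ofId L _) θ hroot
  have hinj : Function.Injective ψ := (injective_iff_map_eq_zero ψ).2 fun x hx => by
    obtain ⟨a, rfl⟩ := AdjoinRoot.mk_surjective x
    have ha : aeval θ a = 0 := (AdjoinRoot.liftAlgHom_mk _ _ _ _ _).symm.trans hx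
    refine AdjoinRoot.mk_eq_zero.2 (Fintype.prod_dvd_of_coprime hcop fun i => minpoly.dvd _ _ ?_)
    rw [← aeval_pi_apply, ha, Pi.zero_apply]
  have : FiniteDimensional L (AdjoinRoot (∏ i, minpoly L (θ i))) :=
    (AdjoinRoot.powerBasis' hm).finite
  have hfinrank : Module.finrank L (AdjoinRoot (∏ i, minpoly L (θ i))) =
      Module.finrank L (∀ i, E i) := by
    rw [(AdjoinRoot.powerBasis' hm).finrank, AdjoinRoot.powerBasis'_dim,
      Module.finrank_pi_fintype, natDegree_prod_of_monic _ _ fun i _ => hmonic i]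
    exact Finset.sum_congr rfl fun i _ => hθ i
  exact ⟨.ofBijective ψ ⟨hinj,
    (LinearMap.injective_iff_surjective_of_finrank_eq_finrank hfinrank (f := ψ.toLinearMap)).1
      hinj⟩⟩

theorem exists_traceAnisotropic_field_of_pi [Nonempty ι] [∀ i, Algebra.IsSeparable L (E i)] {q : ℕ}
    (hdeg : Function.Injective fun i => Module.finrank L (E i))
    (haniso : TraceAnisotropic q L (∀ i, E i)) :
    ∃ (F E' : Type u) (_ : Field F) (_ : Field E') (_ : Algebra L F) (_ : Algebra F E'),
      Module.finrank F E' = ∑ i, Module.finrank L (E i) ∧ TraceAnisotropic q F E' := by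
  choose θ hθ0 hθ using fun i => exists_ne_zero_natDegree_minpoly_eq_finrank L (E i)
  have hintegral (i : ι) : IsIntegral L (θ i) := .of_finite L _
  have hirr (i : ι) : Irreducible (minpoly L (θ i)) := minpoly.irreducible (hintegral i)
  have hmonic (i : ι) : (minpoly L (θ i)).Monic := minpoly.monic (hintegral i)
  have hcop : Pairwise (Function.onFun IsCoprime fun i => minpoly L (θ i)) := fun i j hij =>
    (hirr i).coprime_iff_not_dvd.2 fun hdvd => hij <| hdeg <| by
      have heq := eq_of_monic_of_associated (hmonic i) (hmonic j)
        ((hirr i).associated_of_dvd (hirr j) hdvd)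
      simpa only [hθ] using congrArg natDegree heq
  obtain ⟨e⟩ := nonempty_algEquiv_adjoinRoot_prod_minpoly hθ hcop
  have hsum : (∏ i, minpoly L (θ i)).natDegree = ∑ i, Module.finrank L (E i) :=
    (natDegree_prod_of_monic _ _ fun i _ => hmonic i).trans (Finset.sum_congr rfl fun i _ => hθ i)
  rw [← hsum]
  refine exists_traceAnisotropic_field_of_adjoinRoot
    (monic_prod_of_monic _ _ fun i _ => hmonic i) ?_ ?_ (haniso.of_algEquiv e)
  · rw [coeff_zero_prod, Finset.prod_ne_zero_iff]
    exact fun i _ => minpoly.coeff_zero_ne_zero (hintegral i) (hθ0 i)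
  · rw [hsum]
    exact Finset.sum_pos (fun i _ => Module.finrank_pos) Finset.univ_nonempty

end ProductOfFields

theorem exists_traceAnisotropic_field {ι : Type} [Fintype ι] [LinearOrder ι] [Nonempty ι]
    {k : Type u} [Field k] [CharZero k] {q : ℕ} (hq : 2 ≤ q) {n : ι → ℕ}
    (hn : Function.Injective n) (hw : WeightAnisotropic q fun i => (q : k) ^ n i) :
    ∃ (F E : Type u) (_ : Field F) (_ : Field E) (_ : Algebra k F) (_ : Algebra F E),
      Module.finrank F E = ∑ i, q ^ n i ∧ TraceAnisotropic q F E := by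
  have : NeZero q := ⟨by omega⟩
  obtain ⟨L, E, _, _, _, _, hfin, hdeg, haniso⟩ := exists_traceAnisotropic_pi n hw
  have : CharZero L := charZero_of_injective_algebraMap (algebraMap k L).injective
  obtain ⟨F, E', _, _, _, _, hsum, haniso'⟩ := exists_traceAnisotropic_field_of_pi
    (fun i j hij => hn (Nat.pow_right_injective hq (by simpa only [hdeg] using hij))) haniso
  exact ⟨F, E', inferInstance, inferInstance, ((algebraMap L F).comp (algebraMap k L)).toAlgebra,
    inferInstance, by simpa only [hdeg] using hsum, haniso'⟩

/-! ### Eisenstein integers -/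

section

open QuadraticAlgebra

/-- The Eisenstein integers `ℤ[ω]` with `ω ^ 2 = -1 - ω`, an element being the pair `⟨re, im⟩` of
its coordinates in the basis `1, ω`. -/
abbrev EisensteinInt : Type := QuadraticAlgebra ℤ (-1) (-1)

lemma eisensteinInt_norm (z : EisensteinInt) :
    norm z = z.re ^ 2 - z.re * z.im + z.im ^ 2 := by
  rw [norm_def]
  ring

lemma eisensteinInt_norm_pos {z : EisensteinInt} (hz : z ≠ 0) : 0 < norm z := by
  rw [eisensteinInt_norm]
  by_contra hle
  have him : z.im = 0 := by nlinarith [sq_nonneg (2 * z.re - z.im), sq_nonneg z.im]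
  have hre : z.re = 0 := by
    rw [him] at hle
    nlinarith [sq_nonneg z.re]
  exact hz (by ext <;> simp [him, hre])

lemma eisensteinInt_norm_nonneg (z : EisensteinInt) : 0 ≤ norm z := by
  rcases eq_or_ne z 0 with rfl | hz
  · simp
  · exact (eisensteinInt_norm_pos hz).le

instance : IsDomain EisensteinInt :=
  have : NoZeroDivisors EisensteinInt := ⟨fun {a b} hab => by
    by_contra! hne
    have hpos := mul_pos (eisensteinInt_norm_pos hne.1) (eisensteinInt_norm_pos hne.2)
    simp [← map_mul, hab] at hpos⟩
  NoZeroDivisors.to_isDomain _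

lemma exists_eq_mul_add_two_mul_abs_le (u : ℤ) {n : ℤ} (hn : 0 < n) :
    ∃ q r : ℤ, u = n * q + r ∧ 2 * |r| ≤ n := by
  have hn' : (0 : ℚ) < n := by exact_mod_cast hn
  refine ⟨round ((u : ℚ) / n), u - n * round ((u : ℚ) / n), by ring, ?_⟩
  have hround := abs_sub_round ((u : ℚ) / n)
  have hr : (u : ℚ) - n * round ((u : ℚ) / n) = n * ((u : ℚ) / n - round ((u : ℚ) / n)) := by
    field_simp
  have : 2 * |(u : ℚ) - n * round ((u : ℚ) / n)| ≤ n := by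
    rw [hr, abs_mul, abs_of_pos hn']
    nlinarith
  exact_mod_cast this

-- Round both coordinates of `x / y`: the remainder has norm at most `3 / 4` of that of `y`.
lemma exists_eisensteinInt_norm_sub_mul_lt (x : EisensteinInt) {y : EisensteinInt} (hy : y ≠ 0) :
    ∃ q : EisensteinInt, norm (x - y * q) < norm y := by
  have hn := eisensteinInt_norm_pos hy
  obtain ⟨q₁, r₁, hre, hr₁⟩ := exists_eq_mul_add_two_mul_abs_le (x * star y).re hn
  obtain ⟨q₂, r₂, him, hr₂⟩ := exists_eq_mul_add_two_mul_abs_le (x * star y).im hn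
  refine ⟨⟨q₁, q₂⟩, ?_⟩
  have hrem : (x - y * ⟨q₁, q₂⟩) * star y = ⟨r₁, r₂⟩ := by
    have hexpand : (x - y * ⟨q₁, q₂⟩) * star y =
        x * star y - algebraMap ℤ EisensteinInt (norm y) * ⟨q₁, q₂⟩ := by
      rw [algebraMap_norm_eq_mul_star]
      ring
    rw [hexpand]
    ext
    · rw [re_sub, hre]
      simp
    · rw [im_sub, him]
      simp
  have hnorm := congrArg (fun z : EisensteinInt => norm z) hrem
  simp only [map_mul, QuadraticAlgebra.norm_star, eisensteinInt_norm ⟨r₁, r₂⟩] at hnorm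
  have hsq₁ : 4 * r₁ ^ 2 ≤ norm y ^ 2 := by
    rw [← sq_abs r₁]
    nlinarith [abs_nonneg r₁]
  have hsq₂ : 4 * r₂ ^ 2 ≤ norm y ^ 2 := by
    rw [← sq_abs r₂]
    nlinarith [abs_nonneg r₂]
  by_contra! hle
  have : norm y * norm y ≤ norm (x - y * ⟨q₁, q₂⟩) * norm y := by gcongr
  nlinarith [sq_nonneg (r₁ + r₂)]

open Classical in
noncomputable instance : EuclideanDomain EisensteinInt where
  quotient x y :=
    if h : y = 0 then 0 else (exists_eisensteinInt_norm_sub_mul_lt x h).choose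
  remainder x y :=
    x - y * if h : y = 0 then 0 else (exists_eisensteinInt_norm_sub_mul_lt x h).choose
  quotient_zero x := by simp
  quotient_mul_add_remainder_eq x y := by ring
  r x y := (norm x).natAbs < (norm y).natAbs
  r_wellFounded := (measure fun z : EisensteinInt => (norm z).natAbs).wf
  remainder_lt x y hy := by
    simp only [hy, dite_false]
    have hlt := (exists_eisensteinInt_norm_sub_mul_lt x hy).choose_spec
    have := eisensteinInt_norm_nonneg (x - y * (exists_eisensteinInt_norm_sub_mul_lt x hy).choose)
    omega
  mul_left_not_lt a b hb := by
    rw [map_mul, Int.natAbs_mul]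
    have hpos := eisensteinInt_norm_pos hb
    exact not_lt.2 (Nat.le_mul_of_pos_right _ (by omega))

lemma eisensteinInt_norm_eq_one_of_isUnit {u : EisensteinInt} (hu : IsUnit u) : norm u = 1 := by
  have hpos := eisensteinInt_norm_pos hu.ne_zero
  rcases Int.isUnit_iff.1 (isUnit_iff_norm_isUnit.1 hu) with h | h <;> omega

lemma eisensteinInt_eq_of_isUnit {u : EisensteinInt} (hu : IsUnit u) :
    (u = 1 ∨ u = -1) ∨ (u = ⟨0, 1⟩ ∨ u = ⟨0, -1⟩) ∨ u = ⟨1, 1⟩ ∨ u = ⟨-1, -1⟩ := by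
  have hnorm := eisensteinInt_norm_eq_one_of_isUnit hu
  rw [eisensteinInt_norm] at hnorm
  obtain ⟨a, b⟩ := u
  simp only at hnorm
  obtain ⟨hb₁, hb₂⟩ : -1 ≤ b ∧ b ≤ 1 := by constructor <;> nlinarith [sq_nonneg (2 * a - b)]
  obtain ⟨ha₁, ha₂⟩ : -1 ≤ a ∧ a ≤ 1 := by constructor <;> nlinarith [sq_nonneg (2 * b - a)]
  interval_cases a <;> interval_cases b <;> simp_all [QuadraticAlgebra.ext_iff, re_one, im_one]

lemma eisensteinInt_pow_three (p q : ℤ) :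
    (⟨p, q⟩ : EisensteinInt) ^ 3 = ⟨p ^ 3 + q ^ 3 - 3 * p * q ^ 2, 3 * p * q * (p - q)⟩ := by
  rw [pow_three]
  ext <;> simp <;> ring

-- The difference of conjugates is `(1 + 2ω) s`, and `1 + 2ω` is a square root of `-3`.
lemma isCoprime_star_of_isCoprime_three_mul_im {z : EisensteinInt}
    (hz : IsCoprime (3 * z.im) (norm z)) : IsCoprime z (star z) := by
  obtain ⟨a, b, hab⟩ := hz
  have hdiff : ((3 * z.im : ℤ) : EisensteinInt) = -(z - star z) * ⟨1, 2⟩ := by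
    ext <;> simp <;> ring
  have hbezout : (a : EisensteinInt) * ((3 * z.im : ℤ) : EisensteinInt) + b * (z * star z) = 1 := by
    have := congrArg (Int.cast : ℤ → EisensteinInt) hab
    rw [← algebraMap_norm_eq_mul_star]
    push_cast at this ⊢
    exact this
  refine ⟨-(a : EisensteinInt) * ⟨1, 2⟩, (a : EisensteinInt) * ⟨1, 2⟩ + (b : EisensteinInt) * z, ?_⟩
  rw [← hbezout, hdiff]
  ring

-- A unit multiple of a cube with coordinates `(±1, 0)` modulo `3` is plus or minus a cube, since
-- modulo `3` cubes are rational integers.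
lemma exists_eq_pow_three_of_associated {z γ : EisensteinInt} (hzγ : Associated (γ ^ 3) z)
    (hre : ¬ 3 ∣ z.re) (him : 3 ∣ z.im) : ∃ γ' : EisensteinInt, γ' ^ 3 = z := by
  obtain ⟨u, rfl⟩ := hzγ
  rcases eisensteinInt_eq_of_isUnit u.isUnit with (hu | hu) | hu
  · exact ⟨γ, by rw [hu, mul_one]⟩
  · exact ⟨-γ, by rw [hu]; ring⟩
  · obtain ⟨p, q⟩ := γ
    rw [eisensteinInt_pow_three, mul_assoc 3 p, mul_assoc 3 p, mul_assoc 3 (p * q)] at hre him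
    rcases hu with (hu | hu) | (hu | hu) <;>
    · simp only [hu, re_mul, im_mul] at hre him
      generalize p * q * (p - q) = m at *
      generalize p * q ^ 2 = m' at *
      omega

lemma isCoprime_three_mul_of_eq {x s : ℤ} (hx : ¬ 3 ∣ x) (hxs : IsCoprime x s) :
    IsCoprime (3 * s) (x ^ 2 - 3 * s * x + 3 * s ^ 2) := by
  refine IsCoprime.mul_left (Int.prime_three.coprime_iff_not_dvd.2 fun hdvd => hx ?_) ?_
  · refine Int.prime_three.dvd_of_dvd_pow (n := 2) ?_
    convert dvd_sub hdvd (dvd_mul_right 3 (s ^ 2 - s * x)) using 1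
    ring
  · have hsq : IsCoprime s (x ^ 2) := hxs.symm.pow_right
    rw [show x ^ 2 - 3 * s * x + 3 * s ^ 2 = x ^ 2 + s * (3 * s - 3 * x) by ring]
    exact hsq.add_mul_left_right _

lemma exists_eq_norm_pow_three {x s υ : ℤ} (hx : ¬ 3 ∣ x) (hs : 3 ∣ s) (hxs : IsCoprime x s)
    (h : x ^ 2 - 3 * s * x + 3 * s ^ 2 = υ ^ 3) :
    ∃ p q : ℤ, x - s = p ^ 3 + q ^ 3 - 3 * p * q ^ 2 ∧ s = 3 * p * q * (p - q) ∧
      υ ^ 3 = (p ^ 2 - p * q + q ^ 2) ^ 3 := by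
  set z : EisensteinInt := ⟨x - s, s⟩ with hz
  have hnorm : norm z = υ ^ 3 := by
    rw [eisensteinInt_norm, ← h]
    ring
  have hcop : IsCoprime z (star z) := by
    apply isCoprime_star_of_isCoprime_three_mul_im
    rw [hnorm, ← h]
    exact isCoprime_three_mul_of_eq hx hxs
  have hprod : z * star z = (υ : EisensteinInt) ^ 3 := by
    rw [← algebraMap_norm_eq_mul_star, hnorm]
    simp
  obtain ⟨γ, hγ⟩ := exists_associated_pow_of_mul_eq_pow' hcop hprod
  obtain ⟨⟨p, q⟩, hpq⟩ := exists_eq_pow_three_of_associated hγ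
    (fun hdvd => hx ((dvd_sub_left hs).1 hdvd)) hs
  have hυ : υ ^ 3 = (p ^ 2 - p * q + q ^ 2) ^ 3 := by
    rw [← hnorm, ← hpq, map_pow, eisensteinInt_norm]
  rw [eisensteinInt_pow_three, hz, QuadraticAlgebra.ext_iff] at hpq
  exact ⟨p, q, hpq.1.symm, hpq.2.symm, hυ⟩

end

/-! ### Descent on sums of two cubes -/

/-- A primitive solution of `x ^ 3 + y ^ 3 = 3 ^ e * z ^ 3` in which `3 ^ e` is the exact power of
`3` dividing the left-hand side. -/
structure CubeSum (e : ℕ) (x y z : ℤ) : Prop where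
  isCoprime : IsCoprime x y
  eq : x ^ 3 + y ^ 3 = 3 ^ e * z ^ 3
  not_dvd : ¬ 3 ∣ z

lemma exists_eq_pow_mul_pow_of_isCoprime {p a b z : ℤ} {f n : ℕ} (hp : Prime p) (hn : Odd n)
    (hab : IsCoprime a b) (ha : p ∣ a) (hz : ¬ p ∣ z) (h : a * b = p ^ f * z ^ n) :
    ∃ a₁ b₁ : ℤ, a = p ^ f * a₁ ^ n ∧ b = b₁ ^ n ∧ ¬ p ∣ a₁ := by
  have hpb : IsCoprime p b := hab.of_isCoprime_of_dvd_left ha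
  obtain ⟨A, rfl⟩ : p ^ f ∣ a := hpb.pow_left.dvd_of_dvd_mul_right (h ▸ dvd_mul_right _ _)
  have hA : A * b = z ^ n := by
    rw [mul_assoc] at h
    exact mul_left_cancel₀ (pow_ne_zero f hp.ne_zero) h
  obtain ⟨⟨a₁, rfl⟩, b₁, hb₁⟩ :=
    Int.eq_pow_of_mul_eq_pow_odd hab.of_mul_left_right hn hA
  refine ⟨a₁, b₁, rfl, hb₁, fun hdvd => hz (hp.dvd_of_dvd_pow (n := n) ?_)⟩
  rw [← hA]
  exact dvd_mul_of_dvd_left (dvd_pow hdvd hn.pos.ne') _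

lemma isCoprime_add_mul {x y : ℤ} (h : IsCoprime x y) : IsCoprime (x + y) (x * y) := by
  refine IsCoprime.mul_right ?_ ?_
  · simpa [add_comm] using h.symm.add_mul_left_left 1
  · simpa using h.add_mul_left_left 1

namespace CubeSum

variable {e : ℕ} {x y z : ℤ}

lemma three_dvd_add (h : CubeSum (e + 1) x y z) : 3 ∣ x + y := by
  refine Int.prime_three.dvd_of_dvd_pow (n := 3) ⟨3 ^ e * z ^ 3 + x * y * (x + y), ?_⟩
  linear_combination h.eq

lemma not_three_dvd_left (h : CubeSum (e + 1) x y z) : ¬ 3 ∣ x := fun hx =>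
  Int.prime_three.not_isUnit
    (h.isCoprime.isUnit_of_dvd' hx ((dvd_add_right hx).1 h.three_dvd_add))

lemma exists_factors (h : CubeSum (e + 1) x y z) :
    ∃ τ υ : ℤ, x + y = 3 ^ e * τ ^ 3 ∧ x ^ 2 - x * y + y ^ 2 = 3 * υ ^ 3 ∧ ¬ 3 ∣ τ := by
  obtain ⟨s, hs⟩ := h.three_dvd_add
  have hcop : IsCoprime (x + y) ((x + y) * s - x * y) := by
    rw [sub_eq_neg_add]
    exact (isCoprime_add_mul h.isCoprime).neg_right.add_mul_left_right s
  have hprod : (x + y) * ((x + y) * s - x * y) = 3 ^ e * z ^ 3 := by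
    refine mul_left_cancel₀ (three_ne_zero (α := ℤ)) ?_
    linear_combination h.eq - (x + y) ^ 2 * hs
  obtain ⟨τ, υ, hτ, hυ, hdvd⟩ := exists_eq_pow_mul_pow_of_isCoprime Int.prime_three (n := 3)
    (by decide) hcop h.three_dvd_add h.not_dvd hprod
  refine ⟨τ, υ, hτ, ?_, hdvd⟩
  rw [← hυ]
  linear_combination (x + y) * hs

lemma of_eq_add {a b c τ : ℤ} {f : ℕ} (ha : a = b + c) (hbc : IsCoprime b c) (h3 : 3 ∣ a)
    (hτ : ¬ 3 ∣ τ) (h : a * (b * c) = 3 ^ f * τ ^ 3) :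
    ∃ x y z : ℤ, CubeSum f x y z ∧ x ^ 3 = b ∧ y ^ 3 = c := by
  have hcop : IsCoprime a (b * c) := ha ▸ isCoprime_add_mul hbc
  obtain ⟨z, d, hz, hd, hdvd⟩ := exists_eq_pow_mul_pow_of_isCoprime Int.prime_three (n := 3)
    (by decide) hcop h3 hτ h
  obtain ⟨⟨x, rfl⟩, y, rfl⟩ := Int.eq_pow_of_mul_eq_pow_odd hbc (by decide) hd
  exact ⟨x, y, z, ⟨(IsCoprime.pow_iff three_pos three_pos).1 hbc, ha ▸ hz, hdvd⟩, rfl, rfl⟩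

lemma exists_of_mul_mul_sub {p q τ : ℤ} {f : ℕ} (hpq : IsCoprime p q) (hτ : ¬ 3 ∣ τ)
    (h : p * q * (p - q) = 3 ^ (f + 1) * τ ^ 3) :
    ∃ x y z : ℤ, CubeSum (f + 1) x y z ∧ 3 * x ^ 6 ≤ 4 * (p ^ 2 - p * q + q ^ 2) ∧
      3 * y ^ 6 ≤ 4 * (p ^ 2 - p * q + q ^ 2) := by
  have hdvd : 3 ∣ p * q * (p - q) := ⟨3 ^ f * τ ^ 3, by rw [h]; ring⟩
  have hτ' : ¬ 3 ∣ -τ := by rwa [dvd_neg]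
  suffices ∃ x y z : ℤ, CubeSum (f + 1) x y z ∧
      3 * (x ^ 3) ^ 2 ≤ 4 * (p ^ 2 - p * q + q ^ 2) ∧
      3 * (y ^ 3) ^ 2 ≤ 4 * (p ^ 2 - p * q + q ^ 2) by
    simpa only [← pow_mul] using this
  rcases Int.prime_three.dvd_or_dvd hdvd with hpq3 | hsub
  · rcases Int.prime_three.dvd_or_dvd hpq3 with hp | hq
    · obtain ⟨x, y, z, hsum, hx, hy⟩ := of_eq_add (f := f + 1) (b := q) (c := p - q) (by ring)
        (by simpa [sub_eq_add_neg] using hpq.symm.add_mul_left_right (-1)) hp hτ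
        (by linear_combination h)
      refine ⟨x, y, z, hsum, ?_, ?_⟩
      · rw [hx]; nlinarith [sq_nonneg (q - 2 * p)]
      · rw [hy]; nlinarith [sq_nonneg (q + p)]
    · obtain ⟨x, y, z, hsum, hx, hy⟩ := of_eq_add (f := f + 1) (b := p) (c := q - p) (by ring)
        (by simpa [sub_eq_add_neg] using hpq.add_mul_left_right (-1)) hq hτ'
        (by linear_combination -h)
      refine ⟨x, y, z, hsum, ?_, ?_⟩
      · rw [hx]; nlinarith [sq_nonneg (p - 2 * q)]
      · rw [hy]; nlinarith [sq_nonneg (q + p)]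
  · obtain ⟨x, y, z, hsum, hx, hy⟩ := of_eq_add (f := f + 1) (b := p) (c := -q) (by ring)
      hpq.neg_right hsub hτ' (by linear_combination -h)
    refine ⟨x, y, z, hsum, ?_, ?_⟩
    · rw [hx]; nlinarith [sq_nonneg (p - 2 * q)]
    · rw [hy]; nlinarith [sq_nonneg (q - 2 * p)]

lemma exists_descent (h : CubeSum (e + 4) x y z) :
    ∃ x₁ y₁ z₁ N : ℤ, CubeSum (e + 1) x₁ y₁ z₁ ∧ 3 * x₁ ^ 6 ≤ 4 * N ∧ 3 * y₁ ^ 6 ≤ 4 * N ∧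
      x ^ 2 - x * y + y ^ 2 = 3 * N ^ 3 := by
  obtain ⟨τ, υ, hadd, hnorm, hτ⟩ := h.exists_factors
  set s : ℤ := 3 ^ (e + 2) * τ ^ 3 with hs
  have hxy : y = 3 * s - x := by linear_combination hadd
  have hxs : IsCoprime x s := by
    have := h.isCoprime.add_mul_left_right 1
    rw [show y + x * 1 = 3 * s by linear_combination hxy] at this
    exact this.of_mul_right_right
  have hυ : x ^ 2 - 3 * s * x + 3 * s ^ 2 = υ ^ 3 := by
    rw [hxy] at hnorm
    linarith
  obtain ⟨p, q, hx, hspq, hN⟩ := exists_eq_norm_pow_three h.not_three_dvd_left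
    ⟨3 ^ (e + 1) * τ ^ 3, by rw [hs]; ring⟩ hxs hυ
  have hpq : IsCoprime p q := by
    refine isCoprime_of_prime_dvd (fun h0 => ?_) fun l hl hlp hlq => ?_
    · rw [h0.1, h0.2] at hx hspq
      simp only [show s = 0 by linarith, show x = 0 by linarith] at hxs
      exact not_isCoprime_zero_zero hxs
    · have hls : l ∣ s := hspq ▸ ((hlp.mul_left 3).mul_right q).mul_right (p - q)
      have hlx : l ∣ x - s := hx ▸ dvd_sub (dvd_add (dvd_pow hlp three_ne_zero)
        (dvd_pow hlq three_ne_zero)) ((dvd_pow hlq two_ne_zero).mul_left _)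
      exact hl.not_isUnit (hxs.isUnit_of_dvd' ((dvd_sub_left hls).1 hlx) hls)
  obtain ⟨x₁, y₁, z₁, hsum, hx₁, hy₁⟩ := exists_of_mul_mul_sub (f := e) hpq hτ (by
    refine mul_left_cancel₀ three_ne_zero ?_
    linear_combination hs - hspq)
  exact ⟨x₁, y₁, z₁, _, hsum, hx₁, hy₁, by rw [hnorm, hN]⟩

lemma three_pow_le_two_mul (h : CubeSum (e + 1) x y z) :
    3 ^ (2 * e) ≤ 2 * (x ^ 2 + y ^ 2) := by
  obtain ⟨τ, υ, hadd, -, hτ⟩ := h.exists_factors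
  have hτ0 : τ ≠ 0 := by
    rintro rfl
    exact hτ (dvd_zero 3)
  have hle : (3 : ℤ) ^ (2 * e) ≤ (x + y) ^ 2 := by
    have hτ1 : 0 < (τ ^ 3) ^ 2 := by positivity
    calc (3 : ℤ) ^ (2 * e) ≤ 3 ^ (2 * e) * (τ ^ 3) ^ 2 :=
          le_mul_of_one_le_right (by positivity) hτ1
      _ = (x + y) ^ 2 := by rw [hadd]; ring
  nlinarith [sq_nonneg (x - y)]

lemma exists_pow_six_le (h : CubeSum (e + 6) x y z) :
    ∃ x₁ y₁ z₁ : ℤ, CubeSum (e + 3) x₁ y₁ z₁ ∧ (x₁ ^ 2 + y₁ ^ 2) ^ 6 ≤ x ^ 2 + y ^ 2 := by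
  obtain ⟨x₁, y₁, z₁, N, hsum, hx, hy, hN⟩ := exists_descent (e := e + 2) h
  refine ⟨x₁, y₁, z₁, hsum, ?_⟩
  have hcube : (x₁ ^ 2 + y₁ ^ 2) ^ 3 ≤ 4 * (x₁ ^ 6 + y₁ ^ 6) := by
    nlinarith [mul_nonneg (add_nonneg (sq_nonneg x₁) (sq_nonneg y₁)) (sq_nonneg (x₁ ^ 2 - y₁ ^ 2))]
  have hsize : 40 ≤ x₁ ^ 2 + y₁ ^ 2 := by
    have h81 : (3 : ℤ) ^ 4 ≤ 3 ^ (2 * (e + 2)) := pow_le_pow_right₀ (by norm_num) (by omega)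
    have := three_pow_le_two_mul (e := e + 2) hsum
    omega
  set R := x₁ ^ 2 + y₁ ^ 2
  have hRN : R ^ 2 ≤ N := by nlinarith [sq_nonneg R]
  have hpow : (R ^ 2) ^ 3 ≤ N ^ 3 := pow_le_pow_left₀ (sq_nonneg R) hRN 3
  have : 0 ≤ N ^ 3 := le_trans (by positivity) hpow
  calc R ^ 6 = (R ^ 2) ^ 3 := by ring
    _ ≤ N ^ 3 := hpow
    _ ≤ x ^ 2 + y ^ 2 := by nlinarith [sq_nonneg (x + y)]

lemma three_pow_pow_le (l : ℕ) : ∀ {e : ℕ} {x y z : ℤ}, CubeSum (e + 3 + 3 * l) x y z →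
    (3 ^ (2 * e + 3)) ^ 6 ^ l ≤ x ^ 2 + y ^ 2 := by
  induction l with
  | zero =>
    intro e x y z h
    have hle := three_pow_le_two_mul (e := e + 2) h
    rw [show 2 * (e + 2) = 2 * e + 3 + 1 by ring, pow_succ] at hle
    have : (0 : ℤ) < 3 ^ (2 * e + 3) := by positivity
    rw [pow_zero, pow_one]
    linarith
  | succ l ih =>
    intro e x y z h
    obtain ⟨x₁, y₁, z₁, hsum, hle⟩ :=
      exists_pow_six_le (e := e + 3 * l) (by convert h using 1; ring)
    have := ih (e := e) (by convert hsum using 1; ring)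
    refine le_trans ?_ hle
    rw [pow_succ 6 l, pow_mul]
    exact pow_le_pow_left₀ (by positivity) this 6

end CubeSum

/-! ### The gap principle -/

section

lemma exists_nat_exponent_between {L e δ B : ℝ} (he : 0 < e) (hδ : 0 < δ) (hB : 0 < B)
    (hL : e * (B / δ + 1) ≤ L) : ∃ k : ℕ, 1 ≤ k ∧ e * k ≤ L ∧ L < e * k + e ∧ B ≤ δ * k := by
  have hBδ : B / δ + 1 ≤ L / e := (le_div_iff₀' he).2 hL
  have hlt := Nat.lt_floor_add_one (L / e)
  have hBk : B / δ < ⌊L / e⌋₊ := by linarith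
  refine ⟨⌊L / e⌋₊, ?_, ?_, ?_, ((div_lt_iff₀' hδ).1 hBk).le⟩
  · exact_mod_cast (div_pos hB hδ).trans hBk
  · exact (le_div_iff₀' he).1 (Nat.floor_le (by linarith [div_pos hB hδ]))
  · linarith [(div_lt_iff₀' he).1 hlt]

lemma exists_between_inv_and {σ d : ℝ} (hσ : 0 < σ) (hd : 1 < σ * d) :
    ∃ e δ : ℝ, 0 < e ∧ 0 < δ ∧ e + 2 * δ ≤ d ∧ 1 + 2 * δ ≤ σ * e := by
  obtain ⟨e, he₁, he₂⟩ := exists_between ((inv_lt_iff_one_lt_mul₀' hσ).2 hd)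
  have he : 1 < σ * e := (inv_lt_iff_one_lt_mul₀' hσ).1 he₁
  refine ⟨e, min (d - e) (σ * e - 1) / 2, (inv_pos.2 hσ).trans he₁, ?_, ?_, ?_⟩
  · exact half_pos (lt_min (sub_pos.2 he₂) (sub_pos.2 he))
  · linarith [min_le_left (d - e) (σ * e - 1)]
  · linarith [min_le_right (d - e) (σ * e - 1)]

lemma rpow_mul_add_lt_one {N κ l η α δ J : ℝ} {k : ℕ} (hN : 2 ≤ N) (hκ0 : 0 ≤ κ)
    (hκ : κ ≤ N ^ δ) (hl : l * N ^ α ≤ N ^ (-(δ * k) - 2))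
    (hJ : J * N ^ k * η ≤ N ^ (-(δ * k) - 2)) :
    κ ^ k * (l * N ^ α + J * N ^ k * η) < 1 := by
  have hN0 : 0 < N := by linarith
  calc κ ^ k * (l * N ^ α + J * N ^ k * η)
      ≤ κ ^ k * (2 * N ^ (-(δ * k) - 2)) := by gcongr; linarith
    _ ≤ (N ^ δ) ^ k * (2 * N ^ (-(δ * k) - 2)) := by gcongr
    _ = 2 * (N ^ (δ * k) * N ^ (-(δ * k) - 2)) := by
        rw [← Real.rpow_mul_natCast hN0.le]
        ring
    _ = 2 / N ^ 2 := by
        rw [← Real.rpow_add hN0, show δ * k + (-(δ * k) - 2) = -2 by ring, Real.rpow_neg hN0.le,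
          ← div_eq_mul_inv]
        norm_cast
    _ < 1 := by
        rw [div_lt_one (by positivity)]
        nlinarith

/-- Integers `v j` approximating the numbers `l * (N + b j) ^ (1 / p)` up to an error of size
`N * M ^ (-σ)`, where `M` bounds the multiplier `l`. -/
structure SimultaneousApprox {ι : Type*} (p : ℕ) (σ : ℝ) (N : ℕ) (b : ι → ℕ) (v : ι → ℤ)
    (l M : ℝ) : Prop where
  nonneg : 0 ≤ l
  le : l ≤ M
  ne_zero : v ≠ 0
  abs_sub_le : ∀ j, |(v j : ℝ) - l * ((N : ℝ) + b j) ^ (1 / (p : ℝ))| ≤ N * M ^ (-σ)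

lemma le_rpow_of_pow_le {κ N δ : ℝ} {m : ℕ} (hδ : 0 < δ) (hm : δ⁻¹ ≤ m) (hN : 1 ≤ N)
    (hκ : 0 ≤ κ) (h : κ ^ m ≤ N) : κ ≤ N ^ δ := by
  have hm0 : 0 < (m : ℝ) := (inv_pos.2 hδ).trans_le hm
  calc κ = (κ ^ m) ^ ((m : ℝ)⁻¹) := by
        rw [Real.pow_rpow_inv_natCast hκ (by exact_mod_cast hm0.ne')]
    _ ≤ N ^ ((m : ℝ)⁻¹) := by gcongr
    _ ≤ N ^ δ := Real.rpow_le_rpow_of_exponent_le hN (inv_le_of_inv_le₀ hδ hm)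

lemma approx_threshold {c m H N : ℕ} (hc : 1 ≤ c)
    (hN : ((c * (m + 1) + 1) * (H + 1)) ^ (c * (m + 1) + 1) ≤ N) :
    2 ≤ N ∧ H + 1 ≤ N ∧ ((c * (H + 1)) ^ c) ^ m ≤ N := by
  have hcm : 2 ≤ c * (m + 1) + 1 := by nlinarith
  have hbase : (c * (m + 1) + 1) * (H + 1) ≤ N := (Nat.le_self_pow (by omega) _).trans hN
  refine ⟨by nlinarith, by nlinarith, le_trans ?_ hN⟩
  rw [← pow_mul]
  calc (c * (H + 1)) ^ (c * m) ≤ ((c * (m + 1) + 1) * (H + 1)) ^ (c * m) := by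
        gcongr
        nlinarith
    _ ≤ ((c * (m + 1) + 1) * (H + 1)) ^ (c * (m + 1) + 1) :=
        Nat.pow_le_pow_right (by positivity) (by nlinarith)

lemma natCast_mul_pow_mul_rpow_le {N J k : ℕ} {L σ : ℝ} (hN : 2 ≤ N) :
    (J : ℝ) * (N : ℝ) ^ k * (N * ((N : ℝ) ^ L) ^ (-σ)) ≤ (N : ℝ) ^ (J + k + 1 - σ * L) := by
  have hN0 : (0 : ℝ) < N := by positivity
  have hJ : (J : ℝ) ≤ (N : ℝ) ^ J := by
    exact_mod_cast (Nat.lt_pow_self (by omega : 1 < N)).le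
  calc (J : ℝ) * (N : ℝ) ^ k * (N * ((N : ℝ) ^ L) ^ (-σ))
      ≤ (N : ℝ) ^ J * (N : ℝ) ^ k * (N * ((N : ℝ) ^ L) ^ (-σ)) := by gcongr
    _ = (N : ℝ) ^ (J + k + 1 - σ * L) := by
        rw [← Real.rpow_mul hN0.le, sub_eq_add_neg, Real.rpow_add hN0, Real.rpow_add hN0,
          Real.rpow_add hN0, Real.rpow_natCast, Real.rpow_natCast, Real.rpow_one,
          show L * -σ = -(σ * L) by ring]
        ring

-- If `M = N ^ L` with `L` large, the Padé bound with `k` close to `L / e` is contradictory for any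
-- `e` between `1 / σ` and `card ι - 1`.
theorem exists_simultaneousApprox_lt (ι : Type*) [Fintype ι] {p : ℕ} (hp : p.Prime)
    {σ : ℝ} (hσ0 : 0 < σ) (hσ : 1 < σ * ((Fintype.card ι : ℝ) - 1)) :
    ∃ c K : ℕ, ∀ {H N : ℕ} {b : ι → ℕ} {v : ι → ℤ} {l M : ℝ}, Function.Injective b →
      (∀ j, b j ≤ H) → (c * (H + 1)) ^ c ≤ N → SimultaneousApprox p σ N b v l M →
      M < (N : ℝ) ^ K := by
  obtain ⟨e, δ, he, hδ, heJ, hσe⟩ := exists_between_inv_and hσ0 hσ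
  have hJ : 2 ≤ Fintype.card ι := by
    have : (1 : ℝ) < Fintype.card ι := by linarith
    exact_mod_cast this
  obtain ⟨c, hc, hpade⟩ := exists_pade_lower_bound ι hp hJ
  obtain ⟨m, hm⟩ := exists_nat_ge δ⁻¹
  obtain ⟨K, hK⟩ := exists_nat_ge (e * ((2 * Fintype.card ι + 3) / δ + 1))
  refine ⟨c * (m + 1) + 1, K, fun {H N b v l M} hb hbH hN hv => ?_⟩
  by_contra! hM
  obtain ⟨hN2, hHN, hκ⟩ := approx_threshold hc hN
  have hN2' : (2 : ℝ) ≤ N := by exact_mod_cast hN2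
  have hN0 : (0 : ℝ) < N := by linarith
  have hN1 : (1 : ℝ) ≤ N := by linarith
  obtain ⟨L, rfl⟩ : ∃ L : ℝ, (N : ℝ) ^ L = M :=
    ⟨Real.logb N M, Real.rpow_logb hN0 (by linarith) ((pow_pos hN0 K).trans_le hM)⟩
  have hKL : (K : ℝ) ≤ L := by
    rwa [← Real.rpow_natCast, Real.rpow_le_rpow_left_iff (by linarith)] at hM
  obtain ⟨k, hk, hkL, hLk, hδk⟩ := exists_nat_exponent_between he hδ
    (by positivity : 0 < 2 * (Fintype.card ι : ℝ) + 3) (hK.trans hKL)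
  have hp1 : 1 / (p : ℝ) ≤ 1 := by
    rw [div_le_one (by exact_mod_cast hp.pos)]
    exact_mod_cast hp.one_lt.le
  refine absurd (hpade H N b hb hbH hHN k hk v l _ hv.nonneg hv.ne_zero hv.abs_sub_le)
    (not_le.2 (rpow_mul_add_lt_one (δ := δ) hN2' (by positivity) ?_ ?_ ?_))
  · exact le_rpow_of_pow_le hδ hm hN1 (by positivity) (by exact_mod_cast hκ)
  · calc l * (N : ℝ) ^ (1 / (p : ℝ) - ((Fintype.card ι : ℝ) - 1) * k)
        ≤ (N : ℝ) ^ L * (N : ℝ) ^ (1 / (p : ℝ) - ((Fintype.card ι : ℝ) - 1) * k) := by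
          gcongr
          exact hv.le
      _ ≤ (N : ℝ) ^ (-(δ * k) - 2) := by
          rw [← Real.rpow_add hN0]
          refine Real.rpow_le_rpow_of_exponent_le hN1 ?_
          nlinarith
  · refine (natCast_mul_pow_mul_rpow_le hN2).trans (Real.rpow_le_rpow_of_exponent_le hN1 ?_)
    nlinarith

-- By `hlarge` a pair with small first entry has bounded second entry; by `hgap` the others do.
lemma finite_of_large_of_gap {q : ℕ} (hq : 1 < q) {S : Set (ℕ × ℕ)} {C : ℕ} (hC : 1 ≤ C)
    (hlarge : ∃ b₀, ∀ x ∈ S, b₀ ≤ x.1 → C * (3 ^ x.1) ^ C ≤ q ^ x.2)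
    (hgap : ∀ x ∈ S, C * (3 ^ x.1) ^ C ≤ q ^ x.2 →
      ∃ K, ∀ x' ∈ S, C * (3 ^ x'.1) ^ C ≤ q ^ x'.2 → x'.2 ≤ K) :
    S.Finite := by
  obtain ⟨b₀, hb₀⟩ := hlarge
  have hsmall : {x ∈ S | ¬ C * (3 ^ x.1) ^ C ≤ q ^ x.2}.Finite := by
    refine ((Set.finite_lt_nat b₀).prod (Set.finite_lt_nat (C * (3 ^ b₀) ^ C))).subset ?_
    rintro ⟨b, a⟩ ⟨hx, hlt⟩
    have hb : b < b₀ := not_le.1 fun hle => hlt (hb₀ _ hx hle)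
    refine ⟨hb, ?_⟩
    calc a < q ^ a := Nat.lt_pow_self hq
      _ < C * (3 ^ b) ^ C := not_le.1 hlt
      _ ≤ C * (3 ^ b₀) ^ C := by gcongr; norm_num
  have hbig : {x ∈ S | C * (3 ^ x.1) ^ C ≤ q ^ x.2}.Finite := by
    rcases Set.eq_empty_or_nonempty {x ∈ S | C * (3 ^ x.1) ^ C ≤ q ^ x.2} with hemp | ⟨x, hx, hle⟩
    · exact hemp ▸ Set.finite_empty
    obtain ⟨K, hK⟩ := hgap x hx hle
    refine ((Set.finite_lt_nat (q ^ K)).prod (Set.finite_le_nat K)).subset ?_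
    rintro ⟨b, a⟩ ⟨hx', hle'⟩
    refine ⟨?_, hK _ hx' hle'⟩
    calc b < 3 ^ b := Nat.lt_pow_self (by norm_num)
      _ ≤ (3 ^ b) ^ C := Nat.le_self_pow (by omega) _
      _ ≤ C * (3 ^ b) ^ C := Nat.le_mul_of_pos_left _ hC
      _ ≤ q ^ a := hle'
      _ ≤ q ^ K := Nat.pow_le_pow_right (by omega) (hK _ hx' hle')
  refine (hsmall.union hbig).subset fun x hx => ?_
  by_cases hle : C * (3 ^ x.1) ^ C ≤ q ^ x.2
  · exact Or.inr ⟨hx, hle⟩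
  · exact Or.inl ⟨hx, hle⟩

end

/-! ### Rational solutions -/

section

instance : Fact (Nat.Prime 3) := ⟨Nat.prime_three⟩

lemma nine_pow_eq_three_pow_sq {M : Type*} [CommSemiring M] (b : ℕ) :
    (9 : M) ^ b = (3 ^ b) ^ 2 := by
  rw [← pow_mul, mul_comm, pow_mul]
  norm_num

lemma padicValRat_three_pow (d : ℕ) : padicValRat 3 ((3 : ℚ) ^ d) = d := by
  have hself : padicValRat 3 3 = 1 := by exact_mod_cast padicValRat.self (p := 3) (by norm_num)
  rw [padicValRat.pow, hself, mul_one]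

-- If `d ≠ 3 * v(t)`, then the left side has valuation `min d (3 * v(t))`, less than the right side.
lemma eq_three_mul_padicValRat {d b : ℕ} (hd : 1 ≤ d) (hb : 1 ≤ b) {t : ℚ}
    (h : 3 ^ d + t ^ 3 = 9 ^ b * (3 ^ d + t) ^ 3) : (d : ℤ) = 3 * padicValRat 3 t := by
  have h3d : padicValRat 3 ((3 : ℚ) ^ d) = d := padicValRat_three_pow d
  have ht3 : padicValRat 3 (t ^ 3) = 3 * padicValRat 3 t := by simp
  have hval (hne : 3 ^ d + t ≠ 0) :
      padicValRat 3 (3 ^ d + t ^ 3) = 2 * b + 3 * padicValRat 3 (3 ^ d + t) := by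
    rw [h, padicValRat.mul (by positivity) (pow_ne_zero 3 hne),
      show (9 : ℚ) ^ b = 3 ^ (2 * b) by rw [pow_mul]; norm_num, padicValRat_three_pow,
      padicValRat.pow]
    push_cast
    ring
  rcases eq_or_ne t 0 with rfl | ht
  · have := hval (by positivity)
    simp only [ne_eq, OfNat.ofNat_ne_zero, not_false_eq_true, zero_pow, add_zero, h3d] at this
    omega
  rcases eq_or_ne (3 ^ d + t ^ 3) 0 with hzero | hne
  · rw [← h3d, ← ht3, eq_neg_of_add_eq_zero_left hzero, padicValRat.neg]
  have hne' : 3 ^ d + t ≠ 0 := fun hzero => hne (by rw [h, hzero]; ring)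
  have hmin := padicValRat.min_le_padicValRat_add (p := 3) hne'
  have hval := hval hne'
  rw [h3d] at hmin
  rcases lt_trichotomy (d : ℤ) (3 * padicValRat 3 t) with hlt | heq | hgt
  · rw [padicValRat.add_eq_of_lt hne (by positivity) (pow_ne_zero 3 ht) (by rwa [h3d, ht3]),
      h3d] at hval
    omega
  · exact heq
  · rw [add_comm, padicValRat.add_eq_of_lt (by rwa [add_comm]) (pow_ne_zero 3 ht) (by positivity)
      (by rwa [h3d, ht3]), ht3] at hval
    omega

lemma exists_isCoprime_cube_eq {b c : ℕ} {u : ℚ} (h : 1 + u ^ 3 = 9 ^ b * (9 ^ c + u) ^ 3) :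
    ∃ x z : ℤ, 0 < x ∧ IsCoprime x z ∧ x ^ 3 + z ^ 3 = 9 ^ b * (9 ^ c * x + z) ^ 3 := by
  refine ⟨u.den, u.num, by exact_mod_cast u.den_pos, (Rat.isCoprime_num_den u).symm, ?_⟩
  have hu : u * u.den = u.num := Rat.mul_den_eq_num u
  have : ((u.den : ℚ) ^ 3 + u.num ^ 3) = 9 ^ b * (9 ^ c * u.den + u.num) ^ 3 := by
    rw [← hu]
    linear_combination (u.den : ℚ) ^ 3 * h
  exact_mod_cast this

lemma nine_pow_mul_add_nonpos {b c : ℕ} (hb : 1 ≤ b) (hc : 1 ≤ c) {x z : ℤ} (hx : 0 < x)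
    (h : x ^ 3 + z ^ 3 = 9 ^ b * (9 ^ c * x + z) ^ 3) : 9 ^ c * x + z ≤ 0 := by
  obtain ⟨s, hs⟩ : ∃ s, s = 9 ^ c * x + z := ⟨_, rfl⟩
  rw [← hs] at h ⊢
  by_contra! hspos
  have hb9 : (9 : ℤ) ≤ 9 ^ b := le_self_pow₀ (by norm_num) (by omega)
  have hc9 : (9 : ℤ) ≤ 9 ^ c := le_self_pow₀ (by norm_num) (by omega)
  have hs3 : 9 * s ^ 3 ≤ 9 ^ b * s ^ 3 := by gcongr
  have hx9 : 9 * x ≤ 9 ^ c * x := by gcongr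
  have hs3pos : 0 < s ^ 3 := by positivity
  rcases le_or_gt x s with hxs | hsx
  · have hx3 : x ^ 3 ≤ s ^ 3 := by gcongr
    have hz3 : z ^ 3 ≤ s ^ 3 := Odd.pow_le_pow (by decide) |>.2 (by linarith)
    linarith
  · have hz3 : z ^ 3 < (-x) ^ 3 := Odd.pow_lt_pow (by decide) |>.2 (by linarith)
    rw [Odd.neg_pow (by decide)] at hz3
    linarith

/-- A primitive solution of `y ^ 3 = X ^ 3 + 9 ^ b * W ^ 3` in positive integers, with `y` equal to
`9 ^ c * X + W`. The rational solutions `t` of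
`3 ^ (b + 3 * c) + 3 ^ b * t ^ 3 = (3 ^ (b + 3 * c) + 3 ^ b * t) ^ 3` are the numbers
`-(3 ^ c * y / X)` obtained from these. -/
structure NormalizedSolution (b c X W y : ℕ) : Prop where
  one_le_b : 1 ≤ b
  one_le_c : 1 ≤ c
  X_pos : 0 < X
  W_pos : 0 < W
  y_eq : y = 9 ^ c * X + W
  cube_eq : y ^ 3 = X ^ 3 + 9 ^ b * W ^ 3
  coprime : Nat.Coprime y X
  not_dvd : ¬ 3 ∣ W

lemma not_three_dvd_of_cube_eq {b : ℕ} (hb : 1 ≤ b) {x z s : ℤ} (hxz : IsCoprime x z)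
    (h : x ^ 3 + z ^ 3 = 9 ^ b * s ^ 3) : ¬ 3 ∣ z := by
  intro hz
  have hx : (3 : ℤ) ∣ x ^ 3 := by
    rw [eq_sub_of_add_eq h]
    exact dvd_sub (((by norm_num : (3 : ℤ) ∣ 9).trans (dvd_pow_self 9 (by omega))).mul_right _)
      (hz.trans (dvd_pow_self z (by norm_num)))
  exact Int.prime_three.not_isUnit (hxz.isUnit_of_dvd' (Int.prime_three.dvd_of_dvd_pow hx) hz)

lemma exists_normalizedSolution_of_isCoprime {b c : ℕ} (hb : 1 ≤ b) (hc : 1 ≤ c) {x z : ℤ}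
    (hx : 0 < x) (hxz : IsCoprime x z) (h : x ^ 3 + z ^ 3 = 9 ^ b * (9 ^ c * x + z) ^ 3) :
    ∃ X W y, NormalizedSolution b c X W y := by
  have hz : ¬ 3 ∣ z := not_three_dvd_of_cube_eq hb hxz h
  obtain ⟨W, hW⟩ : ∃ W : ℕ, -(9 ^ c * x + z) = W :=
    Int.eq_ofNat_of_zero_le (neg_nonneg.2 (nine_pow_mul_add_nonpos hb hc hx h))
  lift x to ℕ using hx.le
  obtain rfl : z = -(9 ^ c * x + W) := by linarith
  have hW3 : ¬ 3 ∣ W := fun hdvd => hz <| (dvd_neg.2 <| dvd_add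
    (((by norm_num : (3 : ℤ) ∣ 9).trans (dvd_pow_self 9 (by omega))).mul_right _)
    (by exact_mod_cast hdvd))
  refine ⟨x, W, 9 ^ c * x + W, hb, hc, by exact_mod_cast hx, ?_, rfl, ?_, ?_, hW3⟩
  · exact Nat.pos_of_ne_zero fun hW0 => hW3 (hW0 ▸ dvd_zero 3)
  · zify
    linear_combination -h
  · rw [← Nat.isCoprime_iff_coprime]
    push_cast
    exact (neg_neg (9 ^ c * (x : ℤ) + W) ▸ hxz.neg_right).symm

lemma exists_normalizedSolution {d b : ℕ} (hd : 1 ≤ d) (hb : 1 ≤ b) {t : ℚ}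
    (h : 3 ^ d + t ^ 3 = 9 ^ b * (3 ^ d + t) ^ 3) :
    ∃ c X W y, d = 3 * c ∧ NormalizedSolution b c X W y := by
  have hval := eq_three_mul_padicValRat hd hb h
  obtain ⟨c, hc⟩ := Int.eq_ofNat_of_zero_le (by omega : 0 ≤ padicValRat 3 t)
  obtain rfl : d = 3 * c := by omega
  have h3c : (3 : ℚ) ^ c ≠ 0 := by positivity
  have hu : 1 + (t / 3 ^ c) ^ 3 = 9 ^ b * (9 ^ c + t / 3 ^ c) ^ 3 := by
    rw [nine_pow_eq_three_pow_sq c]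
    field_simp
    rw [← pow_mul, mul_comm c 3]
    linear_combination h
  obtain ⟨x, z, hx, hxz, hxz3⟩ := exists_isCoprime_cube_eq hu
  obtain ⟨X, W, y, hsol⟩ := exists_normalizedSolution_of_isCoprime hb (by omega) hx hxz hxz3
  exact ⟨c, X, W, y, rfl, hsol⟩

namespace NormalizedSolution

variable {b c X W y : ℕ} (h : NormalizedSolution b c X W y)
include h

lemma X_le : X ≤ 9 ^ b := by
  have hXW : IsCoprime (X : ℤ) W := by
    have := h.coprime
    rw [h.y_eq, mul_comm, Nat.coprime_mul_left_add_left] at this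
    exact Nat.isCoprime_iff_coprime.2 this.symm
  have hcube : (9 ^ c * X + W : ℤ) ^ 3 = X ^ 3 + 9 ^ b * W ^ 3 := by
    exact_mod_cast h.y_eq ▸ h.cube_eq
  have hdvd : (X : ℤ) ∣ (9 ^ b - 1) * W ^ 3 :=
    ⟨(9 ^ c) ^ 3 * X ^ 2 + 3 * (9 ^ c) ^ 2 * X * W + 3 * 9 ^ c * W ^ 2 - X ^ 2, by
      linear_combination -hcube⟩
  have hb9 : (9 : ℤ) ≤ 9 ^ b := le_self_pow₀ (by norm_num) (by have := h.one_le_b; omega)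
  have hle := Int.le_of_dvd (by linarith) (hXW.pow_right.dvd_of_dvd_mul_right hdvd)
  exact_mod_cast (by linarith : (X : ℤ) ≤ 9 ^ b)

lemma two_mul_W_le : 2 * W ≤ y := by
  have hb9 : 9 * W ^ 3 ≤ 9 ^ b * W ^ 3 :=
    Nat.mul_le_mul_right _ (Nat.le_self_pow (by have := h.one_le_b; omega) 9)
  have hcube : (2 * W) ^ 3 ≤ y ^ 3 := by
    rw [h.cube_eq, mul_pow]
    omega
  exact (Nat.pow_le_pow_iff_left (by norm_num)).1 hcube

lemma y_le : y ≤ 2 * 9 ^ c * 9 ^ b := by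
  have := h.two_mul_W_le
  have := h.y_eq
  have : 9 ^ c * X ≤ 9 ^ c * 9 ^ b := Nat.mul_le_mul_left _ h.X_le
  rw [mul_assoc]
  omega

lemma nine_pow_mul_X_le : 9 ^ c * X ≤ y := by
  rw [h.y_eq]
  omega

lemma nine_pow_le : 9 ^ c ≤ y :=
  (Nat.le_mul_of_pos_right _ h.X_pos).trans h.nine_pow_mul_X_le

lemma X_le_y : X ≤ y :=
  (Nat.le_mul_of_pos_left _ (by positivity)).trans h.nine_pow_mul_X_le

lemma nine_pow_le_mul_cube : 9 ^ c ≤ 9 ^ b * W ^ 3 := by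
  have hc9 : 9 ≤ 9 ^ c := Nat.le_self_pow (by have := h.one_le_c; omega) 9
  have hX : 1 ≤ X ^ 3 := Nat.one_le_pow _ _ h.X_pos
  have hlower : (9 ^ c * X) ^ 3 ≤ X ^ 3 + 9 ^ b * W ^ 3 :=
    h.cube_eq ▸ Nat.pow_le_pow_left h.nine_pow_mul_X_le 3
  have hcube : 9 ^ c + 1 ≤ (9 ^ c) ^ 3 := by nlinarith [Nat.mul_le_mul hc9 hc9]
  rw [mul_pow] at hlower
  nlinarith [Nat.mul_le_mul_right (X ^ 3) hcube, Nat.mul_le_mul_left (9 ^ c) hX]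

lemma cubeSum : CubeSum (2 * b) y (-X) W where
  isCoprime := (Nat.isCoprime_iff_coprime.2 h.coprime).neg_right
  eq := by
    have hcube : (y : ℤ) ^ 3 = X ^ 3 + 9 ^ b * W ^ 3 := by exact_mod_cast h.cube_eq
    rw [pow_mul]
    linear_combination hcube
  not_dvd := by exact_mod_cast h.not_dvd

lemma three_pow_pow_le {l : ℕ} (hl : 2 * l + 2 ≤ b) : (3 ^ b) ^ 6 ^ l ≤ 2 * y ^ 2 := by
  obtain ⟨e, he⟩ : ∃ e, 2 * b = e + 3 + 3 * l := ⟨2 * b - 3 - 3 * l, by omega⟩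
  have hsize := CubeSum.three_pow_pow_le l (he ▸ h.cubeSum)
  have hXy : X ^ 2 ≤ y ^ 2 := Nat.pow_le_pow_left h.X_le_y 2
  rw [neg_sq] at hsize
  calc (3 ^ b) ^ 6 ^ l ≤ (3 ^ (2 * e + 3)) ^ 6 ^ l := by
        gcongr
        · norm_num
        · omega
    _ ≤ y ^ 2 + X ^ 2 := by exact_mod_cast hsize
    _ ≤ 2 * y ^ 2 := by omega

end NormalizedSolution

lemma exists_forall_normalizedSolution_le (C : ℕ) :
    ∃ b₀, ∀ {b c X W y : ℕ}, NormalizedSolution b c X W y → b₀ ≤ b → C * (3 ^ b) ^ C ≤ 9 ^ c := by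
  obtain ⟨l, hl⟩ : ∃ l, 2 * C + 8 ≤ 6 ^ l := ⟨2 * C + 8, (Nat.lt_pow_self (by norm_num)).le⟩
  refine ⟨2 * l + 2 + 8 * C ^ 2, fun {b c X W y} h hb => ?_⟩
  by_contra! hlt
  have hC : 8 * C ^ 2 ≤ (3 ^ b) ^ 4 :=
    calc 8 * C ^ 2 ≤ b := by omega
      _ ≤ 3 ^ b := (Nat.lt_pow_self (by norm_num)).le
      _ ≤ (3 ^ b) ^ 4 := Nat.le_self_pow (by norm_num) _
  refine lt_irrefl ((3 ^ b) ^ (2 * C + 8)) ?_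
  calc (3 ^ b) ^ (2 * C + 8) ≤ (3 ^ b) ^ 6 ^ l := Nat.pow_le_pow_right (by positivity) hl
    _ ≤ 2 * y ^ 2 := h.three_pow_pow_le (by omega)
    _ ≤ 2 * (2 * 9 ^ c * 9 ^ b) ^ 2 := by gcongr; exact h.y_le
    _ = (9 ^ c) ^ 2 * (8 * (3 ^ b) ^ 4) := by rw [nine_pow_eq_three_pow_sq b]; ring
    _ < (C * (3 ^ b) ^ C) ^ 2 * (8 * (3 ^ b) ^ 4) := by gcongr
    _ = 8 * C ^ 2 * (3 ^ b) ^ (2 * C + 4) := by ring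
    _ ≤ (3 ^ b) ^ 4 * (3 ^ b) ^ (2 * C + 4) := by gcongr
    _ = (3 ^ b) ^ (2 * C + 8) := by ring

lemma abs_sub_le_of_cube_eq {x z s : ℝ} (hx : 0 < x) (hz : 0 ≤ z) (hs : 0 ≤ s)
    (h : x ^ 3 = s + z ^ 3) : |x - z| ≤ s / x ^ 2 := by
  have hzx : z ≤ x := le_of_pow_le_pow_left₀ three_ne_zero hx.le (by linarith)
  rw [abs_of_nonneg (sub_nonneg.2 hzx), le_div_iff₀ (by positivity)]
  nlinarith [mul_nonneg (sub_nonneg.2 hzx) (by positivity : 0 ≤ x * z + z ^ 2)]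

lemma pow_three_div_sq_le_rpow {x s : ℝ} (hx : 0 < x) (h : s ^ 6 ≤ x) :
    s ^ 3 / x ^ 2 ≤ x ^ (-(3 / 2) : ℝ) := by
  have hsqrt : s ^ 3 ≤ x ^ (1 / 2 : ℝ) := by
    rw [← Real.sqrt_eq_rpow]
    exact Real.le_sqrt_of_sq_le (by rwa [← pow_mul])
  calc s ^ 3 / x ^ 2 ≤ x ^ (1 / 2 : ℝ) / x ^ 2 := by gcongr
    _ = x ^ (-(3 / 2) : ℝ) := by
        rw [← Real.rpow_natCast x 2, ← Real.rpow_sub hx]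
        norm_num

lemma cube_rpow_one_div_three {z : ℝ} (hz : 0 ≤ z) : (z ^ 3) ^ (1 / ((3 : ℕ) : ℝ)) = z := by
  rw [one_div]
  exact Real.pow_rpow_inv_natCast hz three_ne_zero

-- `y' / w'` approximates the cube root of `β` so well that `w * y'` and `y * w'` are close to
-- `w' * N ^ (1/3)` and `w' * (N + X ^ 3) ^ (1/3)` for `N = β * w ^ 3`.
lemma simultaneousApprox_of_cube_eq {β w X y w' X' y' : ℕ} (hβ : 0 < β) (hw : 0 < w) (hw' : 0 < w')
    (h : y ^ 3 = X ^ 3 + β * w ^ 3) (h' : y' ^ 3 = X' ^ 3 + β * w' ^ 3) (hX' : X' ^ 6 ≤ y') :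
    SimultaneousApprox 3 (3 / 2) (β * w ^ 3) ![0, X ^ 3] ![(w * y' : ℤ), y * w'] w' y' := by
  obtain ⟨γ, hγ, hγβ⟩ : ∃ γ : ℝ, 0 ≤ γ ∧ γ ^ 3 = β :=
    ⟨(β : ℝ) ^ (1 / 3 : ℝ), by positivity, by
      rw [← Real.rpow_natCast, ← Real.rpow_mul (by positivity)]
      norm_num⟩
  have hw'y' : w' ≤ y' := by
    refine (Nat.pow_le_pow_iff_left three_ne_zero).1 (h' ▸ ?_)
    exact (Nat.le_mul_of_pos_left _ hβ).trans (Nat.le_add_left _ _)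
  have hy' : (0 : ℝ) < y' := by exact_mod_cast hw'.trans_le hw'y'
  have hw_le : w ≤ β * w ^ 3 :=
    (Nat.le_self_pow three_ne_zero w).trans (Nat.le_mul_of_pos_left _ hβ)
  have herror : |(y' : ℝ) - γ * w'| ≤ (y' : ℝ) ^ (-(3 / 2) : ℝ) := by
    refine (abs_sub_le_of_cube_eq (s := (X' : ℝ) ^ 3) hy' (by positivity) (by positivity) ?_).trans
      (pow_three_div_sq_le_rpow hy' (by exact_mod_cast hX'))
    rw [mul_pow, hγβ]
    exact_mod_cast h'
  refine ⟨by positivity, by exact_mod_cast hw'y', fun hv => ?_, fun j => ?_⟩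
  · have hzero : (w : ℤ) * y' = 0 := congrFun hv 0
    have : 0 < (w : ℤ) * y' := by exact_mod_cast Nat.mul_pos hw (hw'.trans_le hw'y')
    omega
  fin_cases j
  · have hroot : ((β * w ^ 3 : ℕ) : ℝ) ^ (1 / ((3 : ℕ) : ℝ)) = γ * w := by
      rw [← cube_rpow_one_div_three (z := γ * w) (by positivity), mul_pow, hγβ]
      push_cast
      rfl
    simp only [Fin.zero_eta, Matrix.cons_val_zero, Nat.cast_zero, add_zero, hroot, Int.cast_mul,
      Int.cast_natCast]
    rw [show (w : ℝ) * y' - w' * (γ * w) = w * (y' - γ * w') by ring, abs_mul, Nat.abs_cast]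
    gcongr
  · have hroot : (((β * w ^ 3 : ℕ) : ℝ) + ((X ^ 3 : ℕ) : ℝ)) ^ (1 / ((3 : ℕ) : ℝ)) = y := by
      rw [← cube_rpow_one_div_three (z := y) (by positivity), ← Nat.cast_add, add_comm, ← h]
      push_cast
      rfl
    simp only [Fin.mk_one, Matrix.cons_val_one, Matrix.cons_val_zero, hroot, Int.cast_mul,
      Int.cast_natCast]
    rw [mul_comm, sub_self, abs_zero]
    positivity

lemma nine_pow_mul_cube_eq (b W : ℕ) :
    9 ^ b * W ^ 3 = 9 ^ (b % 3) * (9 ^ (b / 3) * W) ^ 3 := by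
  rw [mul_pow, ← pow_mul, ← mul_assoc, ← pow_add]
  congr 2
  omega

namespace NormalizedSolution

variable {b c X W y : ℕ} (h : NormalizedSolution b c X W y)
include h

lemma simultaneousApprox {b' c' X' W' y' : ℕ} (h' : NormalizedSolution b' c' X' W' y')
    (hmod : b' % 3 = b % 3) (hX' : X' ^ 6 ≤ y') :
    ∃ (v : Fin 2 → ℤ) (l : ℝ), SimultaneousApprox 3 (3 / 2) (9 ^ b * W ^ 3) ![0, X ^ 3] v l y' := by
  have hcube := h.cube_eq
  have hcube' := h'.cube_eq
  rw [nine_pow_mul_cube_eq] at hcube hcube' ⊢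
  rw [hmod] at hcube'
  have hW := h.W_pos
  have hW' := h'.W_pos
  exact ⟨_, _, simultaneousApprox_of_cube_eq (by positivity) (by positivity) (by positivity) hcube
    hcube' hX'⟩

lemma mul_pow_le {m C : ℕ} (hm : (2 * m) ^ m ≤ C) (hmC : 6 * m ≤ C)
    (hlarge : C * (3 ^ b) ^ C ≤ 9 ^ c) : (m * (X ^ 3 + 1)) ^ m ≤ 9 ^ b * W ^ 3 := by
  have hX : X ^ 3 + 1 ≤ 2 * (3 ^ b) ^ 6 := by
    have hX3 : X ^ 3 ≤ (3 ^ b) ^ 6 :=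
      calc X ^ 3 ≤ (9 ^ b) ^ 3 := by gcongr; exact h.X_le
        _ = (3 ^ b) ^ 6 := by rw [nine_pow_eq_three_pow_sq]; ring
    have : 1 ≤ (3 ^ b) ^ 6 := Nat.one_le_pow _ _ (by positivity)
    omega
  calc (m * (X ^ 3 + 1)) ^ m ≤ (m * (2 * (3 ^ b) ^ 6)) ^ m := by gcongr
    _ = (2 * m) ^ m * (3 ^ b) ^ (6 * m) := by
        rw [pow_mul, ← mul_pow]
        ring
    _ ≤ C * (3 ^ b) ^ C := Nat.mul_le_mul hm (Nat.pow_le_pow_right (by positivity) hmC)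
    _ ≤ 9 ^ b * W ^ 3 := hlarge.trans h.nine_pow_le_mul_cube

lemma X_pow_six_le {C : ℕ} (hC : 12 ≤ C) (hlarge : C * (3 ^ b) ^ C ≤ 9 ^ c) : X ^ 6 ≤ y :=
  calc X ^ 6 ≤ (9 ^ b) ^ 6 := by gcongr; exact h.X_le
    _ = (3 ^ b) ^ 12 := by rw [nine_pow_eq_three_pow_sq]; ring
    _ ≤ (3 ^ b) ^ C := Nat.pow_le_pow_right (by positivity) hC
    _ ≤ C * (3 ^ b) ^ C := Nat.le_mul_of_pos_left _ (by omega)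
    _ ≤ y := hlarge.trans h.nine_pow_le

end NormalizedSolution

theorem finite_normalizedSolution_of_mod_three (r : ℕ) :
    {x : ℕ × ℕ | x.1 % 3 = r ∧ ∃ X W y, NormalizedSolution x.1 x.2 X W y}.Finite := by
  obtain ⟨m, K, hgap⟩ := exists_simultaneousApprox_lt (Fin 2) Nat.prime_three
    (σ := 3 / 2) (by norm_num) (by norm_num)
  obtain ⟨C, hmC, hmC', hC⟩ : ∃ C, (2 * m) ^ m ≤ C ∧ 6 * m ≤ C ∧ 12 ≤ C :=
    ⟨(2 * m) ^ m + 6 * m + 12, by omega, by omega, by omega⟩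
  obtain ⟨b₀, hb₀⟩ := exists_forall_normalizedSolution_le C
  refine finite_of_large_of_gap (q := 9) (by norm_num) (C := C) (by omega)
    ⟨b₀, fun x ⟨_, X, W, y, h⟩ => hb₀ h⟩ ?_
  rintro ⟨b, c⟩ ⟨hr, X, W, y, h⟩ hlarge
  refine ⟨(9 ^ b * W ^ 3) ^ K, ?_⟩
  rintro ⟨b', c'⟩ ⟨hr', X', W', y', h'⟩ hlarge'
  obtain ⟨v, l, hv⟩ := h.simultaneousApprox h' (hr'.trans hr.symm) (h'.X_pow_six_le hC hlarge')
  have hX : 0 < X ^ 3 := pow_pos h.X_pos 3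
  have hinj : Function.Injective ![0, X ^ 3] := by
    intro i j hij
    fin_cases i <;> fin_cases j <;> simp_all [hX.ne]
  have hle : ∀ j, ![0, X ^ 3] j ≤ X ^ 3 := by simp [Fin.forall_fin_two]
  have hy' : y' < (9 ^ b * W ^ 3) ^ K := by
    exact_mod_cast hgap hinj hle (h.mul_pow_le hmC hmC' hlarge) hv
  calc c' ≤ 9 ^ c' := (Nat.lt_pow_self (by norm_num)).le
    _ ≤ y' := h'.nine_pow_le
    _ ≤ (9 ^ b * W ^ 3) ^ K := hy'.le

theorem finite_normalizedSolution :
    {x : ℕ × ℕ | ∃ X W y, NormalizedSolution x.1 x.2 X W y}.Finite := by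
  refine ((Set.finite_lt_nat 3).biUnion fun r _ => finite_normalizedSolution_of_mod_three r).subset
    fun x hx => ?_
  exact Set.mem_biUnion (Nat.mod_lt x.1 (by norm_num)) ⟨rfl, hx⟩

theorem finite_rational_solutions :
    {x : ℕ × ℕ | 0 < x.2 ∧ x.2 < x.1 ∧
      ∃ t : ℚ, 3 ^ x.1 + 3 ^ x.2 * t ^ 3 = (3 ^ x.1 + 3 ^ x.2 * t) ^ 3}.Finite := by
  refine (finite_normalizedSolution.image fun x => (x.1 + 3 * x.2, x.1)).subset ?_
  rintro ⟨a, b⟩ ⟨hb, hba, t, ht⟩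
  obtain ⟨d, rfl : a = b + d + 1⟩ := Nat.exists_eq_add_of_lt hba
  have hreduced : (3 : ℚ) ^ (d + 1) + t ^ 3 = 9 ^ b * (3 ^ (d + 1) + t) ^ 3 := by
    refine mul_left_cancel₀ (pow_ne_zero b three_ne_zero : (3 : ℚ) ^ b ≠ 0) ?_
    rw [nine_pow_eq_three_pow_sq]
    linear_combination ht
  obtain ⟨c, X, W, y, hc, hsol⟩ := exists_normalizedSolution (by omega) hb hreduced
  exact ⟨(b, c), ⟨X, W, y, hsol⟩, Prod.ext (by dsimp only; omega) rfl⟩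

end

/-! ### Growth of Pell solutions divisible by a prime power -/

section

open Pell

lemma padicValNat_eq_of_modEq {p A B M : ℕ} [Fact p.Prime] (hA : A ≠ 0) (hB : B ≠ 0)
    (h : A ≡ B [MOD M]) (hlt : padicValNat p B < padicValNat p M) :
    padicValNat p A = padicValNat p B := by
  have hdvd {k : ℕ} (hk : k ≤ padicValNat p M) : k ≤ padicValNat p A ↔ k ≤ padicValNat p B := by
    rw [← padicValNat_dvd_iff_le hA, ← padicValNat_dvd_iff_le hB]
    exact (h.of_dvd ((pow_dvd_pow p hk).trans pow_padicValNat_dvd)).dvd_iff dvd_rfl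
  have hle := (hdvd hlt.le).2 le_rfl
  have hge := (hdvd (Nat.succ_le_of_lt hlt)).not.2 (Nat.not_succ_le_self _)
  omega

variable {a : ℕ} (a1 : 1 < a)

lemma yn_ne_zero {n : ℕ} (hn : n ≠ 0) : yn a1 n ≠ 0 :=
  ((Nat.pos_of_ne_zero hn).trans_le (yn_ge_n a1 n)).ne'

lemma not_dvd_xn_of_dvd_yn {p n : ℕ} (hp : p ≠ 1) (h : p ∣ yn a1 n) : ¬ p ∣ xn a1 n := fun hx =>
  hp (Nat.dvd_one.1 ((xy_coprime a1 n) ▸ Nat.dvd_gcd hx h))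

lemma padicValNat_yn_mul_of_le_one {p n k : ℕ} [Fact p.Prime] (hn : n ≠ 0) (hk : k ≠ 0)
    (hdvd : p ∣ yn a1 n) (hle : padicValNat p k ≤ 1) :
    padicValNat p (yn a1 (n * k)) = padicValNat p (yn a1 n) + padicValNat p k := by
  have hp : p.Prime := Fact.out
  have hy := yn_ne_zero a1 hn
  have hx : xn a1 n ^ (k - 1) ≠ 0 := pow_ne_zero _ (n_lt_xn a1 n).ne_bot
  have hval : padicValNat p (k * xn a1 n ^ (k - 1) * yn a1 n) =
      padicValNat p (yn a1 n) + padicValNat p k := by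
    rw [padicValNat.mul (mul_ne_zero hk hx) hy, padicValNat.mul hk hx, padicValNat.pow,
      padicValNat.eq_zero_of_not_dvd (not_dvd_xn_of_dvd_yn a1 hp.ne_one hdvd)]
    ring
  have hpos := one_le_padicValNat_of_dvd hy hdvd
  rw [← hval]
  refine padicValNat_eq_of_modEq (yn_ne_zero a1 (mul_ne_zero hn hk))
    (mul_ne_zero (mul_ne_zero hk hx) hy) (xy_modEq_yn a1 n k).2 ?_
  rw [hval, padicValNat.pow]
  omega

lemma padicValNat_yn_mul {p : ℕ} [Fact p.Prime] (k : ℕ) :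
    ∀ {n : ℕ}, n ≠ 0 → k ≠ 0 → p ∣ yn a1 n →
      padicValNat p (yn a1 (n * k)) = padicValNat p (yn a1 n) + padicValNat p k := by
  induction k using Nat.recOnMul with
  | zero => exact fun _ hk => absurd rfl hk
  | one => simp
  | prime q hq =>
    intro n hn hk hdvd
    have := Fact.mk hq
    refine padicValNat_yn_mul_of_le_one a1 hn hk hdvd ?_
    rcases eq_or_ne p q with rfl | hpq
    · exact padicValNat_self.le
    · exact (padicValNat_primes hpq).trans_le zero_le_one
  | mul i j hi hj =>
    intro n hn hk hdvd
    have hi0 := left_ne_zero_of_mul hk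
    have hj0 := right_ne_zero_of_mul hk
    have hdvd' : p ∣ yn a1 (n * i) := hdvd.trans ((y_dvd_iff a1 _ _).2 (dvd_mul_right n i))
    rw [← mul_assoc, hj (mul_ne_zero hn hi0) hj0 hdvd', hi hn hi0 hdvd, padicValNat.mul hi0 hj0,
      add_assoc]

lemma exists_pow_sub_le_of_pow_dvd_yn {p n : ℕ} [Fact p.Prime] (hn : n ≠ 0)
    (hdvd : p ∣ yn a1 n) : ∃ e, ∀ t b, 0 < t → p ^ b ∣ yn a1 t → p ^ (b - e) ≤ t := by
  refine ⟨padicValNat p (yn a1 n), fun t b ht hb => ?_⟩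
  have hle : b ≤ padicValNat p (yn a1 n) + padicValNat p t := by
    rw [← padicValNat_yn_mul a1 t hn ht.ne' hdvd,
      ← padicValNat_dvd_iff_le (yn_ne_zero a1 (mul_ne_zero hn ht.ne'))]
    exact hb.trans ((y_dvd_iff a1 _ _).2 (dvd_mul_left t n))
  calc p ^ (b - padicValNat p (yn a1 n)) ≤ p ^ padicValNat p t :=
        Nat.pow_le_pow_right (Fact.out : p.Prime).pos (by omega)
    _ ≤ t := Nat.le_of_dvd ht pow_padicValNat_dvd

lemma solution₁_pow_eq {d : ℤ} (g : Solution₁ d) (ha : g.x = a) (n : ℕ) :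
    (g ^ n).x = xn a1 n ∧ (g ^ n).y = g.y * yn a1 n := by
  induction n with
  | zero => simp
  | succ n ih =>
    have hprop := g.prop
    have hxn : (xn a1 (n + 1) : ℤ) = xn a1 n * a + (a * a - 1) * yn a1 n := by
      have hsucc : xn a1 (n + 1) = xn a1 n * a + (a * a - 1) * yn a1 n := xn_succ a1 n
      rw [hsucc]
      push_cast [Nat.cast_sub (by nlinarith : 1 ≤ a * a)]
      ring
    rw [ha] at hprop
    rw [pow_succ, Solution₁.x_mul, Solution₁.y_mul, ih.1, ih.2, ha, hxn, yn_succ]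
    refine ⟨by linear_combination -(yn a1 n : ℤ) * hprop, ?_⟩
    push_cast
    ring

lemma exists_eq_xn {s : ℕ} {g : Solution₁ (s : ℤ)} (hg : IsFundamental g) (ha : g.x = a)
    {x w : ℕ} (hx : 2 ≤ x) (h : x ^ 2 = 1 + s * w ^ 2) : ∃ j, 0 < j ∧ x = xn a1 j := by
  have hprop : (x : ℤ) ^ 2 - s * (w : ℤ) ^ 2 = 1 := by
    rw [sub_eq_iff_eq_add]
    exact_mod_cast h
  obtain ⟨j, hj⟩ := hg.eq_pow_of_nonneg (a := Solution₁.mk x w hprop)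
    (by rw [Solution₁.x_mk]; omega) (by simp)
  have hxj : x = xn a1 j := by
    have := (solution₁_pow_eq a1 g ha j).1
    rw [← hj, Solution₁.x_mk] at this
    exact_mod_cast this
  refine ⟨j, Nat.pos_of_ne_zero ?_, hxj⟩
  rintro rfl
  rw [xn_zero] at hxj
  omega

lemma yn_two_mul (j : ℕ) : yn a1 (2 * j) = xn a1 j * (2 * yn a1 j) := by
  rw [two_mul, yn_add]
  ring

lemma not_isSquare_of_pell {s x w : ℕ} (hx : 2 ≤ x) (h : x ^ 2 = 1 + s * w ^ 2) :
    ¬ IsSquare (s : ℤ) := by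
  rintro ⟨r, hr⟩
  have hdiff : ((x : ℤ) - r * w) * (x + r * w) = 1 := by
    have : (x : ℤ) ^ 2 = 1 + s * w ^ 2 := by exact_mod_cast h
    rw [hr] at this
    linear_combination this
  rcases Int.mul_eq_one_iff_eq_one_or_neg_one.1 hdiff with ⟨h₁, h₂⟩ | ⟨h₁, h₂⟩ <;> omega

-- A multiple `x = xₙ` of `p ^ b` yields the multiple `y₂ₙ = 2 xₙ yₙ`, so `n` is divisible by almost
-- the same power of `p`.
theorem exists_two_pow_pow_le_of_pell (p s : ℕ) [Fact p.Prime] :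
    ∃ e, ∀ {b x w : ℕ}, 1 ≤ b → 2 ≤ x → x ^ 2 = 1 + s * w ^ 2 → p ^ b ∣ x →
      2 ^ p ^ (b - e) ≤ x ^ 2 := by
  by_cases hex : ∃ x w : ℕ, 2 ≤ x ∧ x ^ 2 = 1 + s * w ^ 2 ∧ p ∣ x
  swap
  · exact ⟨0, fun {b x w} hb hx h hdvd =>
      absurd ⟨x, w, hx, h, (dvd_pow_self p (by omega)).trans hdvd⟩ hex⟩
  obtain ⟨x₀, w₀, hx₀, h₀, hdvd₀⟩ := hex
  have hs : s ≠ 0 := by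
    rintro rfl
    nlinarith
  obtain ⟨g, hg⟩ := IsFundamental.exists_of_not_isSquare (by exact_mod_cast Nat.pos_of_ne_zero hs)
    (not_isSquare_of_pell hx₀ h₀)
  obtain ⟨a, ha⟩ := Int.eq_ofNat_of_zero_le hg.x_pos.le
  have a1 : 1 < a := by exact_mod_cast ha ▸ hg.1
  obtain ⟨j₀, hj₀, rfl⟩ := exists_eq_xn a1 hg ha hx₀ h₀
  obtain ⟨e, he⟩ := exists_pow_sub_le_of_pow_dvd_yn a1 (n := 2 * j₀) (by omega)
    (yn_two_mul a1 j₀ ▸ hdvd₀.mul_right _)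
  refine ⟨e, fun {b x w} _ hx h hdvd => ?_⟩
  obtain ⟨j, hj, rfl⟩ := exists_eq_xn a1 hg ha hx h
  calc 2 ^ p ^ (b - e) ≤ 2 ^ (2 * j) := Nat.pow_le_pow_right (by norm_num)
        (he (2 * j) b (by omega) (yn_two_mul a1 j ▸ hdvd.mul_right _))
    _ = (2 ^ j) ^ 2 := by rw [mul_comm, pow_mul]
    _ ≤ (a ^ j) ^ 2 := by gcongr; exact a1
    _ ≤ xn a1 j ^ 2 := by gcongr; exact xn_ge_a_pow a1 j

end

/-! ### Square values of products of shifts -/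

section

/-- The numbers `N`, `N + 2` and `N + 2 * 3 ^ b`, where `N = 3 ^ a - 3 ^ b - 1`, lie in the square
classes of `s 0`, `s 1` and `s 2`. -/
structure SquareTriple (s w : Fin 3 → ℕ) (a b N : ℕ) : Prop where
  b_pos : 0 < b
  b_lt_a : b < a
  three_pow_eq : 3 ^ a = N + 3 ^ b + 1
  add_eq : ∀ j, N + (![0, 2, 2 * 3 ^ b] : Fin 3 → ℕ) j = s j * w j ^ 2

lemma sq_le_three_pow (n : ℕ) : n ^ 2 ≤ 3 ^ n := by
  induction n with
  | zero => norm_num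
  | succ n ih =>
    have : n < 3 ^ n := Nat.lt_pow_self (by norm_num)
    rw [pow_succ 3]
    nlinarith

lemma mul_three_pow_pow_sq_le {C e m : ℕ} (hm : 6 * C + 4 * C * e + 1 ≤ m) :
    (C * (3 ^ (m + e)) ^ C) ^ 2 ≤ 2 ^ 3 ^ m := by
  calc (C * (3 ^ (m + e)) ^ C) ^ 2 ≤ (2 ^ C * ((2 ^ 2) ^ (m + e)) ^ C) ^ 2 := by
        gcongr
        · exact Nat.lt_two_pow_self.le
        · norm_num
    _ = 2 ^ (2 * C + 4 * (m + e) * C) := by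
        rw [← pow_mul, ← pow_mul, ← pow_add, ← pow_mul]
        ring
    _ ≤ 2 ^ 3 ^ m := by
        refine Nat.pow_le_pow_right (by norm_num) (le_trans ?_ (sq_le_three_pow m))
        calc 2 * C + 4 * (m + e) * C = 4 * C * m + (2 * C + 4 * C * e) * 1 := by ring
          _ ≤ 4 * C * m + (2 * C + 4 * C * e) * m := by gcongr; omega
          _ = (6 * C + 4 * C * e) * m := by ring
          _ ≤ m * m := by gcongr; omega
          _ = m ^ 2 := by ring

lemma abs_sqrt_add_sub_sqrt_le {x d : ℝ} (hx : 0 < x) (hd : 0 ≤ d) :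
    |√(x + d) - √x| ≤ d / √x := by
  have hle : √x ≤ √(x + d) := Real.sqrt_le_sqrt (by linarith)
  rw [abs_of_nonneg (sub_nonneg.2 hle), le_div_iff₀ (Real.sqrt_pos.2 hx)]
  nlinarith [Real.sq_sqrt hx.le, Real.sq_sqrt (add_nonneg hx.le hd)]

lemma div_le_rpow_of_pow_four_le {x d : ℝ} (hx : 0 < x) (hd : 0 ≤ d) (h : d ^ 4 ≤ x) :
    d / x ≤ x ^ (-(3 / 4) : ℝ) := by
  have hroot : d ≤ x ^ (1 / 4 : ℝ) :=
    calc d = (d ^ 4) ^ (1 / 4 : ℝ) := by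
          rw [← Real.rpow_natCast, ← Real.rpow_mul hd]
          norm_num
      _ ≤ x ^ (1 / 4 : ℝ) := by gcongr
  calc d / x ≤ x ^ (1 / 4 : ℝ) / x ^ (1 : ℝ) := by rw [Real.rpow_one]; gcongr
    _ = x ^ (-(3 / 4) : ℝ) := by
        rw [← Real.rpow_sub hx]
        norm_num

namespace SquareTriple

variable {s w : Fin 3 → ℕ} {a b N : ℕ} (h : SquareTriple s w a b N)
include h

lemma three_le : 3 ≤ 3 ^ b := Nat.le_self_pow h.b_pos.ne' 3

lemma two_mul_three_pow_le : 2 * 3 ^ b ≤ N + 1 := by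
  have : 3 ^ (b + 1) ≤ 3 ^ a := Nat.pow_le_pow_right (by norm_num) h.b_lt_a
  have := h.three_pow_eq
  rw [pow_succ] at *
  omega

lemma five_le : 5 ≤ N := by
  have := h.three_le
  have := h.two_mul_three_pow_le
  omega

lemma three_pow_le : 3 ^ a ≤ 2 * N := by
  have := h.three_le
  have := h.two_mul_three_pow_le
  have := h.three_pow_eq
  omega

lemma shift_le (j : Fin 3) : (![0, 2, 2 * 3 ^ b] : Fin 3 → ℕ) j ≤ 2 * 3 ^ b := by
  have := h.three_le
  fin_cases j <;> simp
  omega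

lemma shift_injective : Function.Injective (![0, 2, 2 * 3 ^ b] : Fin 3 → ℕ) := by
  have hb := h.b_pos.ne'
  intro i j hij
  fin_cases i <;> fin_cases j <;> simp [hb] at hij ⊢

lemma pell_eq : (N + 1) ^ 2 = 1 + s 0 * s 1 * (w 0 * w 1) ^ 2 := by
  have h₀ : N = s 0 * w 0 ^ 2 := by simpa using h.add_eq 0
  have h₁ : N + 2 = s 1 * w 1 ^ 2 := by simpa using h.add_eq 1
  calc (N + 1) ^ 2 = 1 + N * (N + 2) := by ring
    _ = 1 + s 0 * w 0 ^ 2 * (s 1 * w 1 ^ 2) := by rw [← h₀, ← h₁]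
    _ = 1 + s 0 * s 1 * (w 0 * w 1) ^ 2 := by ring

lemma three_pow_dvd : 3 ^ b ∣ N + 1 := by
  refine (Nat.dvd_add_left (dvd_refl (3 ^ b))).1 ?_
  rw [show N + 1 + 3 ^ b = 3 ^ a by rw [h.three_pow_eq]; ring]
  exact pow_dvd_pow 3 h.b_lt_a.le

lemma mul_pos (j : Fin 3) : 0 < s j * w j := by
  have hadd := h.add_eq j
  have := h.five_le
  refine Nat.pos_of_ne_zero fun hzero => ?_
  rw [sq, ← mul_assoc, hzero, zero_mul] at hadd
  omega

lemma sqrt_le (j : Fin 3) : √((N : ℝ) + (![0, 2, 2 * 3 ^ b] : Fin 3 → ℕ) j) ≤ N := by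
  rw [Real.sqrt_le_left (Nat.cast_nonneg N)]
  have hshift := h.shift_le j
  have := h.two_mul_three_pow_le
  have := h.five_le
  exact_mod_cast (by nlinarith : N + (![0, 2, 2 * 3 ^ b] : Fin 3 → ℕ) j ≤ N ^ 2)

-- Two integers in the square class of `s j` have the integer `s j * w j * w' j` as the square root
-- of their product.
lemma simultaneousApprox {w' : Fin 3 → ℕ} {a' b' N' : ℕ} (h' : SquareTriple s w' a' b' N')
    (hlarge : (2 * 3 ^ b') ^ 8 ≤ N') :
    SimultaneousApprox 2 (3 / 4) N ![0, 2, 2 * 3 ^ b] (fun j => (s j * w j * w' j : ℤ))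
      √N' √N' := by
  have hN' : (0 : ℝ) < N' := by exact_mod_cast (by norm_num : 0 < 5).trans_le h'.five_le
  refine ⟨Real.sqrt_nonneg _, le_rfl, fun hv => ?_, fun j => ?_⟩
  · have hw' : w' 0 ≠ 0 := (pos_of_mul_pos_right (h'.mul_pos 0) (Nat.zero_le _)).ne'
    have hzero : ((s 0 : ℤ) * w 0) * w' 0 = 0 := congrFun hv 0
    exact mul_ne_zero (h.mul_pos 0).ne' hw' (by exact_mod_cast hzero)
  set d := (![0, 2, 2 * 3 ^ b] : Fin 3 → ℕ) j
  set d' := (![0, 2, 2 * 3 ^ b'] : Fin 3 → ℕ) j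
  have hprod : √((N : ℝ) + d) * √((N' : ℝ) + d') = s j * w j * w' j := by
    have hj : (N : ℝ) + d = s j * w j ^ 2 := by exact_mod_cast h.add_eq j
    have hj' : (N' : ℝ) + d' = s j * w' j ^ 2 := by exact_mod_cast h'.add_eq j
    rw [← Real.sqrt_mul (by positivity), hj, hj',
      show (s j * w j ^ 2 : ℝ) * (s j * w' j ^ 2) = (s j * w j * w' j) ^ 2 by ring,
      Real.sqrt_sq (by positivity)]
  have hdiff : |√((N' : ℝ) + d') - √N'| ≤ √N' ^ (-(3 / 4) : ℝ) := by
    refine (abs_sqrt_add_sub_sqrt_le hN' (Nat.cast_nonneg d')).trans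
      (div_le_rpow_of_pow_four_le (Real.sqrt_pos.2 hN') (Nat.cast_nonneg d') ?_)
    refine Real.le_sqrt_of_sq_le ?_
    rw [← pow_mul]
    exact_mod_cast (Nat.pow_le_pow_left (h'.shift_le j) 8).trans hlarge
  push_cast
  rw [← hprod, ← Real.sqrt_eq_rpow, mul_comm √(N' : ℝ), ← mul_sub, abs_mul,
    abs_of_nonneg (Real.sqrt_nonneg _)]
  exact mul_le_mul (h.sqrt_le j) hdiff (abs_nonneg _) (Nat.cast_nonneg N)

lemma mul_pow_le {m C : ℕ} (hm : 2 * (3 * m) ^ m ≤ C) (hmC : m ≤ C)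
    (hlarge : C * (3 ^ b) ^ C ≤ 3 ^ a) : (m * (2 * 3 ^ b + 1)) ^ m ≤ N := by
  have hbase : 2 * 3 ^ b + 1 ≤ 3 * 3 ^ b := by
    have := h.three_le
    omega
  have hbound : 2 * (m * (2 * 3 ^ b + 1)) ^ m ≤ 2 * N :=
    calc 2 * (m * (2 * 3 ^ b + 1)) ^ m ≤ 2 * (m * (3 * 3 ^ b)) ^ m := by gcongr
      _ = 2 * (3 * m) ^ m * (3 ^ b) ^ m := by
          rw [mul_assoc, ← mul_pow]
          ring
      _ ≤ C * (3 ^ b) ^ C := Nat.mul_le_mul hm (Nat.pow_le_pow_right (by positivity) hmC)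
      _ ≤ 2 * N := hlarge.trans h.three_pow_le
  omega

lemma two_mul_three_pow_pow_le {C : ℕ} (hC : 512 ≤ C) (hlarge : C * (3 ^ b) ^ C ≤ 3 ^ a) :
    (2 * 3 ^ b) ^ 8 ≤ N := by
  have hbound : 2 * (2 * 3 ^ b) ^ 8 ≤ 2 * N :=
    calc 2 * (2 * 3 ^ b) ^ 8 = 512 * (3 ^ b) ^ 8 := by ring
      _ ≤ C * (3 ^ b) ^ C := Nat.mul_le_mul hC (Nat.pow_le_pow_right (by positivity) (by omega))
      _ ≤ 2 * N := hlarge.trans h.three_pow_le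
  omega

end SquareTriple

lemma exists_forall_squareTriple_le (s : Fin 3 → ℕ) (C : ℕ) :
    ∃ b₀, ∀ {w : Fin 3 → ℕ} {a b N : ℕ}, SquareTriple s w a b N → b₀ ≤ b →
      C * (3 ^ b) ^ C ≤ 3 ^ a := by
  obtain ⟨e, he⟩ := exists_two_pow_pow_le_of_pell 3 (s 0 * s 1)
  refine ⟨6 * C + 4 * C * e + 1 + e, fun {w a b N} h hb => ?_⟩
  obtain ⟨m, rfl⟩ : ∃ m, b = m + e := ⟨b - e, by omega⟩
  refine (Nat.pow_le_pow_iff_left two_ne_zero).1 ?_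
  calc (C * (3 ^ (m + e)) ^ C) ^ 2 ≤ 2 ^ 3 ^ m := mul_three_pow_pow_sq_le (by omega)
    _ ≤ (N + 1) ^ 2 := by
        simpa using he h.b_pos (by have := h.five_le; omega) h.pell_eq h.three_pow_dvd
    _ ≤ (3 ^ a) ^ 2 := by
        have : 0 < 3 ^ (m + e) := by positivity
        gcongr
        rw [h.three_pow_eq]
        omega

theorem finite_squareTriple (s : Fin 3 → ℕ) :
    {x : ℕ × ℕ | ∃ w N, SquareTriple s w x.2 x.1 N}.Finite := by
  obtain ⟨m, K, hgap⟩ := exists_simultaneousApprox_lt (Fin 3) Nat.prime_two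
    (σ := 3 / 4) (by norm_num) (by norm_num)
  obtain ⟨C, hmC, hmC', hC⟩ : ∃ C, 2 * (3 * m) ^ m ≤ C ∧ m ≤ C ∧ 512 ≤ C :=
    ⟨2 * (3 * m) ^ m + m + 512, by omega, by omega, by omega⟩
  obtain ⟨b₀, hb₀⟩ := exists_forall_squareTriple_le s C
  refine finite_of_large_of_gap (q := 3) (by norm_num) (C := C) (by omega)
    ⟨b₀, fun x ⟨w, N, h⟩ => hb₀ h⟩ ?_
  rintro ⟨b, a⟩ ⟨w, N, h⟩ hlarge
  refine ⟨2 * (N ^ K) ^ 2, ?_⟩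
  rintro ⟨b', a'⟩ ⟨w', N', h'⟩ hlarge'
  have hN' : √(N' : ℝ) < (N : ℝ) ^ K :=
    hgap h.shift_injective h.shift_le (h.mul_pow_le hmC hmC' hlarge)
      (h.simultaneousApprox h' (h'.two_mul_three_pow_pow_le hC hlarge'))
  calc a' ≤ 3 ^ a' := (Nat.lt_pow_self (by norm_num)).le
    _ ≤ 2 * N' := h'.three_pow_le
    _ ≤ 2 * (N ^ K) ^ 2 := by
        gcongr
        exact_mod_cast (Real.sqrt_le_left (by positivity)).1 hN'.le

lemma exists_eq_mul_sq_le_of_isSquare {f R M : ℕ} (hf : f ≠ 0) (hR : Nat.Coprime f R) (hM : 0 < M)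
    (hsq : IsSquare (f * R * M)) : ∃ s w, f = s * w ^ 2 ∧ s ≤ M := by
  obtain ⟨s, w, hsw, hs⟩ := Nat.sq_mul_squarefree f
  refine ⟨s, w, by rw [← hsw, mul_comm], ?_⟩
  obtain ⟨r, hr⟩ := hsq
  have hw : w ≠ 0 := by
    rintro rfl
    exact hf (by simpa using hsw.symm)
  obtain ⟨r, rfl⟩ : w ∣ r := by
    rw [← Nat.pow_dvd_pow_iff two_ne_zero, sq r, ← hr, ← hsw]
    exact ⟨s * R * M, by ring⟩
  have hr' : s * (R * M) = r ^ 2 := by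
    refine Nat.eq_of_mul_eq_mul_left (by positivity : 0 < w ^ 2) ?_
    rw [← hsw] at hr
    linarith
  obtain ⟨u, rfl⟩ : s ∣ r := (hs.dvd_pow_iff_dvd two_ne_zero).1 ⟨_, hr'.symm⟩
  have hRM : s ∣ R * M :=
    ⟨u ^ 2, Nat.eq_of_mul_eq_mul_left (Nat.pos_of_ne_zero hs.ne_zero) (by rw [hr']; ring)⟩
  have hsR : Nat.Coprime s R := hR.coprime_dvd_left ⟨w ^ 2, by rw [← hsw, mul_comm]⟩
  exact Nat.le_of_dvd hM (hsR.dvd_of_dvd_mul_left hRM)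

lemma coprime_of_forall_dvd_two_mul_three_pow {x y c : ℕ} (hx : Nat.Coprime x 6)
    (h : ∀ d, d ∣ x → d ∣ y → d ∣ 2 * 3 ^ c) : Nat.Coprime x y := by
  have hx' : Nat.Coprime x (2 * 3 ^ c) :=
    (hx.coprime_dvd_right (by norm_num)).mul_right
      ((hx.coprime_dvd_right (by norm_num)).pow_right c)
  have hgcd := h _ (Nat.gcd_dvd_left x y) (Nat.gcd_dvd_right x y)
  exact Nat.eq_one_of_dvd_coprimes hx' (Nat.gcd_dvd_left x y) hgcd

lemma coprime_add_of_dvd_two_mul_three_pow {x k c : ℕ} (hk : k ∣ 2 * 3 ^ c)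
    (hx : Nat.Coprime x 6) : Nat.Coprime x (x + k) :=
  coprime_of_forall_dvd_two_mul_three_pow hx fun _ hdx hdy =>
    ((Nat.dvd_add_right hdx).1 hdy).trans hk

lemma coprime_of_add_eq_two_mul_three_pow {x y c : ℕ} (hxy : x + y = 2 * 3 ^ c)
    (hx : Nat.Coprime x 6) : Nat.Coprime x y :=
  coprime_of_forall_dvd_two_mul_three_pow hx fun _ hdx hdy => hxy ▸ dvd_add hdx hdy

lemma coprime_six_iff {x : ℕ} : Nat.Coprime x 6 ↔ x % 2 = 1 ∧ x % 3 ≠ 0 := by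
  rw [show 6 = 2 * 3 by norm_num, Nat.coprime_mul_iff_right, Nat.coprime_two_right,
    Nat.odd_iff, Nat.coprime_comm, Nat.prime_three.coprime_iff_not_dvd, Nat.dvd_iff_mod_eq_zero]

lemma exists_squareTriple {a b N M : ℕ} (hb : 0 < b) (hba : b < a) (hM : 0 < M)
    (hN : 3 ^ a = N + 3 ^ b + 1)
    (hsq : IsSquare (N * (N + 2) * (N + 2 * 3 ^ b) * (N + 2 * 3 ^ b + 2) * M)) :
    ∃ s w : Fin 3 → ℕ, (∀ j, s j ≤ M) ∧ SquareTriple s w a b N := by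
  have : 3 ^ (b + 1) ≤ 3 ^ a := Nat.pow_le_pow_right (by norm_num) hba
  have hodd_a : 3 ^ a % 2 = 1 := Nat.odd_iff.1 (Odd.pow (by decide))
  have hodd_b : 3 ^ b % 2 = 1 := Nat.odd_iff.1 (Odd.pow (by decide))
  have hdvd_a : 3 ^ a % 3 = 0 := Nat.mod_eq_zero_of_dvd (dvd_pow_self 3 (by omega))
  have hdvd_b : 3 ^ b % 3 = 0 := Nat.mod_eq_zero_of_dvd (dvd_pow_self 3 (by omega))
  have : 0 < 3 ^ b := by positivity
  have h0 : Nat.Coprime N 6 := coprime_six_iff.2 (by omega)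
  have h1 : Nat.Coprime (N + 2) 6 := coprime_six_iff.2 (by omega)
  have h2 : Nat.Coprime (N + 2 * 3 ^ b) 6 := coprime_six_iff.2 (by omega)
  have h01 : Nat.Coprime N (N + 2) := coprime_add_of_dvd_two_mul_three_pow (c := b) ⟨_, rfl⟩ h0
  have h02 : Nat.Coprime N (N + 2 * 3 ^ b) := coprime_add_of_dvd_two_mul_three_pow dvd_rfl h0
  have h03 : Nat.Coprime N (N + 2 * 3 ^ b + 2) :=
    coprime_of_add_eq_two_mul_three_pow (c := a) (by omega) h0
  have h12 : Nat.Coprime (N + 2) (N + 2 * 3 ^ b) :=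
    coprime_of_add_eq_two_mul_three_pow (c := a) (by omega) h1
  have h13 : Nat.Coprime (N + 2) (N + 2 * 3 ^ b + 2) := by
    rw [add_right_comm]
    exact coprime_add_of_dvd_two_mul_three_pow dvd_rfl h1
  have h23 : Nat.Coprime (N + 2 * 3 ^ b) (N + 2 * 3 ^ b + 2) :=
    coprime_add_of_dvd_two_mul_three_pow (c := b) ⟨_, rfl⟩ h2
  obtain ⟨s₀, w₀, hw₀, hs₀⟩ := exists_eq_mul_sq_le_of_isSquare (by omega)
    ((h01.mul_right h02).mul_right h03) hM (by convert hsq using 1; ring)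
  obtain ⟨s₁, w₁, hw₁, hs₁⟩ := exists_eq_mul_sq_le_of_isSquare (by omega)
    ((h01.symm.mul_right h12).mul_right h13) hM (by convert hsq using 1; ring)
  obtain ⟨s₂, w₂, hw₂, hs₂⟩ := exists_eq_mul_sq_le_of_isSquare (by omega)
    ((h02.symm.mul_right h12.symm).mul_right h23) hM (by convert hsq using 1; ring)
  exact ⟨![s₀, s₁, s₂], ![w₀, w₁, w₂], by simp [Fin.forall_fin_succ, hs₀, hs₁, hs₂], hb, hba, hN,
    by simp [Fin.forall_fin_succ, ← hw₀, ← hw₁, ← hw₂]⟩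

theorem finite_isSquare_solutions {M : ℕ} (hM : 0 < M) :
    {x : ℕ × ℕ | 0 < x.2 ∧ x.2 < x.1 ∧ ∃ N, 3 ^ x.1 = N + 3 ^ x.2 + 1 ∧
      IsSquare (N * (N + 2) * (N + 2 * 3 ^ x.2) * (N + 2 * 3 ^ x.2 + 2) * M)}.Finite := by
  have hfin : {s : Fin 3 → ℕ | ∀ j, s j ≤ M}.Finite :=
    (Set.finite_Iic fun _ => M).subset fun s hs => hs
  refine (hfin.biUnion fun s _ => (finite_squareTriple s).image Prod.swap).subset ?_
  rintro ⟨a, b⟩ ⟨hb, hba, N, hN, hsq⟩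
  obtain ⟨s, w, hs, hsw⟩ := exists_squareTriple hb hba hM hN hsq
  exact Set.mem_biUnion hs ⟨(b, a), ⟨w, N, hsw⟩, rfl⟩

end

/-! ### Square classes in finite extensions -/

section

open Polynomial IntermediateField

variable {k L : Type*} [Field k] [Field L] [Algebra k L]

lemma exists_eq_add_mul_of_mem_adjoin {r : k} {y z : L} (hy : y ^ 2 = algebraMap k L r)
    (hz : z ∈ k⟮y⟯) : ∃ u v : k, z = algebraMap k L u + algebraMap k L v * y := by
  have hintegral : IsIntegral k y := ⟨X ^ 2 - C r, monic_X_pow_sub_C r two_ne_zero, by simp [hy]⟩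
  rw [← mem_toSubalgebra, adjoin_simple_toSubalgebra_of_isAlgebraic hintegral.isAlgebraic] at hz
  induction hz using Algebra.adjoin_induction with
  | mem z hz => exact ⟨0, 1, by simpa using hz⟩
  | algebraMap c => exact ⟨c, 0, by simp⟩
  | add z w _ _ hz hw =>
    obtain ⟨a, b, rfl⟩ := hz
    obtain ⟨c, d, rfl⟩ := hw
    exact ⟨a + c, b + d, by simp only [map_add]; ring⟩
  | mul z w _ _ hz hw =>
    obtain ⟨a, b, rfl⟩ := hz
    obtain ⟨c, d, rfl⟩ := hw
    refine ⟨a * c + b * d * r, a * d + b * c, ?_⟩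
    simp only [map_add, map_mul]
    linear_combination (algebraMap k L b * algebraMap k L d) * hy

lemma isSquare_mul_of_adjoin_eq [NeZero (2 : k)] {q r : k} (hq : ¬ IsSquare q) (hr : ¬ IsSquare r)
    {x y : L} (hx : x ^ 2 = algebraMap k L q) (hy : y ^ 2 = algebraMap k L r)
    (hxy : k⟮x⟯ = k⟮y⟯) : IsSquare (q * r) := by
  have hinj := (algebraMap k L).injective
  obtain ⟨u, v, rfl⟩ :=
    exists_eq_add_mul_of_mem_adjoin hy (hxy ▸ mem_adjoin_simple_self k x)
  have hcoord : algebraMap k L (q - u ^ 2 - v ^ 2 * r) = algebraMap k L (2 * u * v) * y := by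
    simp only [map_sub, map_mul, map_pow, map_ofNat]
    rw [← hx, ← hy]
    ring
  have huv : 2 * u * v = 0 := by
    by_contra hne
    have hne' : algebraMap k L (2 * u * v) ≠ 0 := (_root_.map_ne_zero _).2 hne
    refine hr ⟨(q - u ^ 2 - v ^ 2 * r) / (2 * u * v), hinj ?_⟩
    rw [map_mul, map_div₀, hcoord, mul_div_cancel_left₀ _ hne', ← hy, sq]
  have hnorm : q - u ^ 2 - v ^ 2 * r = 0 := hinj (by rw [hcoord, huv, map_zero, zero_mul])
  rcases mul_eq_zero.1 huv with hu | rfl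
  · obtain rfl : u = 0 := (mul_eq_zero.1 hu).resolve_left two_ne_zero
    exact ⟨v * r, by linear_combination r * hnorm⟩
  · exact absurd ⟨u, by linear_combination hnorm⟩ hq

lemma exists_finite_forall_isSquare_mul [CharZero k] [FiniteDimensional k L] {ι : Type*}
    {q : ι → k} (hq : ∀ i, ¬ IsSquare (q i)) (hqL : ∀ i, IsSquare (algebraMap k L (q i))) :
    ∃ T : Set ι, T.Finite ∧ ∀ i, ∃ j ∈ T, IsSquare (q i * q j) := by
  have : Finite (IntermediateField k L) :=
    Field.finite_intermediateField_of_exists_primitive_element k L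
      (Field.exists_primitive_element k L)
  choose x hx using hqL
  obtain ⟨T, -, hT, hTx⟩ := Set.exists_subset_image_finite_and.1
    ⟨(fun i => k⟮x i⟯) '' Set.univ, subset_rfl, Set.toFinite _, subset_rfl⟩
  refine ⟨T, hT, fun i => ?_⟩
  obtain ⟨j, hj, hji⟩ := hTx ⟨i, trivial, rfl⟩
  exact ⟨j, hj, isSquare_mul_of_adjoin_eq (hq i) (hq j) (by rw [sq, hx]) (by rw [sq, hx])
    hji.symm⟩

lemma exists_finite_forall_natCast_isSquare_mul [CharZero L] [FiniteDimensional ℚ L] {d : ℚ}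
    (hd : d < 0) : ∃ T : Set ℕ, T.Finite ∧ (∀ m ∈ T, 0 < m) ∧
      ∀ n : ℕ, 0 < n → IsSquare (algebraMap ℚ L (d * n)) → ∃ m ∈ T, IsSquare (n * m) := by
  let ι := {n : ℕ // 0 < n ∧ IsSquare (algebraMap ℚ L (d * n))}
  have hneg (i : ι) : ¬ IsSquare (d * (i : ℕ)) := fun hsq =>
    hsq.nonneg.not_gt (mul_neg_of_neg_of_pos hd (Nat.cast_pos.2 i.2.1))
  obtain ⟨T, hT, hTsq⟩ := exists_finite_forall_isSquare_mul hneg fun i => i.2.2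
  refine ⟨(↑) '' T, hT.image _, ?_, fun n hn hsq => ?_⟩
  · rintro _ ⟨i, -, rfl⟩
    exact i.2.1
  · obtain ⟨j, hj, r, hr⟩ := hTsq ⟨n, hn, hsq⟩
    refine ⟨j, ⟨j, hj, rfl⟩, Rat.isSquare_natCast_iff.1 ⟨r / d, ?_⟩⟩
    have := hd.ne
    push_cast
    field_simp
    linear_combination hr

end

/-! ### Irrational solutions -/

section

open Polynomial

lemma exists_sq_eq_discr {k L : Type*} [Field k] [Field L] [Algebra k L] [Normal k L]
    {P : Cubic k} (ha : P.a ≠ 0) (hP : Irreducible P.toPoly) {t : L}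
    (ht : aeval t P.toPoly = 0) : ∃ x : L, x ^ 2 = algebraMap k L P.discr := by
  have hsplits : (P.toPoly.map (algebraMap k L)).Splits := by
    have hmin := Normal.splits (F := k) (K := L) inferInstance t
    rw [← minpoly.eq_of_irreducible hP ht, Polynomial.map_mul, Polynomial.map_C] at hmin
    refine hmin.of_dvd (mul_ne_zero ?_ ?_) (Dvd.intro _ rfl)
    · exact (Polynomial.map_ne_zero_iff (algebraMap k L).injective).2 hP.ne_zero
    · simp [hP.ne_zero]
  obtain ⟨x, y, z, hroots⟩ := (Cubic.splits_iff_roots_eq_three ha).1 hsplits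
  exact ⟨_, (Cubic.discr_eq_prod_three_roots ha hroots).symm⟩

/-- The polynomial `(A + B X)³ - (A + B X³)`. -/
def cubeDefect {k : Type*} [CommRing k] (A B : k) : Cubic k :=
  ⟨B ^ 3 - B, 3 * A * B ^ 2, 3 * A ^ 2 * B, A ^ 3 - A⟩

section cubeDefect

variable {k : Type*} [Field k] {A B : k}

lemma aeval_cubeDefect {L : Type*} [CommRing L] [Algebra k L] (t : L) :
    aeval t (cubeDefect A B).toPoly = (algebraMap k L A + algebraMap k L B * t) ^ 3 -
      (algebraMap k L A + algebraMap k L B * t ^ 3) := by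
  simp only [cubeDefect, Cubic.toPoly, map_add, map_mul, map_sub, map_pow, aeval_C, aeval_X,
    map_ofNat]
  ring

lemma discr_cubeDefect : (cubeDefect A B).discr =
    (3 * A * B) ^ 2 * (-3 * ((A - B - 1) * (A - B + 1) * (A + B - 1) * (A + B + 1))) := by
  simp only [cubeDefect, Cubic.discr]
  ring

lemma irreducible_cubeDefect (hB : B ^ 3 ≠ B)
    (h : ¬ ∃ t : k, A + B * t ^ 3 = (A + B * t) ^ 3) : Irreducible (cubeDefect A B).toPoly := by
  have hdeg : (cubeDefect A B).toPoly.natDegree = 3 :=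
    Cubic.natDegree_of_a_ne_zero (sub_ne_zero.2 hB)
  rw [irreducible_iff_roots_eq_zero_of_degree_le_three (by omega) (by omega),
    Multiset.eq_zero_iff_forall_notMem]
  intro t ht
  have hroot := (mem_roots'.1 ht).2
  rw [IsRoot.def, ← coe_aeval_eq_eval, aeval_cubeDefect, sub_eq_zero] at hroot
  exact h ⟨t, hroot.symm⟩

lemma isSquare_of_irrational_solution {L : Type*} [Field L] [Algebra k L] [Normal k L]
    (h3 : (3 : k) ≠ 0) (hA : A ≠ 0) (hB : B ^ 3 ≠ B)
    (h : ¬ ∃ t : k, A + B * t ^ 3 = (A + B * t) ^ 3)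
    (hL : ∃ t : L, algebraMap k L A + algebraMap k L B * t ^ 3 =
      (algebraMap k L A + algebraMap k L B * t) ^ 3) :
    IsSquare (algebraMap k L (-3 * ((A - B - 1) * (A - B + 1) * (A + B - 1) * (A + B + 1)))) := by
  obtain ⟨t, ht⟩ := hL
  have hB₀ : B ≠ 0 := by
    rintro rfl
    simp at hB
  obtain ⟨x, hx⟩ := exists_sq_eq_discr (sub_ne_zero.2 hB) (irreducible_cubeDefect hB h)
    (t := t) (by rw [aeval_cubeDefect, ht, sub_self])
  have hne : algebraMap k L (3 * A * B) ≠ 0 :=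
    (_root_.map_ne_zero _).2 (mul_ne_zero (mul_ne_zero h3 hA) hB₀)
  rw [discr_cubeDefect, map_mul, map_pow] at hx
  exact ⟨x / algebraMap k L (3 * A * B), by rw [← sq, div_pow, hx]; field_simp⟩

end cubeDefect

lemma three_pow_pow_three_ne {k : Type*} [Field k] [CharZero k] {b : ℕ} (hb : 0 < b) :
    ((3 : k) ^ b) ^ 3 ≠ 3 ^ b := by
  have hlt : (3 : ℕ) ^ b < 3 ^ (b * 3) := Nat.pow_lt_pow_right (by norm_num) (by omega)
  rw [← pow_mul]
  exact_mod_cast hlt.ne'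

theorem finite_irrational_solutions (L : Type*) [Field L] [CharZero L] [Normal ℚ L]
    [FiniteDimensional ℚ L] :
    {x : ℕ × ℕ | 0 < x.2 ∧ x.2 < x.1 ∧
      (¬ ∃ t : ℚ, 3 ^ x.1 + 3 ^ x.2 * t ^ 3 = (3 ^ x.1 + 3 ^ x.2 * t) ^ 3) ∧
      ∃ t : L, 3 ^ x.1 + 3 ^ x.2 * t ^ 3 = (3 ^ x.1 + 3 ^ x.2 * t) ^ 3}.Finite := by
  obtain ⟨T, hT, hTpos, hTsq⟩ :=
    exists_finite_forall_natCast_isSquare_mul (L := L) (d := -3) (by norm_num)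
  refine (hT.biUnion fun m hm => finite_isSquare_solutions (hTpos m hm)).subset ?_
  rintro ⟨a, b⟩ ⟨hb, hba, hrat, hL⟩
  obtain ⟨N, hN, hNpos⟩ : ∃ N, 3 ^ a = N + 3 ^ b + 1 ∧ 0 < N := by
    have hlt : 3 ^ (b + 1) ≤ 3 ^ a := Nat.pow_le_pow_right (by norm_num) hba
    have hthree : 3 ≤ 3 ^ b := Nat.le_self_pow hb.ne' 3
    exact ⟨3 ^ a - 3 ^ b - 1, by omega, by omega⟩
  have hsq := isSquare_of_irrational_solution (k := ℚ) (L := L) (A := 3 ^ a) (B := 3 ^ b)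
    (by norm_num) (by positivity) (three_pow_pow_three_ne hb) hrat (by simpa using hL)
  have hprod : ((3 ^ a - 3 ^ b - 1) * (3 ^ a - 3 ^ b + 1) * (3 ^ a + 3 ^ b - 1) *
      (3 ^ a + 3 ^ b + 1) : ℚ) =
      (N * (N + 2) * (N + 2 * 3 ^ b) * (N + 2 * 3 ^ b + 2) : ℕ) := by
    have hN' : (3 ^ a : ℚ) = N + 3 ^ b + 1 := by exact_mod_cast hN
    rw [hN']
    push_cast
    ring
  rw [hprod] at hsq
  obtain ⟨m, hm, hNm⟩ := hTsq _ (by positivity) hsq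
  exact Set.mem_biUnion hm ⟨hb, hba, N, hN, hNm⟩

end

/-! ### Descent to a finite extension of `ℚ` -/

section

open IntermediateField
open scoped IntermediateField.algebraAdjoinAdjoin

lemma linearIndependent_adjoin_of_algebraicIndependent {R K A ι κ : Type*} [CommRing R]
    [CommRing K] [CommRing A] [Algebra R K] [Algebra K A] [Algebra R A] [IsScalarTower R K A]
    {x : ι → A} (hx : AlgebraicIndependent K x) {b : κ → K} (hb : LinearIndependent R b) :
    LinearIndependent (Algebra.adjoin R (Set.range x)) fun i => algebraMap K A (b i) := by
  rw [linearIndependent_iff']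
  intro T g hg i hi
  have hpoly (j) : ∃ p : MvPolynomial ι R, MvPolynomial.aeval x p = (g j : A) :=
    (Algebra.adjoin_range_eq_range_aeval R x).le (g j).2
  choose p hp using hpoly
  have hzero : ∑ j ∈ T, MvPolynomial.C (b j) * MvPolynomial.map (algebraMap R K) (p j) = 0 := by
    refine algebraicIndependent_iff.1 hx _ ?_
    rw [map_sum, ← hg]
    refine Finset.sum_congr rfl fun j _ => ?_
    rw [map_mul, MvPolynomial.aeval_C, MvPolynomial.aeval_map_algebraMap, hp, mul_comm]
    rfl
  have hpi : p i = 0 := by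
    ext m
    refine linearIndependent_iff'.1 hb T (fun j => (p j).coeff m) ?_ i hi
    simpa only [MvPolynomial.coeff_sum, MvPolynomial.coeff_C_mul, MvPolynomial.coeff_map,
      MvPolynomial.coeff_zero, Algebra.smul_def, mul_comm] using
      congrArg (MvPolynomial.coeff m) hzero
  exact Subtype.ext (by rw [← hp i, hpi, map_zero, ZeroMemClass.coe_zero])

theorem finiteDimensional_algebraicClosure (k K : Type*) [Field k] [Field K] [Algebra k K]
    [Algebra.EssFiniteType k K] : FiniteDimensional k (algebraicClosure k K) := by
  obtain ⟨s, hs⟩ := exists_isTranscendenceBasis k K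
  have : Algebra.IsAlgebraic (adjoin k (Set.range ((↑) : s → K))) K := hs.isAlgebraic_field
  have : Algebra.EssFiniteType (adjoin k (Set.range ((↑) : s → K))) K :=
    Algebra.EssFiniteType.of_comp k _ _
  have : Module.Finite (adjoin k (Set.range ((↑) : s → K))) K :=
    Algebra.finite_of_essFiniteType_of_isAlgebraic
  let b := Module.Basis.ofVectorSpace k (algebraicClosure k K)
  have hb : LinearIndependent (adjoin k (Set.range ((↑) : s → K))) fun i => (b i : K) :=
    (LinearIndependent.iff_fractionRing (Algebra.adjoin k _) _).1
      (linearIndependent_adjoin_of_algebraicIndependent hs.1.algebraicClosure b.linearIndependent)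
  have := hb.finite
  exact Module.Finite.of_basis b

theorem finite_solutions (K : Type*) [Field K] [CharZero K]
    [FiniteDimensional ℚ (algebraicClosure ℚ K)] :
    {x : ℕ × ℕ | 0 < x.2 ∧ x.2 < x.1 ∧
      ∃ t : K, 3 ^ x.1 + 3 ^ x.2 * t ^ 3 = (3 ^ x.1 + 3 ^ x.2 * t) ^ 3}.Finite := by
  let Ω := AlgebraicClosure (algebraicClosure ℚ K)
  have : Algebra.IsAlgebraic ℚ Ω := .trans ℚ (algebraicClosure ℚ K) Ω
  have : IsAlgClosure ℚ Ω := ⟨inferInstance, inferInstance⟩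
  have : Normal ℚ Ω := IsAlgClosure.normal ℚ Ω
  have : Normal ℚ (normalClosure ℚ (algebraicClosure ℚ K) Ω) := normalClosure.normal ..
  refine (finite_rational_solutions.union
    (finite_irrational_solutions (normalClosure ℚ (algebraicClosure ℚ K) Ω))).subset ?_
  rintro ⟨a, b⟩ ⟨hb, hba, t, ht⟩
  by_cases hrat : ∃ t : ℚ, 3 ^ a + 3 ^ b * t ^ 3 = (3 ^ a + 3 ^ b * t) ^ 3
  · exact Or.inl ⟨hb, hba, hrat⟩
  refine Or.inr ⟨hb, hba, hrat, ?_⟩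
  have halg : IsAlgebraic ℚ t :=
    ⟨(cubeDefect (3 ^ a) (3 ^ b)).toPoly,
      Cubic.ne_zero_of_a_ne_zero (sub_ne_zero.2 (three_pow_pow_three_ne hb)),
      by rw [aeval_cubeDefect, sub_eq_zero]; simpa using ht.symm⟩
  lift t to algebraicClosure ℚ K using mem_algebraicClosure_iff.2 halg
  refine ⟨algebraMap _ _ t, ?_⟩
  have ht' : 3 ^ a + 3 ^ b * t ^ 3 = (3 ^ a + 3 ^ b * t) ^ 3 := Subtype.ext (by push_cast; exact ht)
  simpa only [map_add, map_mul, map_pow, map_ofNat] using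
    congrArg (algebraMap _ (normalClosure ℚ (algebraicClosure ℚ K) Ω)) ht'

end

/-! ### Three powers of three -/

section

variable {k : Type*} [Field k]

lemma WeightAnisotropic.const_mul {ι : Type*} [Fintype ι] {q : ℕ} {w : ι → k}
    (hw : WeightAnisotropic q w) {r : k} (hr : r ≠ 0) :
    WeightAnisotropic q fun i => r * w i := fun c h₁ hq => by
  simp only [mul_assoc, ← Finset.mul_sum, mul_eq_zero, hr, false_or] at h₁ hq
  exact hw c h₁ hq

lemma weightAnisotropic_three {A B : k} (hB : B ^ 3 ≠ B)
    (h : ¬ ∃ t : k, A + B * t ^ 3 = (A + B * t) ^ 3) : WeightAnisotropic 3 ![A, B, 1] := by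
  intro c h₁ h₃
  simp only [Fin.sum_univ_three, Matrix.cons_val_zero, Matrix.cons_val_one, Matrix.cons_val,
    one_mul] at h₁ h₃
  have hc₂ : c 2 = -(A * c 0 + B * c 1) := by linear_combination h₁
  rw [hc₂] at h₃
  have hc₀ : c 0 = 0 := by
    by_contra hc₀
    refine h ⟨c 1 / c 0, ?_⟩
    field_simp
    linear_combination h₃
  have hc₁ : c 1 = 0 := by
    rw [hc₀] at h₃
    have hprod : (B ^ 3 - B) * c 1 ^ 3 = 0 := by linear_combination -h₃
    simpa [sub_ne_zero.2 hB] using hprod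
  ext i
  fin_cases i <;> simp [hc₀, hc₁, hc₂]

lemma weightAnisotropic_three_pow [CharZero k] {a b c : ℕ} (hb : 0 < b)
    (h : ¬ ∃ t : k, 3 ^ a + 3 ^ b * t ^ 3 = (3 ^ a + 3 ^ b * t) ^ 3) :
    WeightAnisotropic 3 fun i => ((3 : ℕ) : k) ^ ![c + a, c + b, c] i := by
  convert (weightAnisotropic_three (three_pow_pow_three_ne hb) h).const_mul
    (pow_ne_zero c (three_ne_zero (α := k))) using 2 with i
  fin_cases i <;> simp [pow_add]

end

end RelativeHermite

open RelativeHermite in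
theorem relative_hermite_fails_three_powers_of_three_general
    (F₀ : Type u) [Field F₀] [CharZero F₀] [FiniteDimensional ℚ (algebraicClosure ℚ F₀)] :
    ∃ 𝒮 : Finset (ℕ × ℕ),
      ∀ k₁ k₂ k₃ : ℕ, k₁ > k₂ → k₂ > k₃ → (k₁ - k₃, k₂ - k₃) ∉ 𝒮 →
        ∃ (F E : Type u) (_ : Field F) (_ : Field E) (_ : Algebra F₀ F) (_ : Algebra F E),
          Module.finrank F E = 3 ^ k₁ + 3 ^ k₂ + 3 ^ k₃ ∧
          ∀ δ : E, δ ≠ 0 →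
            ¬ (Algebra.trace F E δ = 0 ∧ Algebra.trace F E (δ ^ 3) = 0) := by
  refine ⟨(finite_solutions F₀).toFinset, fun k₁ k₂ k₃ h₁₂ h₂₃ hk => ?_⟩
  obtain ⟨b, rfl⟩ : ∃ b, k₂ = k₃ + b := ⟨k₂ - k₃, by omega⟩
  obtain ⟨a, rfl⟩ : ∃ a, k₁ = k₃ + a := ⟨k₁ - k₃, by omega⟩
  have hb : 0 < b := by omega
  have hba : b < a := by omega
  have hno : ¬ ∃ t : F₀, 3 ^ a + 3 ^ b * t ^ 3 = (3 ^ a + 3 ^ b * t) ^ 3 := by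
    simpa [hb, hba] using hk
  have hinj : Function.Injective ![k₃ + a, k₃ + b, k₃] := by
    intro i j hij
    fin_cases i <;> fin_cases j <;> simp at hij ⊢ <;> omega
  obtain ⟨F, E, _, _, _, _, hdeg, haniso⟩ :=
    exists_traceAnisotropic_field (by norm_num) hinj (weightAnisotropic_three_pow hb hno)
  exact ⟨F, E, ‹_›, ‹_›, ‹_›, ‹_›, by simpa [Fin.sum_univ_three] using hdeg,
    fun δ hδ h => hδ (haniso δ h.1 h.2)⟩

/-- **Theorem 2 (relative Hermite–Joubert problem).**
Let `F₀` be a finitely generated field of characteristic `0`. There is a finite subset `𝒮`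
of `ℕ × ℕ` depending on `F₀` such that for every `n = 3^k₁ + 3^k₂ + 3^k₃` with
`k₁ > k₂ > k₃ ≥ 0` and `(k₁ - k₃, k₂ - k₃) ∉ 𝒮`, there exist fields `F₀ ⊆ F ⊆ E` with
`[E : F] = n` such that no nonzero `δ ∈ E` satisfies `Tr_{E/F}(δ) = Tr_{E/F}(δ³) = 0`. -/
theorem relative_hermite_fails_three_powers_of_three
    (F₀ : Type) [Field F₀] [CharZero F₀]
    (hfg : ∃ S : Finset F₀, IntermediateField.adjoin ℚ (S : Set F₀) = ⊤) :
    ∃ 𝒮 : Finset (ℕ × ℕ),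
      ∀ k₁ k₂ k₃ : ℕ, k₁ > k₂ → k₂ > k₃ → (k₁ - k₃, k₂ - k₃) ∉ 𝒮 →
        ∃ (F E : Type) (_ : Field F) (_ : Field E) (_ : Algebra F₀ F) (_ : Algebra F E),
          Module.finrank F E = 3 ^ k₁ + 3 ^ k₂ + 3 ^ k₃ ∧
          ∀ δ : E, δ ≠ 0 →
            ¬ (Algebra.trace F E δ = 0 ∧ Algebra.trace F E (δ ^ 3) = 0) := by
  have : Algebra.EssFiniteType ℚ F₀ := IntermediateField.fg_top_iff.1 hfg
  have := RelativeHermite.finiteDimensional_algebraicClosure ℚ F₀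
  exact relative_hermite_fails_three_powers_of_three_general F₀
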